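/- Let n > 1, K ⊆ ℂⁿ compact polynomially convex, L ⊆ ℂᴺ compact polynomially convex, and f holomorphic on a neighbourhood U of L with f(L) ∩ K = ∅. Then there exist an open neighbourhood V ⊆ U of L and a holomorphic map F : V × ℂⁿ → ℂⁿ such that for every z ∈ V: F(z, 0) = f(z), the map ζ ↦ F(z, ζ) is injective, and F({z} × ℂⁿ) ∩ K = ∅. -/

import Mathlib

noncomputable section
open Set Metric MvPolynomial

/-- The polynomially convex hull of a set in `ℂⁿ`. -/
def polyHull {n : ℕ} (K : Set (EuclideanSpace ℂ (Fin n))) : Set (EuclideanSpace ℂ (Fin n)) :=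
  {z | ∀ p : MvPolynomial (Fin n) ℂ,
    ‖eval (fun i => z i) p‖ ≤ sSup ((fun w => ‖eval (fun i => w i) p‖) '' K)}

/-- A compact set in `ℂⁿ` is polynomially convex if it equals its polynomial hull. -/
def IsPolyConvex {n : ℕ} (K : Set (EuclideanSpace ℂ (Fin n))) : Prop :=
  polyHull K = K

/-- Polynomial hull for subsets of a product `ℂᴺ × ℂⁿ ≅ ℂ^{N+n}`, using polynomials in the
`N + n` coordinates. -/
def polyHull2 {N n : ℕ} (S : Set (EuclideanSpace ℂ (Fin N) × EuclideanSpace ℂ (Fin n))) :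
    Set (EuclideanSpace ℂ (Fin N) × EuclideanSpace ℂ (Fin n)) :=
  {z | ∀ p : MvPolynomial (Fin N ⊕ Fin n) ℂ,
    ‖eval (Sum.elim (fun i => z.1 i) (fun j => z.2 j)) p‖ ≤
      sSup ((fun w => ‖eval (Sum.elim (fun i => w.1 i) (fun j => w.2 j)) p‖) '' S)}

def IsPolyConvex2 {N n : ℕ} (S : Set (EuclideanSpace ℂ (Fin N) × EuclideanSpace ℂ (Fin n))) :
    Prop :=
  polyHull2 S = S


/-!
By Oka–Weil, every function holomorphic near a polynomially convex compact set is, on that set, a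
uniform limit of polynomials. On `L × K` the functions `w j - f z j` have no common zero, so they
generate the unit ideal in the Banach algebra of such limits; hence there are polynomials `G j` for
which `h z w = 1 - ∑ j, G j (z, w) * (w j - f z j)` is small on `L × K`, while `h z (f z) = 1`.
After translating by `f`, the function `h` is a polynomial in the fibre variable, equal to `1` at
the origin and small on the translate of `K`.

A power of a linear form times the Euler field `w` is a linear combination of complete fields of
shear and overshear type, and such powers span the polynomials; so `h z w • w` is a linear
combination of complete fields, with coefficients holomorphic in `z`. The flows of these
compose to fibrewise automorphisms whose iterates approximate the time-`log 2` map of the field.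
Sharpening `h` by iterating a cubic with superattracting fixed points `0` and `1` gives
automorphisms `θ k` as close as we like to `w ↦ 2 w` near the origin and to the identity near the
translate of `K`. The maps `θ 0 ∘ ⋯ ∘ θ (j - 1)` precomposed with division by `2 ^ j` converge to an
injective holomorphic map, and its image avoids `K` because the inverses of the `θ k` move a point
near `K` by summably little and so never bring it close to the origin.
-/

section SeveralVariables
open Filter Topology MeasureTheory

variable {E F : Type*} [NormedAddCommGroup E] [NormedSpace ℂ E]
  [NormedAddCommGroup F] [NormedSpace ℂ F]

theorem norm_fderiv_le_of_forall_mem_ball {f : E → F} {x : E} {r M : ℝ} (hr : 0 < r)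
    (hf : DifferentiableOn ℂ f (ball x r)) (hM : ∀ y ∈ ball x r, ‖f y‖ ≤ M) :
    ‖fderiv ℂ f x‖ ≤ 2 * M / r := by
  refine Complex.norm_fderiv_le_div_of_mapsTo_ball hf (fun y hy => ?_) hr
  rw [mem_closedBall, dist_eq_norm]
  calc ‖f y - f x‖ ≤ ‖f y‖ + ‖f x‖ := norm_sub_le _ _
    _ ≤ 2 * M := by linarith [hM y hy, hM x (mem_ball_self hr)]

theorem dist_fderiv_lt_of_forall_dist_lt {f g : E → F} {x : E} {r ε : ℝ} (hr : 0 < r)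
    (hε : 0 < ε) (hf : DifferentiableOn ℂ f (ball x r)) (hg : DifferentiableOn ℂ g (ball x r))
    (h : ∀ y ∈ ball x r, dist (f y) (g y) < ε * r / 4) :
    dist (fderiv ℂ f x) (fderiv ℂ g x) < ε := by
  have hx : ball x r ∈ 𝓝 x := ball_mem_nhds x hr
  rw [dist_eq_norm, ← fderiv_sub (hf.differentiableAt hx) (hg.differentiableAt hx)]
  refine (norm_fderiv_le_of_forall_mem_ball hr (hf.sub hg) (M := ε * r / 4) fun y hy => ?_).trans_lt
    ?_
  · simpa only [Pi.sub_apply, ← dist_eq_norm] using (h y hy).le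
  · rw [div_lt_iff₀ hr]
    nlinarith [mul_pos hε hr]

theorem ball_half_subset_ball {X : Type*} [PseudoMetricSpace X] {x y : X} {r : ℝ}
    (hy : y ∈ ball x (r / 2)) : ball y (r / 2) ⊆ ball x r :=
  ball_subset_ball' (by linarith [mem_ball.1 hy])

theorem differentiableOn_of_tendstoUniformlyOn [CompleteSpace F] {ι : Type*} {l : Filter ι}
    [l.NeBot] {U : Set E} (hU : IsOpen U) {f : ι → E → F} {g : E → F}
    (hf : ∀ n, DifferentiableOn ℂ (f n) U) (h : TendstoUniformlyOn f g l U) :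
    DifferentiableOn ℂ g U := by
  intro x hx
  obtain ⟨r, hr, hrU⟩ := Metric.isOpen_iff.1 hU x hx
  have hsub : ∀ y ∈ ball x (r / 2), ball y (r / 2) ⊆ U := fun y hy =>
    (ball_half_subset_ball hy).trans hrU
  have hmem : ∀ y ∈ ball x (r / 2), y ∈ U := fun y hy => hsub y hy (mem_ball_self (half_pos hr))
  have hC : UniformCauchySeqOn (fun n => fderiv ℂ (f n)) l (ball x (r / 2)) := by
    intro u hu
    obtain ⟨ε, hε, hεu⟩ := mem_uniformity_dist.1 hu
    have hε' : 0 < ε * (r / 2) / 4 := by positivity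
    filter_upwards [h.uniformCauchySeqOn _ (dist_mem_uniformity hε')] with m hm y hy
    exact hεu (dist_fderiv_lt_of_forall_dist_lt (half_pos hr) hε ((hf _).mono (hsub y hy))
      ((hf _).mono (hsub y hy)) fun w hw => hm w (hsub y hy hw))
  choose! g' hg' using fun y (hy : y ∈ ball x (r / 2)) =>
    CompleteSpace.complete (hC.cauchy_map hy)
  exact (hasFDerivAt_of_tendstoUniformlyOn isOpen_ball (hC.tendstoUniformlyOn_of_tendsto hg')
    (fun n y hy => ((hf n).differentiableAt (hU.mem_nhds (hmem y hy))).hasFDerivAt)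
    (fun y hy => h.tendsto_at (hmem y hy))
    (mem_ball_self (half_pos hr))).differentiableAt.differentiableWithinAt

theorem continuousOn_fderiv_of_continuousOn_uncurry [LocallyCompactSpace E] {T : Type*}
    [TopologicalSpace T] {A : Set T} {U : Set E} (hU : IsOpen U) {k : T → E → F}
    (hk : ContinuousOn (Function.uncurry k) (A ×ˢ U)) (hd : ∀ t ∈ A, DifferentiableOn ℂ (k t) U)
    {x : E} (hx : x ∈ U) : ContinuousOn (fun t => fderiv ℂ (k t) x) A := by
  obtain ⟨K, hKx, hKU, hK⟩ := local_compact_nhds (hU.mem_nhds hx)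
  obtain ⟨r, hr, hrK⟩ := Metric.mem_nhds_iff.1 hKx
  intro t₀ ht₀
  rw [ContinuousWithinAt, Metric.tendsto_nhds]
  intro ε hε
  have hε' : 0 < ε * r / 4 := by positivity
  obtain ⟨v, hv, hvε⟩ := hK.mem_uniformity_of_prod (hk.mono (prod_mono_right hKU)) ht₀
    (dist_mem_uniformity hε')
  filter_upwards [self_mem_nhdsWithin, hv] with t ht htv
  exact dist_fderiv_lt_of_forall_dist_lt hr hε ((hd t ht).mono (hrK.trans hKU))
    ((hd t₀ ht₀).mono (hrK.trans hKU)) fun w hw => hvε t htv w (hrK hw)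

theorem differentiableOn_intervalIntegral [FiniteDimensional ℂ E] [CompleteSpace F] {U : Set E}
    (hU : IsOpen U) {a b : ℝ} {k : ℝ → E → F}
    (hk : ContinuousOn (Function.uncurry k) (uIcc a b ×ˢ U))
    (hd : ∀ t ∈ uIcc a b, DifferentiableOn ℂ (k t) U) :
    DifferentiableOn ℂ (fun y => ∫ t in a..b, k t y) U := by
  have : ProperSpace E := FiniteDimensional.proper ℂ E
  intro x hx
  obtain ⟨r, hr, hrU⟩ := Metric.nhds_basis_closedBall.mem_iff.1 (hU.mem_nhds hx)
  obtain ⟨M, hM⟩ := (isCompact_uIcc.prod (isCompact_closedBall x r)).exists_bound_of_continuousOn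
    (hk.mono (prod_mono_right hrU))
  have hsub : ∀ y ∈ ball x (r / 2), ball y (r / 2) ⊆ closedBall x r := fun y hy =>
    (ball_half_subset_ball hy).trans ball_subset_closedBall
  have hcont : ∀ y ∈ U, ContinuousOn (fun t => k t y) (uIcc a b) := fun y hy =>
    hk.comp (f := fun t => (t, y)) (by fun_prop) (fun t ht => ⟨ht, hy⟩)
  have hfc := continuousOn_fderiv_of_continuousOn_uncurry hU hk hd hx
  refine (intervalIntegral.hasFDerivAt_integral_of_dominated_of_fderiv_le
    (F' := fun y t => fderiv ℂ (k t) y) (bound := fun _ => 2 * M / (r / 2))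
    (ball_mem_nhds x (half_pos hr)) ?_ ?_ ?_ ?_ ?_ ?_).differentiableAt.differentiableWithinAt
  · filter_upwards [hU.mem_nhds hx] with y hy
    exact ((hcont y hy).mono uIoc_subset_uIcc).aestronglyMeasurable measurableSet_uIoc
  · exact (hcont x hx).intervalIntegrable
  · exact (hfc.mono uIoc_subset_uIcc).aestronglyMeasurable measurableSet_uIoc
  · refine Eventually.of_forall fun t ht y hy => ?_
    exact norm_fderiv_le_of_forall_mem_ball (half_pos hr)
      ((hd t (uIoc_subset_uIcc ht)).mono ((hsub y hy).trans hrU))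
      (fun w hw => hM (t, w) ⟨uIoc_subset_uIcc ht, hsub y hy hw⟩)
  · exact intervalIntegrable_const
  · refine Eventually.of_forall fun t ht y hy => ?_
    exact ((hd t (uIoc_subset_uIcc ht)).differentiableAt (hU.mem_nhds
      (hrU (hsub y hy (mem_ball_self (half_pos hr)))))).hasFDerivAt

end SeveralVariables

section RectangleCauchy
open Filter Topology intervalIntegral Complex

theorem log_mul_I_sub_log {u : ℂ} (hu : 0 < u.re) : log (u * I) - log u = Real.pi / 2 * I := by
  have hu0 : u ≠ 0 := by rintro rfl; simp at hu
  have h := abs_lt.1 (abs_arg_lt_pi_div_two_iff.2 (Or.inl hu))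
  rw [(log_mul_eq_add_log_iff hu0 I_ne_zero).2 (by
    rw [arg_I]; constructor <;> linarith [h.1, h.2, Real.pi_pos]), log_I]
  ring

/- The rotation `m` moves the segment into the right half-plane, away from the branch cut of the
logarithm. -/
theorem integral_inv_affine {c v m : ℂ} {s t : ℝ} (hm : m ≠ 0)
    (h : ∀ τ ∈ uIcc s t, 0 < ((c + τ * v) * m).re) :
    ∫ τ in s..t, v / (c + τ * v) = log ((c + t * v) * m) - log ((c + s * v) * m) := by
  have hne : ∀ τ ∈ uIcc s t, c + τ * v ≠ 0 := fun τ hτ h0 => by simpa [h0] using h τ hτ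
  refine integral_eq_sub_of_hasDerivAt (f := fun τ : ℝ => log ((c + τ * v) * m)) ?_
    (continuousOn_const.div (by fun_prop) hne).intervalIntegrable
  intro τ hτ
  have hlin : HasDerivAt (fun τ : ℝ => (c + τ * v) * m) (v * m) τ := by
    simpa using ((ofRealCLM.hasDerivAt (x := τ).mul_const v).const_add c).mul_const m
  simpa only [mul_div_mul_right _ _ hm] using hlin.clog_real (Or.inl (h τ hτ))

theorem integral_inv_horizontal {w m : ℂ} {s t : ℝ} (hm : m ≠ 0)
    (h : ∀ τ ∈ uIcc s t, 0 < ((τ + w) * m).re) :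
    ∫ τ in s..t, 1 / ((τ : ℂ) + w) = log ((t + w) * m) - log ((s + w) * m) := by
  simpa only [mul_one, add_comm w] using
    integral_inv_affine (c := w) (v := 1) hm (by simpa only [mul_one, add_comm w] using h)

theorem integral_inv_vertical {w m : ℂ} {s t : ℝ} (hm : m ≠ 0)
    (h : ∀ τ ∈ uIcc s t, 0 < ((w + τ * I) * m).re) :
    I * ∫ τ in s..t, 1 / (w + τ * I) = log ((w + t * I) * m) - log ((w + s * I) * m) := by
  simpa only [← intervalIntegral.integral_const_mul, mul_one_div] using integral_inv_affine hm h

variable {x₀ x₁ y₀ y₁ : ℝ} {z : ℂ}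

theorem integral_boundary_rect_inv_sub (hx₀ : x₀ < z.re) (hx₁ : z.re < x₁) (hy₀ : y₀ < z.im)
    (hy₁ : z.im < y₁) :
    (∫ x in x₀..x₁, 1 / ((x : ℂ) + y₀ * I - z)) - (∫ x in x₀..x₁, 1 / ((x : ℂ) + y₁ * I - z)) +
      I * (∫ y in y₀..y₁, 1 / ((x₁ : ℂ) + y * I - z)) -
      I * (∫ y in y₀..y₁, 1 / ((x₀ : ℂ) + y * I - z)) = 2 * Real.pi * I := by
  have bottom := integral_inv_horizontal (w := y₀ * I - z) (s := x₀) (t := x₁) I_ne_zero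
    fun τ _ => by simpa using hy₀
  have top := integral_inv_horizontal (w := y₁ * I - z) (s := x₀) (t := x₁)
    (neg_ne_zero.2 I_ne_zero) fun τ _ => by simpa using hy₁
  have right := integral_inv_vertical (w := x₁ - z) (s := y₀) (t := y₁) one_ne_zero
    fun τ _ => by simpa using hx₁
  have left := integral_inv_vertical (w := x₀ - z) (s := y₀) (t := y₁)
    (neg_ne_zero.2 one_ne_zero) fun τ _ => by simpa using hx₀
  simp only [← add_sub_assoc, sub_add_eq_add_sub] at bottom top right left
  rw [bottom, top, right, left]
  have corner₁ := log_mul_I_sub_log (u := (x₁ + y₀ * I - z) * 1) (by simpa using hx₁)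
  have corner₂ := log_mul_I_sub_log (u := (x₁ + y₁ * I - z) * -I) (by simpa using hy₁)
  have corner₃ := log_mul_I_sub_log (u := (x₀ + y₁ * I - z) * -1) (by simpa using hx₀)
  have corner₄ := log_mul_I_sub_log (u := (x₀ + y₀ * I - z) * I) (by simpa using hy₀)
  simp only [mul_assoc, one_mul, neg_mul, I_mul_I, neg_neg] at corner₁ corner₂ corner₃ corner₄
  linear_combination corner₁ + corner₂ + corner₃ + corner₄

theorem integral_dslope_comp_eq_sub {g : ℂ → ℂ} {γ : ℝ → ℂ} {s t : ℝ} {S : Set ℂ}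
    (hg : ContinuousOn g S) (hγ : Continuous γ) (h : ∀ τ ∈ uIcc s t, γ τ ∈ S ∧ γ τ ≠ z) :
    ∫ τ in s..t, dslope g z (γ τ) =
      (∫ τ in s..t, g (γ τ) / (γ τ - z)) - g z * ∫ τ in s..t, 1 / (γ τ - z) := by
  have hne : ∀ τ ∈ uIcc s t, γ τ - z ≠ 0 := fun τ hτ => sub_ne_zero.2 (h τ hτ).2
  have hinv : ContinuousOn (fun τ => 1 / (γ τ - z)) (uIcc s t) :=
    continuousOn_const.div (by fun_prop) hne
  have hquot : ContinuousOn (fun τ => g (γ τ) / (γ τ - z)) (uIcc s t) :=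
    (hg.comp hγ.continuousOn fun τ hτ => (h τ hτ).1).div (by fun_prop) hne
  rw [← intervalIntegral.integral_const_mul, ← intervalIntegral.integral_sub
    hquot.intervalIntegrable (hinv.intervalIntegrable.const_mul _)]
  refine integral_congr fun τ hτ => ?_
  simp only [dslope_of_ne _ (h τ hτ).2, slope_def_field]
  rw [sub_div, mul_one_div]

theorem integral_boundary_rect_div_sub {g : ℂ → ℂ} (hx₀ : x₀ < z.re) (hx₁ : z.re < x₁)
    (hy₀ : y₀ < z.im) (hy₁ : z.im < y₁) (hg : DifferentiableOn ℂ g ((uIcc x₀ x₁) ×ℂ (uIcc y₀ y₁))) :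
    (∫ x in x₀..x₁, g (x + y₀ * I) / ((x : ℂ) + y₀ * I - z)) -
      (∫ x in x₀..x₁, g (x + y₁ * I) / ((x : ℂ) + y₁ * I - z)) +
      I * (∫ y in y₀..y₁, g (x₁ + y * I) / ((x₁ : ℂ) + y * I - z)) -
      I * (∫ y in y₀..y₁, g (x₀ + y * I) / ((x₀ : ℂ) + y * I - z)) = 2 * Real.pi * I * g z := by
  have hnhds : (uIcc x₀ x₁) ×ℂ (uIcc y₀ y₁) ∈ 𝓝 z := by
    rw [uIcc_of_le (hx₀.trans hx₁).le, uIcc_of_le (hy₀.trans hy₁).le]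
    exact inter_mem (continuous_re.continuousAt.preimage_mem_nhds (Icc_mem_nhds hx₀ hx₁))
      (continuous_im.continuousAt.preimage_mem_nhds (Icc_mem_nhds hy₀ hy₁))
  have cauchy := integral_boundary_rect_eq_zero_of_differentiableOn (dslope g z)
    (x₀ + y₀ * I) (x₁ + y₁ * I) (by simpa using (differentiableOn_dslope hnhds).2 hg)
  have hne : ∀ x y : ℝ, x ≠ z.re ∨ y ≠ z.im → (x + y * I : ℂ) ≠ z := by
    rintro x y h rfl
    simp at h
  have bottom := integral_dslope_comp_eq_sub (γ := fun x => x + y₀ * I) (s := x₀) (t := x₁)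
    hg.continuousOn (by fun_prop) fun τ hτ =>
      ⟨⟨by simpa using hτ, by simp⟩, hne _ _ (Or.inr hy₀.ne)⟩
  have top := integral_dslope_comp_eq_sub (γ := fun x => x + y₁ * I) (s := x₀) (t := x₁)
    hg.continuousOn (by fun_prop) fun τ hτ =>
      ⟨⟨by simpa using hτ, by simp⟩, hne _ _ (Or.inr hy₁.ne')⟩
  have right := integral_dslope_comp_eq_sub (γ := fun y => x₁ + y * I) (s := y₀) (t := y₁)
    hg.continuousOn (by fun_prop) fun τ hτ =>
      ⟨⟨by simp, by simpa using hτ⟩, hne _ _ (Or.inl hx₁.ne')⟩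
  have left := integral_dslope_comp_eq_sub (γ := fun y => x₀ + y * I) (s := y₀) (t := y₁)
    hg.continuousOn (by fun_prop) fun τ hτ =>
      ⟨⟨by simp, by simpa using hτ⟩, hne _ _ (Or.inl hx₀.ne)⟩
  simp only [add_re, ofReal_re, mul_re, I_re, mul_zero, ofReal_im, I_im, mul_one, sub_self,
    add_zero, add_im, mul_im, zero_add, smul_eq_mul, bottom, top, right, left] at cauchy
  linear_combination cauchy + g z * integral_boundary_rect_inv_sub hx₀ hx₁ hy₀ hy₁

end RectangleCauchy

section HolomorphicNear
open Filter Topology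

variable {E E' : Type*} [NormedAddCommGroup E] [NormedSpace ℂ E] [NormedAddCommGroup E']
  [NormedSpace ℂ E'] {f g : E → ℂ} {s t : Set E}

/-- `f` is holomorphic on some neighbourhood of `s`. For lack of Osgood's lemma in several variables
this is phrased with complex differentiability rather than with `AnalyticOnNhd`. -/
def HolomorphicNear (f : E → ℂ) (s : Set E) : Prop :=
  ∀ x ∈ s, ∀ᶠ y in 𝓝 x, DifferentiableAt ℂ f y

namespace HolomorphicNear

theorem mono (hf : HolomorphicNear f t) (h : s ⊆ t) : HolomorphicNear f s :=
  fun x hx => hf x (h hx)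

theorem of_differentiable (hf : Differentiable ℂ f) : HolomorphicNear f s :=
  fun _ _ => Eventually.of_forall hf

theorem add (hf : HolomorphicNear f s) (hg : HolomorphicNear g s) :
    HolomorphicNear (fun x => f x + g x) s :=
  fun x hx => by filter_upwards [hf x hx, hg x hx] with y hfy hgy using hfy.add hgy

theorem sub (hf : HolomorphicNear f s) (hg : HolomorphicNear g s) :
    HolomorphicNear (fun x => f x - g x) s :=
  fun x hx => by filter_upwards [hf x hx, hg x hx] with y hfy hgy using hfy.sub hgy

theorem mul (hf : HolomorphicNear f s) (hg : HolomorphicNear g s) :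
    HolomorphicNear (fun x => f x * g x) s :=
  fun x hx => by filter_upwards [hf x hx, hg x hx] with y hfy hgy using hfy.mul hgy

theorem div (hf : HolomorphicNear f s) (hg : HolomorphicNear g s) (h : ∀ x ∈ s, g x ≠ 0) :
    HolomorphicNear (fun x => f x / g x) s := fun x hx => by
  filter_upwards [hf x hx, hg x hx, (hg x hx).self_of_nhds.continuousAt.eventually_ne (h x hx)]
    with y hfy hgy hy
  simp only [div_eq_mul_inv]
  exact hfy.mul (DifferentiableAt.fun_inv hgy hy)

theorem const_mul (hf : HolomorphicNear f s) (c : ℂ) : HolomorphicNear (fun x => c * f x) s :=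
  (of_differentiable (differentiable_const c)).mul hf

theorem comp (hf : HolomorphicNear f s) {φ : E' → E} (hφ : Differentiable ℂ φ) {s' : Set E'}
    (h : MapsTo φ s' s) : HolomorphicNear (fun x => f (φ x)) s' := fun x hx => by
  filter_upwards [hφ.continuous.continuousAt.eventually (hf (φ x) (h hx))] with y hy
  exact hy.comp y (hφ y)

theorem congr (hf : HolomorphicNear f s) (h : ∀ x ∈ s, g =ᶠ[𝓝 x] f) : HolomorphicNear g s :=
  fun x hx => by
    filter_upwards [hf x hx, (h x hx).eventually_nhds] with y hy hgf
    exact hy.congr_of_eventuallyEq hgf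

theorem continuousOn (hf : HolomorphicNear f s) : ContinuousOn f s := fun x hx =>
  (hf x hx).self_of_nhds.continuousAt.continuousWithinAt

theorem isOpen_setOf (f : E → ℂ) : IsOpen {x | ∀ᶠ y in 𝓝 x, DifferentiableAt ℂ f y} :=
  isOpen_setOfPred_eventually_nhds

end HolomorphicNear

end HolomorphicNear

section Boxes

theorem exists_Icc_sub_add_subset {κ : Type*} [Finite κ] {a b : κ → ℝ} {W : Set (κ → ℝ)}
    (hW : IsOpen W) (h : Icc a b ⊆ W) (hab : a ≤ b) :
    ∃ η > 0, Icc (fun k => a k - η) (fun k => b k + η) ⊆ W := by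
  cases nonempty_fintype κ
  obtain ⟨δ, hδ, hδW⟩ := isCompact_Icc.exists_thickening_subset_open hW h
  refine ⟨δ / 2, half_pos hδ, fun x hx => hδW (mem_thickening_iff.2 ⟨a ⊔ x ⊓ b, ⟨le_sup_left,
    sup_le hab inf_le_right⟩, (dist_pi_lt_iff hδ).2 fun k => ?_⟩)⟩
  have hlo : a k - δ / 2 ≤ x k := hx.1 k
  have hhi : x k ≤ b k + δ / 2 := hx.2 k
  have hk : a k ≤ b k := hab k
  simp only [Pi.sup_apply, Pi.inf_apply, Real.dist_eq, abs_lt]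
  constructor <;> cases max_cases (a k) (min (x k) (b k)) <;> cases min_cases (x k) (b k) <;>
    linarith

variable {ι : Type*}

/-- The real coordinates on `ℂ^ι`: `(i, false)` is the real part and `(i, true)` the imaginary part
of the `i`-th complex coordinate. -/
def realCoords : (ι → ℂ) ≃ₜ (ι × Bool → ℝ) where
  toFun z k := bif k.2 then (z k.1).im else (z k.1).re
  invFun x i := ⟨x (i, false), x (i, true)⟩
  left_inv _ := rfl
  right_inv x := by ext ⟨i, _ | _⟩ <;> rfl
  continuous_toFun := continuous_pi fun
    | (i, false) => Complex.continuous_re.comp (continuous_apply i)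
    | (i, true) => Complex.continuous_im.comp (continuous_apply i)
  continuous_invFun := continuous_pi fun i => Complex.equivRealProdCLM.symm.continuous.comp
    (f := fun x : ι × Bool → ℝ => (x (i, false), x (i, true))) (by fun_prop)

@[simp]
theorem realCoords_false (z : ι → ℂ) (i : ι) : realCoords z (i, false) = (z i).re := rfl

@[simp]
theorem realCoords_true (z : ι → ℂ) (i : ι) : realCoords z (i, true) = (z i).im := rfl

theorem continuous_realCoords_apply (k : ι × Bool) : Continuous fun z => realCoords z k :=
  (continuous_apply k).comp realCoords.continuous

/-- The closed box in `ℂ^ι` with lower real coordinates `a` and upper real coordinates `b`. -/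
def complexBox (a b : ι × Bool → ℝ) : Set (ι → ℂ) := realCoords ⁻¹' Icc a b

theorem mem_complexBox {a b : ι × Bool → ℝ} {z : ι → ℂ} :
    z ∈ complexBox a b ↔ ∀ k, realCoords z k ∈ Icc (a k) (b k) := by
  simp only [complexBox, mem_preimage, mem_Icc, Pi.le_def, ← forall_and]

theorem isCompact_complexBox (a b : ι × Bool → ℝ) : IsCompact (complexBox a b) :=
  realCoords.isCompact_preimage.2 isCompact_Icc

theorem exists_complexBox_sub_add_subset [Finite ι] {a b : ι × Bool → ℝ} {W : Set (ι → ℂ)}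
    (hW : IsOpen W) (h : complexBox a b ⊆ W) (hab : a ≤ b) :
    ∃ η > 0, complexBox (fun k => a k - η) (fun k => b k + η) ⊆ W := by
  obtain ⟨η, hη, hηW⟩ := exists_Icc_sub_add_subset (hW.preimage realCoords.symm.continuous)
    (fun x hx => h (by simpa [complexBox] using hx)) hab
  exact ⟨η, hη, fun z hz => by simpa using hηW hz⟩

variable {a b : ι × Bool → ℝ} {k : ι × Bool} {c : ℝ}

/-- The points of `ℂ^ι` all of whose coordinates other than the `i`-th lie in a closed box. -/
def boxCylinder (i : ι) (a b : ι × Bool → ℝ) : Set (ι → ℂ) :=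
  {z | ∀ k : ι × Bool, k.1 ≠ i → realCoords z k ∈ Icc (a k) (b k)}

theorem complexBox_subset_boxCylinder (i : ι) (a b : ι × Bool → ℝ) :
    complexBox a b ⊆ boxCylinder i a b :=
  fun _ hz k _ => ⟨hz.1 k, hz.2 k⟩

theorem boxCylinder_subset_boxCylinder {a' b' : ι × Bool → ℝ} {i : ι}
    (ha : ∀ k : ι × Bool, k.1 ≠ i → a' k ≤ a k) (hb : ∀ k : ι × Bool, k.1 ≠ i → b k ≤ b' k) :
    boxCylinder i a b ⊆ boxCylinder i a' b' :=
  fun _ hz k hk => Icc_subset_Icc (ha k hk) (hb k hk) (hz k hk)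

variable [DecidableEq ι]

theorem complexBox_inter_le (h : c ≤ b k) :
    complexBox a b ∩ {z | realCoords z k ≤ c} = complexBox a (Function.update b k c) := by
  ext z
  simp only [complexBox, mem_inter_iff, mem_preimage, mem_Icc, mem_ofPred_eq, le_update_iff]
  refine ⟨fun hz => ⟨hz.1.1, hz.2, fun l _ => hz.1.2 l⟩, fun hz => ⟨⟨hz.1, fun l => ?_⟩, hz.2.1⟩⟩
  obtain rfl | hl := eq_or_ne l k
  exacts [hz.2.1.trans h, hz.2.2 l hl]

theorem complexBox_inter_ge (h : a k ≤ c) :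
    complexBox a b ∩ {z | c ≤ realCoords z k} = complexBox (Function.update a k c) b := by
  ext z
  simp only [complexBox, mem_inter_iff, mem_preimage, mem_Icc, mem_ofPred_eq, update_le_iff]
  refine ⟨fun hz => ⟨⟨hz.2, fun l _ => hz.1.1 l⟩, hz.1.2⟩, fun hz => ⟨⟨fun l => ?_, hz.2⟩, hz.1.1⟩⟩
  obtain rfl | hl := eq_or_ne l k
  exacts [h.trans hz.1.1, hz.1.2 l hl]

theorem complexBox_inter_eq (h : a k ≤ c) (h' : c ≤ b k) :
    complexBox a b ∩ {z | realCoords z k = c} =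
      complexBox (Function.update a k c) (Function.update b k c) := by
  rw [← complexBox_inter_ge (by simpa using h), ← complexBox_inter_le h', inter_assoc]
  congr 1
  ext z
  exact le_antisymm_iff

theorem realCoords_update_of_ne {i : ι} (h : k.1 ≠ i) (z : ι → ℂ) (ζ : ℂ) :
    realCoords (Function.update z i ζ) k = realCoords z k := by
  obtain ⟨j, _ | _⟩ := k <;> simp [Function.update_of_ne h]

theorem update_mem_complexBox {i : ι} {z : ι → ℂ} (hz : z ∈ boxCylinder i a b) {ζ : ℂ}
    (hζ : ζ ∈ Icc (a (i, false)) (b (i, false)) ×ℂ Icc (a (i, true)) (b (i, true))) :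
    Function.update z i ζ ∈ complexBox a b := by
  have hk : ∀ k, realCoords (Function.update z i ζ) k ∈ Icc (a k) (b k) := fun k => by
    by_cases h : k.1 = i
    · obtain ⟨j, _ | _⟩ := k <;> obtain rfl : j = i := h
      exacts [by simpa using hζ.1, by simpa using hζ.2]
    · rw [realCoords_update_of_ne h]
      exact hz k h
  exact ⟨fun k => (hk k).1, fun k => (hk k).2⟩

end Boxes

section EdgeIntegrals
open Filter Topology MeasureTheory

variable {ι : Type*} {i : ι}

/-- The line in `ℂ` on which the real coordinate number `q` (`false` for the real part, `true` for
the imaginary part) equals `t`, parametrized by the other real coordinate. -/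
def axisLine (q : Bool) (t τ : ℝ) : ℂ := bif q then τ + t * Complex.I else t + τ * Complex.I

theorem contDiff_axisLine (q : Bool) (t : ℝ) : ContDiff ℝ 1 (axisLine q t) := by
  cases q
  exacts [contDiff_const.add (Complex.ofRealCLM.contDiff.mul contDiff_const),
    Complex.ofRealCLM.contDiff.add contDiff_const]

theorem deriv_axisLine (q : Bool) (t τ : ℝ) :
    deriv (axisLine q t) τ = bif q then 1 else Complex.I := by
  cases q
  exacts [(by simpa using ((Complex.ofRealCLM.hasDerivAt (x := τ)).mul_const
    Complex.I).const_add (t : ℂ) : HasDerivAt (fun τ : ℝ => t + τ * Complex.I) _ τ).deriv,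
    ((Complex.ofRealCLM.hasDerivAt (x := τ)).add_const _).deriv]

theorem axisLine_ne {q : Bool} {t : ℝ} {z : ι → ℂ} (h : realCoords z (i, q) ≠ t) (τ : ℝ) :
    axisLine q t τ ≠ z i := by
  cases q <;> intro he <;> simp [← he, axisLine] at h

theorem axisLine_mem_reProdIm {a b : ι × Bool → ℝ} {q : Bool} {t τ : ℝ}
    (ht : t ∈ Icc (a (i, q)) (b (i, q))) (hτ : τ ∈ Icc (a (i, !q)) (b (i, !q))) :
    axisLine q t τ ∈
      Icc (a (i, false)) (b (i, false)) ×ℂ Icc (a (i, true)) (b (i, true)) := by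
  cases q
  exacts [⟨by simpa [axisLine] using ht, by simpa [axisLine] using hτ⟩,
    ⟨by simpa [axisLine] using hτ, by simpa [axisLine] using ht⟩]

variable [DecidableEq ι]

theorem differentiable_update_left [Finite ι] (i : ι) (c : ℂ) :
    Differentiable ℂ fun y : ι → ℂ => Function.update y i c := by
  cases nonempty_fintype ι
  refine differentiable_pi.2 fun j => ?_
  obtain rfl | h := eq_or_ne j i
  · simp
  · simpa [Function.update_of_ne h] using differentiable_apply j

theorem differentiable_update_right (i : ι) (y : ι → ℂ) :
    Differentiable ℂ fun c : ℂ => Function.update y i c := fun c =>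
  (hasFDerivAt_update y c).differentiableAt

variable {g : (ι → ℂ) → ℂ}

/-- The Cauchy integral `∫ g (y₁, …, ζ, …, yₙ) / (ζ - yᵢ) dζ` in the `i`-th coordinate over the path
`γ` on `[s, t]`. -/
def pathCauchy (g : (ι → ℂ) → ℂ) (i : ι) (γ : ℝ → ℂ) (s t : ℝ) (y : ι → ℂ) : ℂ :=
  ∫ τ in s..t, deriv γ τ * (g (Function.update y i (γ τ)) / (γ τ - y i))

variable [Fintype ι]

theorem holomorphicNear_pathCauchy {γ : ℝ → ℂ} (hγ : ContDiff ℝ 1 γ) {s t : ℝ} {S : Set (ι → ℂ)}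
    (hne : ∀ x ∈ S, ∀ τ ∈ uIcc s t, γ τ ≠ x i)
    (hg : ∀ x ∈ S, ∀ τ ∈ uIcc s t,
      ∀ᶠ y in 𝓝 (Function.update x i (γ τ)), DifferentiableAt ℂ g y) :
    HolomorphicNear (pathCauchy g i γ s t) S := by
  have hjoint : Continuous fun p : (ι → ℂ) × ℝ => Function.update p.1 i (γ p.2) :=
    continuous_fst.update i (hγ.continuous.comp continuous_snd)
  have hγ₀ := hγ.continuous
  have hγ' : Continuous (deriv γ) := hγ.continuous_deriv le_rfl
  set W := {x | ∀ᶠ y in 𝓝 x, DifferentiableAt ℂ g y}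
  set O := {p : (ι → ℂ) × ℝ | γ p.2 ≠ p.1 i ∧ Function.update p.1 i (γ p.2) ∈ W}
  have hO : IsOpen O := (isOpen_ne_fun (by fun_prop) (by fun_prop)).inter
    ((HolomorphicNear.isOpen_setOf g).preimage hjoint)
  set U := {y : ι → ℂ | ∀ τ ∈ uIcc s t, (y, τ) ∈ O}
  have hU : IsOpen U := isOpen_iff_eventually.2 fun y hy =>
    isCompact_uIcc.eventually_forall_of_forall_eventually fun τ hτ => hO.mem_nhds (hy τ hτ)
  have hdiff : DifferentiableOn ℂ (pathCauchy g i γ s t) U := by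
    refine differentiableOn_intervalIntegral hU ?_ fun τ hτ y hy => ?_
    · rintro ⟨τ, y⟩ ⟨hτ, hy⟩
      obtain ⟨hne, hW⟩ := hy τ hτ
      have hnum : ContinuousAt (fun p : ℝ × (ι → ℂ) => g (Function.update p.2 i (γ p.1))) (τ, y) :=
        ContinuousAt.comp (f := fun p : ℝ × (ι → ℂ) => Function.update p.2 i (γ p.1))
          hW.self_of_nhds.continuousAt (hjoint.comp continuous_swap).continuousAt
      exact ((hγ'.comp continuous_fst).continuousAt.mul
        (hnum.div (by fun_prop) (sub_ne_zero.2 hne))).continuousWithinAt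
    · obtain ⟨hne, hW⟩ := hy τ hτ
      have hnum : DifferentiableAt ℂ (fun y => g (Function.update y i (γ τ))) y :=
        hW.self_of_nhds.comp y (differentiable_update_left i (γ τ) y)
      simp only [div_eq_mul_inv]
      exact ((hnum.mul (DifferentiableAt.fun_inv (by fun_prop)
        (sub_ne_zero.2 hne))).const_mul _).differentiableWithinAt
  intro x hx
  filter_upwards [hU.mem_nhds fun τ hτ => ⟨hne x hx τ hτ, hg x hx τ hτ⟩] with y hy
  exact hdiff.differentiableAt (hU.mem_nhds hy)

variable {a b : ι × Bool → ℝ}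

/-- The contribution to Cauchy's integral formula of the line `axisLine q t`, oriented as the lower
edge of a rectangle. -/
def edgeCauchy (g : (ι → ℂ) → ℂ) (a b : ι × Bool → ℝ) (k : ι × Bool) (t : ℝ) (y : ι → ℂ) : ℂ :=
  (bif k.2 then 1 else -1) * (2 * Real.pi * Complex.I)⁻¹ *
    pathCauchy g k.1 (axisLine k.2 t) (a (k.1, !k.2)) (b (k.1, !k.2)) y

theorem holomorphicNear_edgeCauchy {k : ι × Bool} (hab : a ≤ b)
    (hg : HolomorphicNear g (complexBox a b)) {a' b' : ι × Bool → ℝ}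
    (ha : ∀ l : ι × Bool, l.1 ≠ k.1 → a l ≤ a' l) (hb : ∀ l : ι × Bool, l.1 ≠ k.1 → b' l ≤ b l)
    {t : ℝ} (ht : t ∈ Icc (a k) (b k)) :
    HolomorphicNear (edgeCauchy g a b k t)
      (boxCylinder k.1 a' b' ∩ {z | realCoords z k ≠ t}) := by
  refine (holomorphicNear_pathCauchy (contDiff_axisLine _ _)
    (fun z hz τ _ => axisLine_ne hz.2 τ) fun z hz τ hτ => ?_).const_mul _
  rw [uIcc_of_le (hab _)] at hτ
  exact hg _ (update_mem_complexBox (boxCylinder_subset_boxCylinder ha hb hz.1)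
    (axisLine_mem_reProdIm ht hτ))

theorem edgeCauchy_sub_add_edgeCauchy_sub (hg : HolomorphicNear g (complexBox a b)) {z : ι → ℂ}
    (hz : z ∈ boxCylinder i a b) (hzi : ∀ q, realCoords z (i, q) ∈ Ioo (a (i, q)) (b (i, q)))
    (q : Bool) :
    edgeCauchy g a b (i, q) (a (i, q)) z - edgeCauchy g a b (i, q) (b (i, q)) z +
      (edgeCauchy g a b (i, !q) (a (i, !q)) z - edgeCauchy g a b (i, !q) (b (i, !q)) z) = g z := by
  obtain ⟨hre, him⟩ := And.intro (hzi false) (hzi true)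
  have cauchy := integral_boundary_rect_div_sub (g := fun ζ => g (Function.update z i ζ))
    hre.1 hre.2 him.1 him.2 fun ζ hζ => by
      rw [uIcc_of_le (hre.1.trans hre.2).le, uIcc_of_le (him.1.trans him.2).le] at hζ
      exact ((hg _ (update_mem_complexBox hz hζ)).self_of_nhds.comp ζ
        (differentiable_update_right i z ζ)).differentiableWithinAt
  simp only [Function.update_eq_self] at cauchy
  rw [eq_comm, ← eq_inv_mul_iff_mul_eq₀ Complex.two_pi_I_ne_zero] at cauchy
  rw [cauchy]
  cases q <;> simp only [edgeCauchy, pathCauchy, deriv_axisLine, Bool.not_true, Bool.not_false,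
    cond_true, cond_false, intervalIntegral.integral_const_mul, one_mul] <;>
    simp only [axisLine, cond_true, cond_false] <;> ring

end EdgeIntegrals

section CousinSplitting
open Filter Topology

variable {ι : Type*} [Fintype ι]

/- Cauchy's formula on the larger box, applied in the cut coordinate, writes `g` as a sum of four
edge integrals. Three of them are holomorphic near one side of the cut, the fourth near the other
side. -/
theorem exists_cousin_split_of_complexBox {A B a b : ι × Bool → ℝ} {k : ι × Bool} {c : ℝ}
    {g : (ι → ℂ) → ℂ} (hAB : A ≤ B) (hg : HolomorphicNear g (complexBox A B))
    (ha : ∀ l ≠ k, A l < a l) (hb : ∀ l ≠ k, b l < B l) (hc : c ∈ Ioo (A k) (B k)) :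
    ∃ g₁ g₂ : (ι → ℂ) → ℂ, HolomorphicNear g₁ (complexBox a b ∩ {z | realCoords z k ≤ c}) ∧
      HolomorphicNear g₂ (complexBox a b ∩ {z | c ≤ realCoords z k}) ∧
      ∀ x ∈ complexBox a b ∩ {z | realCoords z k = c}, ∀ᶠ y in 𝓝 x, g y = g₁ y - g₂ y := by
  classical
  set k' : ι × Bool := (k.1, !k.2)
  have hk' : k' ≠ k := fun h => by simpa [k'] using congrArg Prod.snd h
  have hne : ∀ {l : ι × Bool}, l.1 ≠ k.1 → l ≠ k := fun h h' => h (congrArg Prod.fst h')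
  have hedge : ∀ (l : ι × Bool) (t : ℝ), l.1 = k.1 → t ∈ Icc (A l) (B l) →
      HolomorphicNear (edgeCauchy g A B l t) (boxCylinder k.1 a b ∩ {z | realCoords z l ≠ t}) :=
    fun l t hl ht => hl ▸ holomorphicNear_edgeCauchy hAB hg
      (fun m hm => (ha m (hne (hl ▸ hm))).le) (fun m hm => (hb m (hne (hl ▸ hm))).le) ht
  have hcyl := complexBox_subset_boxCylinder k.1 a b
  refine ⟨fun y => edgeCauchy g A B k' (A k') y - edgeCauchy g A B k' (B k') y -
    edgeCauchy g A B k (B k) y, fun y => -1 * edgeCauchy g A B k (A k) y,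
    ((HolomorphicNear.mono (hedge k' _ rfl ⟨le_rfl, hAB _⟩) ?_).sub
    (HolomorphicNear.mono (hedge k' _ rfl ⟨hAB _, le_rfl⟩) ?_)).sub
    (HolomorphicNear.mono (hedge k _ rfl ⟨hAB _, le_rfl⟩) ?_),
    HolomorphicNear.const_mul (HolomorphicNear.mono (hedge k _ rfl ⟨le_rfl, hAB _⟩) ?_) _,
    fun x hx => ?_⟩
  · exact fun z hz => ⟨hcyl hz.1, ((ha _ hk').trans_le (hz.1.1 _)).ne'⟩
  · exact fun z hz => ⟨hcyl hz.1, ((hz.1.2 _).trans_lt (hb _ hk')).ne⟩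
  · exact fun z hz => ⟨hcyl hz.1, (hz.2.trans_lt hc.2).ne⟩
  · exact fun z hz => ⟨hcyl hz.1, (hc.1.trans_le hz.2).ne'⟩
  · have hAB : ∀ᶠ y in 𝓝 x, ∀ l, realCoords y l ∈ Ioo (A l) (B l) := eventually_all.2 fun l => by
      refine (continuous_realCoords_apply l).continuousAt.eventually (Ioo_mem_nhds ?_ ?_)
      all_goals obtain rfl | hl := eq_or_ne l k
      exacts [hc.1.trans_eq hx.2.symm, (ha l hl).trans_le (hx.1.1 l), hx.2.trans_lt hc.2,
        (hx.1.2 l).trans_lt (hb l hl)]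
    filter_upwards [hAB] with y hy
    have cauchy := edgeCauchy_sub_add_edgeCauchy_sub hg (i := k.1)
      (fun l _ => Ioo_subset_Icc_self (hy l)) (fun q => hy _) k.2
    linear_combination -cauchy

theorem exists_cousin_split_complexBox {a b : ι × Bool → ℝ} {k : ι × Bool} {c : ℝ} (hac : a k ≤ c)
    (hcb : c ≤ b k) {g : (ι → ℂ) → ℂ}
    (hg : HolomorphicNear g (complexBox a b ∩ {z | realCoords z k = c})) :
    ∃ g₁ g₂ : (ι → ℂ) → ℂ, HolomorphicNear g₁ (complexBox a b ∩ {z | realCoords z k ≤ c}) ∧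
      HolomorphicNear g₂ (complexBox a b ∩ {z | c ≤ realCoords z k}) ∧
      ∀ x ∈ complexBox a b ∩ {z | realCoords z k = c}, ∀ᶠ y in 𝓝 x, g y = g₁ y - g₂ y := by
  classical
  rcases (complexBox a b).eq_empty_or_nonempty with hempty | ⟨z₀, hz₀⟩
  · exact ⟨0, 0, by simp [hempty, HolomorphicNear], by simp [hempty, HolomorphicNear],
      by simp [hempty]⟩
  have hab : Function.update a k c ≤ Function.update b k c :=
    update_le_update_iff.2 ⟨le_rfl, fun l _ => (hz₀.1 l).trans (hz₀.2 l)⟩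
  rw [complexBox_inter_eq hac hcb] at hg
  obtain ⟨η, hη, hgη⟩ := exists_complexBox_sub_add_subset (HolomorphicNear.isOpen_setOf g) hg hab
  refine exists_cousin_split_of_complexBox (fun l => by linarith [hab l]) hgη ?_ ?_ ?_
  · exact fun l hl => by simpa [Function.update_of_ne hl] using hη
  · exact fun l hl => by simpa [Function.update_of_ne hl] using hη
  · simpa using hη

end CousinSplitting

section Division
open Filter Topology

variable {ι : Type*} [DecidableEq ι] {u : (ι → ℂ) → ℂ} {i : ι} {ψ : (ι → ℂ) → ℂ}
  {y : ι → ℂ}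

/-- The quotient of `u` by `y i - ψ y`, with the removable singularity on the graph `y i = ψ y`
filled in by the derivative of `u` in the `i`-th coordinate. -/
def graphQuotient (u : (ι → ℂ) → ℂ) (i : ι) (ψ : (ι → ℂ) → ℂ) (y : ι → ℂ) : ℂ :=
  if y i = ψ y then deriv (fun ζ => u (Function.update y i ζ)) (y i) else u y / (y i - ψ y)

theorem eq_mul_graphQuotient (h : y i = ψ y → u y = 0) :
    u y = (y i - ψ y) * graphQuotient u i ψ y := by
  by_cases hy : y i = ψ y
  · rw [h hy, sub_eq_zero.2 hy, zero_mul]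
  · rw [graphQuotient, if_neg hy, mul_div_cancel₀ _ (sub_ne_zero.2 hy)]

theorem graphQuotient_eq_dslope (h : u (Function.update y i (ψ y)) = 0) :
    graphQuotient u i ψ y = dslope (fun ζ => u (Function.update y i ζ)) (ψ y) (y i) := by
  by_cases hy : y i = ψ y
  · rw [graphQuotient, if_pos hy, hy, dslope_same]
  · rw [graphQuotient, if_neg hy, dslope_of_ne _ hy, slope_def_field, Function.update_eq_self, h,
      sub_zero]

theorem graphQuotient_eq_pathCauchy (hψ : ∀ y c, ψ (Function.update y i c) = ψ y) {c : ℂ} {r : ℝ}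
    (hu : DifferentiableOn ℂ (fun ζ => u (Function.update y i ζ)) (closedBall c r))
    (h0 : u (Function.update y i (ψ y)) = 0) (hy : y i ∈ ball c r) (hψy : ψ y ∈ ball c r) :
    graphQuotient u i ψ y = (2 * Real.pi * Complex.I)⁻¹ *
      pathCauchy (fun y => u y / (y i - ψ y)) i (circleMap c r) 0 (2 * Real.pi) y := by
  have hslope := (Complex.differentiableOn_dslope
    (mem_of_superset (isOpen_ball.mem_nhds hψy) ball_subset_closedBall)).2 hu
  rw [graphQuotient_eq_dslope h0, eq_inv_mul_iff_mul_eq₀ Complex.two_pi_I_ne_zero,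
    ← smul_eq_mul (2 * _ * _), ← hslope.circleIntegral_sub_inv_smul hy, circleIntegral]
  refine intervalIntegral.integral_congr fun θ _ => ?_
  have hne : circleMap c r θ ≠ ψ y := fun h =>
    (mem_ball.1 hψy).ne (h ▸ circleMap_mem_sphere c (dist_nonneg.trans_lt hy).le θ)
  simp only [smul_eq_mul, Function.update_self, hψ, dslope_of_ne _ hne, slope_def_field, h0,
    sub_zero, div_eq_inv_mul]

theorem eventually_eq_mul_graphQuotient {S : Set (ι → ℂ)} (hψ : Continuous ψ)
    (h0 : ∀ x ∈ S, x i = ψ x → ∀ᶠ y in 𝓝 x, y i = ψ y → u y = 0) :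
    ∀ x ∈ S, ∀ᶠ y in 𝓝 x, u y = (y i - ψ y) * graphQuotient u i ψ y := by
  intro x hxS
  by_cases hx : x i = ψ x
  · filter_upwards [h0 x hxS hx] with y hy using eq_mul_graphQuotient hy
  · filter_upwards [(isOpen_ne_fun (continuous_apply i) hψ).mem_nhds hx] with y hy
    exact eq_mul_graphQuotient fun h => absurd h hy

variable [Fintype ι]

theorem dist_update_lt {x : ι → ℂ} {δ : ℝ} (hy : dist y x < δ) {ζ : ℂ} (hζ : dist ζ (x i) < δ) :
    dist (Function.update y i ζ) x < δ := by
  refine (dist_pi_lt_iff (dist_nonneg.trans_lt hy)).2 fun j => ?_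
  obtain rfl | h := eq_or_ne j i
  · simpa using hζ
  · simpa [h] using (dist_le_pi_dist y x j).trans_lt hy

theorem HolomorphicNear.graphQuotient_singleton {x : ι → ℂ} (hx : x i = ψ x)
    (hu : HolomorphicNear u {x}) (hψ : Differentiable ℂ ψ)
    (hψi : ∀ y c, ψ (Function.update y i c) = ψ y)
    (h0 : ∀ᶠ y in 𝓝 x, y i = ψ y → u y = 0) : HolomorphicNear (graphQuotient u i ψ) {x} := by
  obtain ⟨δ, hδ, hball⟩ := Metric.eventually_nhds_iff.1 ((hu x rfl).and h0)
  have hr : 0 < δ / 2 := half_pos hδ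
  have hlt : ∀ ζ ∈ closedBall (x i) (δ / 2), dist ζ (x i) < δ := fun ζ hζ =>
    (mem_closedBall.1 hζ).trans_lt (half_lt_self hδ)
  have hcircle : ∀ θ, circleMap (x i) (δ / 2) θ ≠ x i := fun θ => circleMap_ne_center hr.ne'
  have hquot : HolomorphicNear (fun y => u y / (y i - ψ y))
      (Function.update x i '' sphere (x i) (δ / 2)) := by
    refine HolomorphicNear.div ?_ (.of_differentiable (by fun_prop)) ?_
    · rintro _ ⟨ζ, hζ, rfl⟩
      have hζx : Function.update x i ζ ∈ ball x δ :=
        dist_update_lt (by simpa using hδ) (hlt ζ (sphere_subset_closedBall hζ))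
      filter_upwards [isOpen_ball.mem_nhds hζx] with y hy using (hball hy).1
    · rintro _ ⟨ζ, hζ, rfl⟩
      simpa [hψi, ← hx, sub_ne_zero] using ne_of_mem_sphere hζ hr.ne'
  have hint := (holomorphicNear_pathCauchy (S := {x}) (i := i) (s := 0) (t := 2 * Real.pi)
    (contDiff_circleMap (x i) (δ / 2)) (by rintro x rfl θ -; exact hcircle θ)
    (by rintro x rfl θ -; exact hquot _ ⟨_, circleMap_mem_sphere _ hr.le _, rfl⟩)).const_mul
      (2 * Real.pi * Complex.I)⁻¹
  refine hint.congr ?_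
  rintro x rfl
  filter_upwards [ball_mem_nhds x hr,
    hψ.continuous.continuousAt.preimage_mem_nhds (ball_mem_nhds (ψ x) hr)] with y hy hψy
  have hup : ∀ ζ ∈ closedBall (x i) (δ / 2), dist (Function.update y i ζ) x < δ := fun ζ hζ =>
    dist_update_lt ((mem_ball.1 hy).trans (half_lt_self hδ)) (hlt ζ hζ)
  rw [mem_preimage, ← hx] at hψy
  exact graphQuotient_eq_pathCauchy hψi (fun ζ hζ => ((hball (hup ζ hζ)).1.comp ζ
    (differentiable_update_right i y ζ)).differentiableWithinAt)
    ((hball (hup _ (ball_subset_closedBall hψy))).2 (by simp [hψi]))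
    ((dist_le_pi_dist y x i).trans_lt hy) hψy

theorem HolomorphicNear.graphQuotient {S : Set (ι → ℂ)} (hu : HolomorphicNear u S)
    (hψ : Differentiable ℂ ψ) (hψi : ∀ y c, ψ (Function.update y i c) = ψ y)
    (h0 : ∀ x ∈ S, x i = ψ x → ∀ᶠ y in 𝓝 x, y i = ψ y → u y = 0) :
    HolomorphicNear (graphQuotient u i ψ) S := by
  intro x hxS
  have hux : HolomorphicNear u {x} := hu.mono (singleton_subset_iff.2 hxS)
  by_cases hx : x i = ψ x
  · exact hux.graphQuotient_singleton hx hψ hψi (h0 x hxS hx) x rfl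
  · refine (hux.div (.of_differentiable (f := fun y => y i - ψ y) (by fun_prop)) ?_).congr ?_ x rfl
    · simpa using sub_ne_zero.2 hx
    · rintro x rfl
      filter_upwards [(isOpen_ne_fun (continuous_apply i) hψ.continuous).mem_nhds hx] with y hy
      exact if_neg hy

end Division

section Subdivision

/-- Subdividing a box along coordinate hyperplanes until its sides are at most `δ`. -/
theorem box_induction {κ : Type*} [Finite κ] [DecidableEq κ] {p : (κ → ℝ) → (κ → ℝ) → Prop} {δ : ℝ}
    (hδ : 0 < δ) (small : ∀ a b, (∀ k, b k - a k ≤ δ) → p a b)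
    (merge : ∀ a b k c, a k ≤ c → c ≤ b k → p a (Function.update b k c) →
      p (Function.update a k c) b → p a b) (a b : κ → ℝ) : p a b := by
  cases nonempty_fintype κ
  induction hm : ∑ k, ⌈(b k - a k) / δ⌉₊ using Nat.strong_induction_on generalizing a b with
  | _ m ih =>
    subst hm
    by_cases h : ∀ k, b k - a k ≤ δ
    · exact small a b h
    obtain ⟨k, hk⟩ := not_forall.1 h
    have hside : 1 < (b k - a k) / δ := (one_lt_div hδ).2 (not_le.1 hk)
    have hceil : 1 < ⌈(b k - a k) / δ⌉₊ := Nat.lt_ceil.2 (by exact_mod_cast hside)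
    refine merge a b k (a k + δ) (by linarith) (by linarith)
      (ih _ (Finset.sum_lt_sum (fun l _ => ?_) ⟨k, Finset.mem_univ k, ?_⟩) _ _ rfl)
      (ih _ (Finset.sum_lt_sum (fun l _ => ?_) ⟨k, Finset.mem_univ k, ?_⟩) _ _ rfl)
    · obtain rfl | hl := eq_or_ne l k
      · simpa [div_self hδ.ne'] using hceil.le
      · simp [hl]
    · simpa [div_self hδ.ne'] using hceil
    · obtain rfl | hl := eq_or_ne l k
      · rw [Function.update_self]
        gcongr
        linarith
      · simp [hl]
    · rw [Function.update_self, ← sub_sub, sub_div, div_self hδ.ne', Nat.ceil_sub_one]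
      omega

theorem complexBox_subset_ball {ι : Type*} [Fintype ι] {a b : ι × Bool → ℝ} {δ ε : ℝ} (hε : 0 < ε)
    (hδε : 2 * δ < ε) (hab : ∀ k, b k - a k ≤ δ) {x : ι → ℂ} (hx : x ∈ complexBox a b) :
    complexBox a b ⊆ ball x ε := by
  intro y hy
  refine (dist_pi_lt_iff hε).2 fun i => ?_
  have hcoord : ∀ k, |realCoords y k - realCoords x k| ≤ δ := fun k =>
    (abs_sub_le_of_le_of_le (hy.1 k) (hy.2 k) (hx.1 k) (hx.2 k)).trans (hab k)
  rw [dist_eq_norm]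
  calc ‖y i - x i‖ ≤ |(y i).re - (x i).re| + |(y i).im - (x i).im| :=
        Complex.norm_le_abs_re_add_abs_im _
    _ ≤ δ + δ := add_le_add (hcoord (i, false)) (hcoord (i, true))
    _ < ε := by linarith

end Subdivision

section Cousin
open Filter Topology

section

variable {ι : Type*} [Fintype ι] {P : Set (ι → ℂ)} {i : ι} {ψ f : (ι → ℂ) → ℂ}
  {a b : ι × Bool → ℝ} {k : ι × Bool} {c : ℝ}

/-- The additive Cousin problem is solvable on `P` for any two boxes sharing a face. -/
def IsCousinSet (P : Set (ι → ℂ)) : Prop :=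
  ∀ (a b : ι × Bool → ℝ) (k : ι × Bool) (c : ℝ), a k ≤ c → c ≤ b k →
    ∀ g : (ι → ℂ) → ℂ, HolomorphicNear g (P ∩ (complexBox a b ∩ {z | realCoords z k = c})) →
    ∃ g₁ g₂ : (ι → ℂ) → ℂ,
      HolomorphicNear g₁ (P ∩ (complexBox a b ∩ {z | realCoords z k ≤ c})) ∧
      HolomorphicNear g₂ (P ∩ (complexBox a b ∩ {z | c ≤ realCoords z k})) ∧
      ∀ x ∈ P ∩ (complexBox a b ∩ {z | realCoords z k = c}), ∀ᶠ y in 𝓝 x, g y = g₁ y - g₂ y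

/-- `F` is holomorphic near `S` and agrees with `f` on the graph `y i = ψ y` near `S`. -/
def IsExtension (F : (ι → ℂ) → ℂ) (S : Set (ι → ℂ)) (i : ι) (ψ f : (ι → ℂ) → ℂ) : Prop :=
  HolomorphicNear F S ∧ ∀ x ∈ S, x i = ψ x → ∀ᶠ y in 𝓝 x, y i = ψ y → F y = f y

theorem IsExtension.mono {F : (ι → ℂ) → ℂ} {S T : Set (ι → ℂ)} (h : IsExtension F T i ψ f)
    (hST : S ⊆ T) : IsExtension F S i ψ f :=
  ⟨h.1.mono hST, fun x hx => h.2 x (hST hx)⟩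

theorem IsExtension.sub_mul {F g : (ι → ℂ) → ℂ} {S : Set (ι → ℂ)} (h : IsExtension F S i ψ f)
    (hψ : Differentiable ℂ ψ) (hg : HolomorphicNear g S) :
    IsExtension (fun y => F y - (y i - ψ y) * g y) S i ψ f := by
  have hφ : Differentiable ℂ fun y : ι → ℂ => y i - ψ y := by fun_prop
  refine ⟨h.1.sub ((HolomorphicNear.of_differentiable hφ).mul hg), fun x hx hxi => ?_⟩
  filter_upwards [h.2 x hx hxi] with y hy hyi
  rw [hy hyi, sub_eq_zero.2 hyi, zero_mul, sub_zero]

theorem IsExtension.glue {F₁ F₂ : (ι → ℂ) → ℂ} {S : Set (ι → ℂ)}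
    (h₁ : IsExtension F₁ (S ∩ {z | realCoords z k ≤ c}) i ψ f)
    (h₂ : IsExtension F₂ (S ∩ {z | c ≤ realCoords z k}) i ψ f)
    (h : ∀ x ∈ S ∩ {z | realCoords z k = c}, F₁ =ᶠ[𝓝 x] F₂) :
    IsExtension (fun y => if realCoords y k ≤ c then F₁ y else F₂ y) S i ψ f := by
  set F := fun y => if realCoords y k ≤ c then F₁ y else F₂ y
  have hle : ∀ x ∈ S, realCoords x k ≤ c → F =ᶠ[𝓝 x] F₁ := by
    rintro x hx hxc
    rcases hxc.lt_or_eq with hlt | heq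
    · filter_upwards [(isOpen_lt (continuous_realCoords_apply k) continuous_const).mem_nhds hlt]
        with y hy using if_pos (le_of_lt hy)
    · filter_upwards [h x ⟨hx, heq⟩] with y hy
      simp only [F, hy, ite_self]
  have hlt : ∀ x, c < realCoords x k → F =ᶠ[𝓝 x] F₂ := fun x hx => by
    filter_upwards [(isOpen_lt continuous_const (continuous_realCoords_apply k)).mem_nhds hx]
      with y hy using if_neg (not_le_of_gt hy)
  refine ⟨fun x hx => ?_, fun x hx hxi => ?_⟩ <;> rcases le_or_gt (realCoords x k) c with hxc | hxc
  · exact (h₁.1.mono (singleton_subset_iff.2 ⟨hx, hxc⟩)).congr (by simpa using hle x hx hxc) x rfl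
  · exact (h₂.1.mono (singleton_subset_iff.2 ⟨hx, hxc.le⟩)).congr (by simpa using hlt x hxc) x rfl
  · filter_upwards [h₁.2 x ⟨hx, hxc⟩ hxi, hle x hx hxc] with y hy hF hyi using hF.trans (hy hyi)
  · filter_upwards [h₂.2 x ⟨hx, hxc.le⟩ hxi, hlt x hxc] with y hy hF hyi using hF.trans (hy hyi)

variable [DecidableEq ι]

theorem IsCousinSet.exists_isExtension_merge (hP : IsCousinSet P) (hψ : Differentiable ℂ ψ)
    (hψi : ∀ y c, ψ (Function.update y i c) = ψ y) (hac : a k ≤ c) (hcb : c ≤ b k)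
    (h₁ : ∃ F, IsExtension F (P ∩ complexBox a (Function.update b k c)) i ψ f)
    (h₂ : ∃ F, IsExtension F (P ∩ complexBox (Function.update a k c) b) i ψ f) :
    ∃ F, IsExtension F (P ∩ complexBox a b) i ψ f := by
  obtain ⟨F₁, hF₁⟩ := h₁
  obtain ⟨F₂, hF₂⟩ := h₂
  rw [← complexBox_inter_le hcb] at hF₁
  rw [← complexBox_inter_ge hac] at hF₂
  set S := P ∩ (complexBox a b ∩ {z | realCoords z k = c})
  have hS₁ : IsExtension F₁ S i ψ f :=
    hF₁.mono (inter_subset_inter_right _ (inter_subset_inter_right _ fun z hz => le_of_eq hz))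
  have hS₂ : IsExtension F₂ S i ψ f :=
    hF₂.mono (inter_subset_inter_right _ (inter_subset_inter_right _ fun z hz => ge_of_eq hz))
  have hzero : ∀ x ∈ S, x i = ψ x → ∀ᶠ y in 𝓝 x, y i = ψ y → F₁ y - F₂ y = 0 := by
    intro x hx hxi
    filter_upwards [hS₁.2 x hx hxi, hS₂.2 x hx hxi] with y hy₁ hy₂ hy
    rw [hy₁ hy, hy₂ hy, sub_self]
  obtain ⟨g₁, g₂, hg₁, hg₂, hg⟩ := hP a b k c hac hcb _
    ((hS₁.1.sub hS₂.1).graphQuotient hψ hψi hzero)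
  refine ⟨_, IsExtension.glue (k := k) (c := c)
    ((hF₁.sub_mul hψ hg₁).mono (inter_assoc ..).subset)
    ((hF₂.sub_mul hψ hg₂).mono (inter_assoc ..).subset) fun x hx => ?_⟩
  rw [inter_assoc] at hx
  filter_upwards [eventually_eq_mul_graphQuotient hψ.continuous hzero x hx, hg x hx] with y hu hy
  rw [hy] at hu
  linear_combination hu

theorem IsCousinSet.exists_isExtension (hP : IsCousinSet P) (hPc : IsClosed P)
    (hψ : Differentiable ℂ ψ) (hψi : ∀ y c, ψ (Function.update y i c) = ψ y)
    (hf : HolomorphicNear f (P ∩ complexBox a b ∩ {y | y i = ψ y})) :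
    ∃ F, IsExtension F (P ∩ complexBox a b) i ψ f := by
  set U : Bool → Set (ι → ℂ) := fun q => bif q then
    {x | ∀ᶠ y in 𝓝 x, DifferentiableAt ℂ f y} else {y | y i ≠ ψ y}
  have hU : ∀ q, IsOpen (U q)
    | true => HolomorphicNear.isOpen_setOf f
    | false => isOpen_ne_fun (continuous_apply i) hψ.continuous
  obtain ⟨ε, hε, hεU⟩ := lebesgue_number_lemma_of_metric
    ((isCompact_complexBox a b).inter_left hPc) hU fun x hx => by
      by_cases hxi : x i = ψ x
      · exact mem_iUnion.2 ⟨true, hf x ⟨hx, hxi⟩⟩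
      · exact mem_iUnion.2 ⟨false, hxi⟩
  refine box_induction (p := fun a' b' => complexBox a' b' ⊆ complexBox a b →
    ∃ F, IsExtension F (P ∩ complexBox a' b') i ψ f) (δ := ε / 3) (by positivity)
    (fun a' b' hab hsub => ?_) (fun a' b' k c hac hcb h₁ h₂ hsub => ?_) a b subset_rfl
  · rcases (P ∩ complexBox a' b').eq_empty_or_nonempty with he | ⟨x, hxP, hx⟩
    · exact ⟨0, by simp [he, IsExtension, HolomorphicNear]⟩
    have hball := complexBox_subset_ball hε (by linarith) hab hx
    obtain ⟨_ | _, hq⟩ := hεU x ⟨hxP, hsub hx⟩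
    · exact ⟨0, .of_differentiable (differentiable_const 0),
        fun y hy hyi => absurd hyi (hq (hball hy.2))⟩
    · exact ⟨f, fun y hy => hq (hball hy.2), fun _ _ _ => .of_forall fun _ _ => rfl⟩
  · rw [← complexBox_inter_le hcb] at h₁
    rw [← complexBox_inter_ge hac] at h₂
    refine hP.exists_isExtension_merge hψ hψi hac hcb ?_ ?_
    · rw [← complexBox_inter_le hcb]
      exact h₁ (inter_subset_left.trans hsub)
    · rw [← complexBox_inter_ge hac]
      exact h₂ (inter_subset_left.trans hsub)

end

variable {N : ℕ} {R s c : ℝ} {p : (Fin N → ℂ) → ℂ} {ps : List ((Fin N → ℂ) → ℂ)}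
  {a b : Fin N × Bool → ℝ}

/-- The closed square in `ℂ` with centre `0` and side `2 * R`. -/
def closedSquare (R : ℝ) : Set ℂ := {w | |w.re| ≤ R ∧ |w.im| ≤ R}

/-- The polyhedron where the given functions take values in a square. -/
def polyhedron (R : ℝ) (ps : List ((Fin N → ℂ) → ℂ)) : Set (Fin N → ℂ) :=
  {z | ∀ p ∈ ps, p z ∈ closedSquare R}

theorem isClosed_closedSquare (R : ℝ) : IsClosed (closedSquare R) :=
  (isClosed_le Complex.continuous_re.abs continuous_const).inter
    (isClosed_le Complex.continuous_im.abs continuous_const)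

theorem isClosed_polyhedron (hps : ∀ p ∈ ps, Continuous p) : IsClosed (polyhedron R ps) := by
  simp only [polyhedron, ofPred_forall]
  exact isClosed_biInter fun p hp => (isClosed_closedSquare R).preimage (hps p hp)

/-- Adds one more complex variable, both of whose real coordinates are `s`, in front of `a`. -/
def boxCons (s : ℝ) (a : Fin N × Bool → ℝ) : Fin (N + 1) × Bool → ℝ :=
  fun k => Fin.cases s (fun j => a (j, k.2)) k.1

theorem mem_complexBox_boxCons {y : Fin (N + 1) → ℂ} :
    y ∈ complexBox (boxCons (-R) a) (boxCons R b) ↔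
      y 0 ∈ closedSquare R ∧ Fin.tail y ∈ complexBox a b := by
  simp only [mem_complexBox, Prod.forall, Fin.forall_fin_succ, closedSquare, abs_le,
    Bool.forall_bool]
  rfl

theorem update_boxCons (k : Fin N × Bool) :
    Function.update (boxCons s a) (k.1.succ, k.2) c = boxCons s (Function.update a k c) := by
  ext ⟨j, q⟩
  obtain ⟨i, r⟩ := k
  cases j using Fin.cases with
  | zero => simp [boxCons, Function.update_apply, (Fin.succ_ne_zero i).symm]
  | succ j => simp [boxCons, Function.update_apply]

theorem differentiable_tail : Differentiable ℂ (Fin.tail : (Fin (N + 1) → ℂ) → Fin N → ℂ) :=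
  differentiable_pi.2 fun j => differentiable_apply j.succ

theorem differentiable_cons (hp : Differentiable ℂ p) :
    Differentiable ℂ fun z => (Fin.cons (p z) z : Fin (N + 1) → ℂ) :=
  differentiable_pi.2 fun j => by
    cases j using Fin.cases with
    | zero => simpa using hp
    | succ j => simpa using differentiable_apply j

theorem mem_polyhedron_map_tail {y : Fin (N + 1) → ℂ} :
    y ∈ polyhedron R (ps.map fun p y => p (Fin.tail y)) ↔ Fin.tail y ∈ polyhedron R ps := by
  simp [polyhedron]

theorem forall_mem_map_tail (hps : ∀ p ∈ ps, Differentiable ℂ p) :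
    ∀ q ∈ ps.map fun p (y : Fin (N + 1) → ℂ) => p (Fin.tail y), Differentiable ℂ q := by
  simp only [List.mem_map, forall_exists_index, and_imp, forall_apply_eq_imp_iff₂]
  exact fun q hq => (hps q hq).comp differentiable_tail

theorem mem_polyhedron_cons {z : Fin N → ℂ} :
    z ∈ polyhedron R (p :: ps) ↔ p z ∈ closedSquare R ∧ z ∈ polyhedron R ps := by
  simp [polyhedron]

theorem mapsTo_cons_polyhedron : MapsTo (fun z => (Fin.cons (p z) z : Fin (N + 1) → ℂ))
    (polyhedron R (p :: ps) ∩ complexBox a b)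
    (polyhedron R (ps.map fun p y => p (Fin.tail y)) ∩
      complexBox (boxCons (-R) a) (boxCons R b)) := by
  rintro z ⟨hz, hzab⟩
  obtain ⟨hpz, hz⟩ := mem_polyhedron_cons.1 hz
  exact ⟨mem_polyhedron_map_tail.2 (by simpa using hz),
    mem_complexBox_boxCons.2 ⟨by simpa using hpz, by simpa using hzab⟩⟩

/-- Oka's trick: a function on a polyhedron extends from the graph of a defining function, in one
more variable but with one fewer defining function. -/
theorem exists_extension_graph (hp : Differentiable ℂ p) (hps : ∀ p ∈ ps, Differentiable ℂ p)
    (hC : IsCousinSet (polyhedron R (ps.map fun p (y : Fin (N + 1) → ℂ) => p (Fin.tail y))))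
    {g : (Fin N → ℂ) → ℂ} (hg : HolomorphicNear g (polyhedron R (p :: ps) ∩ complexBox a b)) :
    ∃ F : (Fin (N + 1) → ℂ) → ℂ,
      HolomorphicNear F (polyhedron R (ps.map fun p (y : Fin (N + 1) → ℂ) => p (Fin.tail y)) ∩
        complexBox (boxCons (-R) a) (boxCons R b)) ∧
      ∀ x ∈ polyhedron R (p :: ps) ∩ complexBox a b, ∀ᶠ z in 𝓝 x, g z = F (Fin.cons (p z) z) := by
  obtain ⟨F, hF, hFe⟩ := hC.exists_isExtension (i := 0) (ψ := fun y => p (Fin.tail y))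
    (f := fun y => g (Fin.tail y)) (a := boxCons (-R) a) (b := boxCons R b)
    (isClosed_polyhedron fun q hq => (forall_mem_map_tail hps q hq).continuous)
    (hp.comp differentiable_tail) (fun y c => by simp) (hg.comp differentiable_tail (by
      rintro y ⟨⟨hy, hyab⟩, hyp : y 0 = p (Fin.tail y)⟩
      rw [mem_complexBox_boxCons] at hyab
      exact ⟨mem_polyhedron_cons.2 ⟨hyp ▸ hyab.1, mem_polyhedron_map_tail.1 hy⟩, hyab.2⟩))
  refine ⟨F, hF, fun x hx => ?_⟩
  filter_upwards [(differentiable_cons hp).continuous.continuousAt.eventually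
    (hFe _ (mapsTo_cons_polyhedron hx) (by simp))] with z hz
  simpa using (hz (by simp)).symm

theorem isCousinSet_polyhedron (R : ℝ) {N : ℕ} (ps : List ((Fin N → ℂ) → ℂ))
    (hps : ∀ p ∈ ps, Differentiable ℂ p) : IsCousinSet (polyhedron R ps) := by
  induction hm : ps.length generalizing N ps with
  | zero =>
    have huniv : polyhedron R ps = univ := by
      rw [List.length_eq_zero_iff.1 hm]
      ext
      simp [polyhedron]
    intro a b k c hac hcb g hg
    simp only [huniv, univ_inter] at hg ⊢
    exact exists_cousin_split_complexBox hac hcb hg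
  | succ m ih =>
    intro a b k c hac hcb g hg
    obtain ⟨p, ps, rfl⟩ := List.exists_cons_of_length_eq_add_one hm
    rw [List.forall_mem_cons] at hps
    have hC := ih _ (forall_mem_map_tail hps.2) (by simpa using hm)
    rw [complexBox_inter_eq hac hcb] at hg
    obtain ⟨F, hF, hFe⟩ := exists_extension_graph hps.1 hps.2 hC hg
    rw [← update_boxCons, ← update_boxCons, ← complexBox_inter_eq (by exact hac) (by exact hcb)]
      at hF
    obtain ⟨F₁, F₂, hF₁, hF₂, hFF⟩ := hC _ _ _ _ (by exact hac) (by exact hcb) F hF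
    have hgr := differentiable_cons hps.1
    have hmaps : ∀ {z}, z ∈ _ → _ := @(mapsTo_cons_polyhedron (R := R) (p := p) (ps := ps)
      (a := a) (b := b))
    refine ⟨_, _, hF₁.comp hgr fun z ⟨hz, hzab, hzc⟩ => ⟨(hmaps ⟨hz, hzab⟩).1,
      (hmaps ⟨hz, hzab⟩).2, hzc⟩, hF₂.comp hgr fun z ⟨hz, hzab, hzc⟩ => ⟨(hmaps ⟨hz, hzab⟩).1,
      (hmaps ⟨hz, hzab⟩).2, hzc⟩, fun x hx => ?_⟩
    have hx' := hmaps ⟨hx.1, hx.2.1⟩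
    filter_upwards [hFe x (by rwa [complexBox_inter_eq hac hcb] at hx),
      hgr.continuous.continuousAt.eventually (hFF _ ⟨hx'.1, hx'.2, hx.2.2⟩)] with z hg hF
    rw [hg, hF]

end Cousin

section FunctionalCalculus

section NormedAlgebra

variable {𝕜 B : Type*} [NontriviallyNormedField 𝕜] [NormedRing B] [NormedAlgebra 𝕜 B]

theorem resolvent_mem_of_norm_lt {A : Subalgebra 𝕜 B} [CompleteSpace A] {x : B} (hx : x ∈ A) {ζ : 𝕜}
    (hζ : ‖x‖ * ‖(1 : B)‖ < ‖ζ‖) : resolvent x ζ ∈ A := by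
  obtain ⟨u, hu⟩ := spectrum.mem_resolventSet_of_norm_lt_mul (a := (⟨x, hx⟩ : A)) hζ
  have hux : (Units.map (A.val : A →* B) u : B) = algebraMap 𝕜 B ζ - x := by
    simp [hu]
  rw [resolvent, ← hux, Ring.inverse_unit]
  exact (↑u⁻¹ : A).2

theorem intervalIntegral_mem {E : Type*} [NormedAddCommGroup E] [NormedSpace ℝ E] [CompleteSpace E]
    {S : Submodule ℝ E} (hS : IsClosed (S : Set E)) {φ : ℝ → E} (hφ : Continuous φ)
    (hφS : ∀ t, φ t ∈ S) (s t : ℝ) : ∫ τ in s..t, φ τ ∈ S := by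
  have : CompleteSpace S := hS.completeSpace_coe
  have hint := S.subtypeL.intervalIntegral_comp_comm (μ := MeasureTheory.volume)
    ((hφ.subtype_mk hφS).intervalIntegrable s t)
  exact hint.symm ▸ (∫ τ in s..t, (⟨φ τ, hφS τ⟩ : S)).2

end NormedAlgebra

variable {Y : Type*} [TopologicalSpace Y] {A : Subalgebra ℂ C(Y, ℂ)} {R : ℝ}

theorem resolvent_apply {x : C(Y, ℂ)} {ζ : ℂ} (h : ζ ∈ resolventSet ℂ x) (y : Y) :
    resolvent x ζ y = (ζ - x y)⁻¹ :=
  eq_inv_of_mul_eq_one_right (DFunLike.congr_fun (Ring.mul_inverse_cancel _ h) y)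

variable [CompactSpace Y]

theorem norm_mul_norm_one_le (x : C(Y, ℂ)) : ‖x‖ * ‖(1 : C(Y, ℂ))‖ ≤ ‖x‖ :=
  mul_le_of_le_one_right (norm_nonneg x) ((ContinuousMap.norm_le _ zero_le_one).2 (by simp))

theorem mem_resolventSet_of_norm_lt {x : C(Y, ℂ)} {ζ : ℂ} (h : ‖x‖ < ‖ζ‖) :
    ζ ∈ resolventSet ℂ x :=
  spectrum.mem_resolventSet_of_norm_lt_mul ((norm_mul_norm_one_le x).trans_lt h)

/-- Cauchy's integral formula, with the resolvent of `x` as its kernel. -/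
theorem exists_mem_apply_of_differentiableOn (hA : IsClosed (A : Set C(Y, ℂ))) {x : C(Y, ℂ)}
    (hx : x ∈ A) (hxR : ‖x‖ < R) {g : ℂ → Y → ℂ}
    (hg : ∀ y, DifferentiableOn ℂ (fun ζ => g ζ y) (closedBall 0 R)) {G : ℝ → C(Y, ℂ)}
    (hG : Continuous G) (hGA : ∀ θ, G θ ∈ A) (hGg : ∀ θ y, G θ y = g (circleMap 0 R θ) y) :
    ∃ F ∈ A, ∀ y, F y = g (x y) y := by
  have : CompleteSpace A := hA.completeSpace_coe
  have hnorm : ∀ θ, ‖x‖ < ‖circleMap 0 R θ‖ := fun θ => by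
    rwa [norm_circleMap_zero, abs_of_pos ((norm_nonneg x).trans_lt hxR)]
  have hres := fun θ => mem_resolventSet_of_norm_lt (hnorm θ)
  set κ : ℝ → C(Y, ℂ) := fun θ =>
    deriv (circleMap 0 R) θ • (resolvent x (circleMap 0 R θ) * G θ)
  have hκ : Continuous κ := by
    have hcont : Continuous fun θ => resolvent x (circleMap 0 R θ) := continuous_iff_continuousAt.2
      fun θ => (spectrum.hasDerivAt_resolvent_const_left (hres θ)).continuousAt.comp
        (continuous_circleMap 0 R).continuousAt
    simp only [κ, deriv_circleMap]
    exact ((continuous_circleMap 0 R).mul continuous_const).smul (hcont.mul hG)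
  have hκA : ∫ θ in 0..2 * Real.pi, κ θ ∈ A := by
    refine intervalIntegral_mem (S := A.toSubmodule.restrictScalars ℝ) hA hκ (fun θ => ?_) _ _
    exact A.smul_mem (A.mul_mem (resolvent_mem_of_norm_lt hx
      ((norm_mul_norm_one_le x).trans_lt (hnorm θ))) (hGA θ)) _
  refine ⟨(2 * Real.pi * Complex.I)⁻¹ • ∫ θ in 0..2 * Real.pi, κ θ, A.smul_mem hκA _, fun y => ?_⟩
  have hcauchy := (hg y).circleIntegral_sub_inv_smul (w := x y)
    (by simpa using (x.norm_coe_le_norm y).trans_lt hxR)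
  have heval : (∫ θ in 0..2 * Real.pi, κ θ) y = ∫ θ in 0..2 * Real.pi, κ θ y :=
    ((ContinuousMap.evalCLM ℂ y).intervalIntegral_comp_comm (hκ.intervalIntegrable 0 _)).symm
  rw [ContinuousMap.smul_apply, heval, smul_eq_mul, inv_mul_eq_iff_eq_mul₀ Complex.two_pi_I_ne_zero,
    ← smul_eq_mul (2 * _ * _), ← hcauchy, circleIntegral]
  refine intervalIntegral.integral_congr fun θ _ => ?_
  simp only [κ, ContinuousMap.smul_apply, ContinuousMap.mul_apply, resolvent_apply (hres θ), hGg,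
    smul_eq_mul]

theorem mem_complexBox_of_norm_le {ι : Type*} {z : ι → ℂ} (h : ∀ i, ‖z i‖ ≤ R) :
    z ∈ complexBox (fun _ => -R) (fun _ => R) :=
  mem_complexBox.2 fun
    | (i, false) => abs_le.1 ((Complex.abs_re_le_norm (z i)).trans (h i))
    | (i, true) => abs_le.1 ((Complex.abs_im_le_norm (z i)).trans (h i))

section Polydisc

variable {ι : Type*} [Fintype ι] {f : (ι → ℂ) → ℂ} {a : ι → C(Y, ℂ)}

theorem exists_mem_comp_of_forall_update [DecidableEq ι]
    (hf : HolomorphicNear f (complexBox (fun _ => -R) (fun _ => R)))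
    (hA : IsClosed (A : Set C(Y, ℂ))) (haR : ∀ i y, ‖a i y‖ ≤ R) {j : ι} (hj : a j ∈ A)
    (hjR : ‖a j‖ < R) (h : ∀ ζ : ℂ, ‖ζ‖ = R → ∃ F ∈ A, ∀ y,
      F y = f (fun i => Function.update a j (algebraMap ℂ _ ζ) i y)) :
    ∃ F ∈ A, ∀ y, F y = f (fun i => a i y) := by
  have hR : 0 ≤ R := (norm_nonneg _).trans hjR.le
  set φ : ℂ → Y → ι → ℂ := fun ζ y => Function.update (fun i => a i y) j ζ
  have hφ : ∀ ζ ∈ closedBall (0 : ℂ) R, ∀ y, φ ζ y ∈ complexBox (fun _ => -R) (fun _ => R) :=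
    fun ζ hζ y => mem_complexBox_of_norm_le fun i => by
      obtain rfl | hi := eq_or_ne i j
      · simpa [φ] using hζ
      · simpa [φ, hi] using haR i y
  have hcont : Continuous fun q : ℝ × Y => f (φ (circleMap 0 R q.1) q.2) :=
    hf.continuousOn.comp_continuous ((continuous_pi fun i => (a i).continuous.comp
      continuous_snd).update j ((continuous_circleMap 0 R).comp continuous_fst))
      fun q => hφ _ (circleMap_mem_closedBall _ hR _) q.2
  set G : C(ℝ, C(Y, ℂ)) :=
    ContinuousMap.curry ⟨fun q : ℝ × Y => f (φ (circleMap 0 R q.1) q.2), hcont⟩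
  have hGA : ∀ θ, G θ ∈ A := fun θ => by
    obtain ⟨F, hFA, hF⟩ := h (circleMap 0 R θ) (by simp [abs_of_nonneg hR])
    convert hFA
    ext y
    rw [hF]
    exact congrArg f (funext fun i => by obtain rfl | hij := eq_or_ne i j <;> simp [φ, *])
  obtain ⟨F, hFA, hF⟩ := exists_mem_apply_of_differentiableOn hA hj hjR
    (g := fun ζ y => f (φ ζ y)) (fun y ζ hζ => ((hf _ (hφ ζ hζ y)).self_of_nhds.comp ζ
      (differentiable_update_right j _ ζ)).differentiableWithinAt)
    G.continuous hGA fun θ y => rfl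
  exact ⟨F, hFA, fun y => by simp [hF, φ]⟩

/-- The functions outside `T` are constant, which lets the Cauchy formula be applied in one variable
at a time. -/
theorem exists_mem_comp_complexBox_of_const
    (hf : HolomorphicNear f (complexBox (fun _ => -R) (fun _ => R)))
    (hA : IsClosed (A : Set C(Y, ℂ))) (T : Finset ι) (haA : ∀ i, a i ∈ A)
    (haR : ∀ i ∈ T, ‖a i‖ < R) (hac : ∀ i ∉ T, ∃ c : ℂ, ‖c‖ ≤ R ∧ a i = algebraMap ℂ _ c) :
    ∃ F ∈ A, ∀ y, F y = f (fun i => a i y) := by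
  classical
  induction T using Finset.induction_on generalizing a with
  | empty =>
    choose c _ hac using fun i => hac i (Finset.notMem_empty i)
    exact ⟨algebraMap ℂ _ (f c), A.algebraMap_mem _, fun y => by simp [hac]⟩
  | insert j T hjT ih =>
    have hle : ∀ i y, ‖a i y‖ ≤ R := fun i y => by
      by_cases hi : i ∈ insert j T
      · exact ((a i).norm_coe_le_norm y).trans (haR i hi).le
      · obtain ⟨c, hc, hac⟩ := hac i hi
        simpa [hac] using hc
    refine exists_mem_comp_of_forall_update hf hA hle (haA j) (haR j (Finset.mem_insert_self j T))
      fun ζ hζ => ih (fun i => ?_) (fun i hi => ?_) (fun i hi => ?_)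
    · obtain rfl | hij := eq_or_ne i j <;> simp [*]
    · simpa [ne_of_mem_of_not_mem hi hjT] using haR i (Finset.mem_insert_of_mem hi)
    · obtain rfl | hij := eq_or_ne i j
      · exact ⟨ζ, hζ.le, by simp⟩
      · simpa [hij] using hac i (by simp [hi, hij])

theorem exists_mem_comp_complexBox
    (hf : HolomorphicNear f (complexBox (fun _ => -R) (fun _ => R)))
    (hA : IsClosed (A : Set C(Y, ℂ))) (haA : ∀ i, a i ∈ A) (haR : ∀ i, ‖a i‖ < R) :
    ∃ F ∈ A, ∀ y, F y = f (fun i => a i y) :=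
  exists_mem_comp_complexBox_of_const hf hA Finset.univ haA (fun i _ => haR i) (by simp)

end Polydisc

theorem mem_closedSquare_of_norm_le {w : ℂ} (h : ‖w‖ ≤ R) : w ∈ closedSquare R :=
  ⟨(Complex.abs_re_le_norm w).trans h, (Complex.abs_im_le_norm w).trans h⟩

theorem exists_mem_comp_polyhedron (hA : IsClosed (A : Set C(Y, ℂ))) {N : ℕ}
    {ps : List ((Fin N → ℂ) → ℂ)} (hps : ∀ p ∈ ps, Differentiable ℂ p) {f : (Fin N → ℂ) → ℂ}
    (hf : HolomorphicNear f (polyhedron R ps ∩ complexBox (fun _ => -R) (fun _ => R)))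
    {a : Fin N → C(Y, ℂ)} (haA : ∀ i, a i ∈ A) (haR : ∀ i, ‖a i‖ < R)
    (hq : ∀ p ∈ ps, ∃ q ∈ A, ‖q‖ < R ∧ ∀ y, q y = p (fun i => a i y)) :
    ∃ F ∈ A, ∀ y, F y = f (fun i => a i y) := by
  induction hm : ps.length generalizing N ps f a with
  | zero =>
    refine exists_mem_comp_complexBox (hf.mono fun z hz => ⟨?_, hz⟩) hA haA haR
    simp [polyhedron, List.length_eq_zero_iff.1 hm]
  | succ m ih =>
    obtain ⟨p, ps, rfl⟩ := List.exists_cons_of_length_eq_add_one hm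
    have hps' := List.forall_mem_cons.1 hps
    obtain ⟨⟨q, hqA, hqR, hqp⟩, hqs⟩ := List.forall_mem_cons.1 hq
    obtain ⟨F, hF, hfF⟩ := exists_extension_graph hps'.1 hps'.2
      (isCousinSet_polyhedron R _ (forall_mem_map_tail hps'.2)) hf
    have hboxCons : ∀ s : ℝ, boxCons s (fun _ : Fin N × Bool => s) = fun _ => s := fun s => by
      ext ⟨j, _⟩
      cases j using Fin.cases <;> rfl
    rw [hboxCons, hboxCons] at hF
    obtain ⟨G, hGA, hG⟩ := ih (forall_mem_map_tail hps'.2) hF (a := Fin.cons q a)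
      (Fin.cases hqA haA) (Fin.cases hqR haR)
      (by simpa only [List.forall_mem_map] using! hqs) (by simpa using hm)
    refine ⟨G, hGA, fun y => ?_⟩
    have hy : (fun i => a i y) ∈ polyhedron R (p :: ps) ∩
        complexBox (fun _ => -R) (fun _ => R) := by
      refine ⟨fun p' hp' => ?_, mem_complexBox_of_norm_le fun i =>
        ((a i).norm_coe_le_norm y).trans (haR i).le⟩
      obtain ⟨q', -, hq'R, hq'⟩ := hq p' hp'
      exact hq' y ▸ mem_closedSquare_of_norm_le ((q'.norm_coe_le_norm y).trans hq'R.le)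
    rw [hG, (hfF _ hy).self_of_nhds, ← hqp]
    refine congrArg F (funext fun i => ?_)
    cases i using Fin.cases <;> rfl

end FunctionalCalculus

section PolynomialConvexity
open Filter Topology

variable {ι : Type*}

/-- The polynomial hull of a set of tuples of complex numbers. It is `polyHull` for an arbitrary
index type and the sup norm; on an unbounded set the junk value of `sSup` makes it meaningless. -/
def polynomialHull (S : Set (ι → ℂ)) : Set (ι → ℂ) :=
  {z | ∀ p : MvPolynomial ι ℂ, ‖eval z p‖ ≤ sSup ((fun w => ‖eval w p‖) '' S)}

theorem differentiable_eval [Finite ι] (p : MvPolynomial ι ℂ) :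
    Differentiable ℂ fun z : ι → ℂ => eval z p := by
  cases nonempty_fintype ι
  exact fun z => (AnalyticOnNhd.eval_mvPolynomial p z (mem_univ z)).differentiableAt

theorem sSup_norm_eval_nonneg (S : Set (ι → ℂ)) (p : MvPolynomial ι ℂ) :
    0 ≤ sSup ((fun w => ‖eval w p‖) '' S) :=
  Real.sSup_nonneg (forall_mem_image.2 fun _ _ => norm_nonneg _)

theorem norm_eval_le_sSup {L : Set (ι → ℂ)} (hL : IsCompact L) {z : ι → ℂ}
    (hz : z ∈ L) (p : MvPolynomial ι ℂ) : ‖eval z p‖ ≤ sSup ((fun w => ‖eval w p‖) '' L) :=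
  le_csSup (hL.image p.continuous_eval.norm).bddAbove (mem_image_of_mem _ hz)

theorem polynomialHull_mono {S L : Set (ι → ℂ)} (hL : IsCompact L) (h : S ⊆ L) :
    polynomialHull S ⊆ polynomialHull L := fun _ hz p =>
  (hz p).trans <| Real.sSup_le (forall_mem_image.2 fun _ hw => norm_eval_le_sSup hL (h hw) p)
    (sSup_norm_eval_nonneg L p)

theorem comp_mem_polynomialHull_image {κ : Type*} (σ : κ → ι) {S : Set (ι → ℂ)} {z : ι → ℂ}
    (hz : z ∈ polynomialHull S) : z ∘ σ ∈ polynomialHull ((· ∘ σ) '' S) := fun p => by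
  simpa only [eval_rename, image_image] using hz (rename σ p)

theorem exists_norm_eval_le_one_of_notMem_polynomialHull {L : Set (ι → ℂ)}
    (hL : IsCompact L) {x : ι → ℂ} (hx : x ∉ polynomialHull L) (c : ℝ) :
    ∃ q : MvPolynomial ι ℂ, (∀ z ∈ L, ‖eval z q‖ ≤ 1) ∧ c < ‖eval x q‖ := by
  obtain ⟨p, hp⟩ := not_forall.1 hx
  obtain ⟨t, hLt, htx⟩ := exists_between (not_le.1 hp)
  have ht : 0 < t := (sSup_norm_eval_nonneg L p).trans_lt hLt
  obtain ⟨k, hk⟩ := pow_unbounded_of_one_lt c ((one_lt_div ht).2 htx)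
  have hnorm (z : ι → ℂ) : ‖eval z ((C (t : ℂ)⁻¹ * p) ^ k)‖ = (‖eval z p‖ / t) ^ k := by
    simp only [map_pow, map_mul, eval_C, inv_mul_eq_div, norm_pow, norm_div, Complex.norm_real,
      Real.norm_eq_abs, abs_of_pos ht]
  refine ⟨(C (t : ℂ)⁻¹ * p) ^ k, fun z hz => ?_, by rwa [hnorm]⟩
  rw [hnorm]
  exact pow_le_one₀ (by positivity)
    ((div_le_one ht).2 ((norm_eval_le_sSup hL hz p).trans hLt.le))

theorem exists_list_eval_forcing_mem {L B U : Set (ι → ℂ)} (hL : IsCompact L)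
    (hB : IsCompact B) (hU : IsOpen U) (hLU : polynomialHull L ⊆ U) (c : ℝ) :
    ∃ qs : List (MvPolynomial ι ℂ), (∀ q ∈ qs, ∀ z ∈ L, ‖eval z q‖ ≤ 1) ∧
      ∀ z ∈ B, (∀ q ∈ qs, ‖eval z q‖ ≤ c) → z ∈ U := by
  choose! q hqL hqx using fun x (hx : x ∉ U) =>
    exists_norm_eval_le_one_of_notMem_polynomialHull hL (fun h => hx (hLU h)) c
  obtain ⟨t, htB, hcover⟩ := (hB.diff hU).elim_nhds_subcover (fun x => {z | c < ‖eval z (q x)‖})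
    fun x hx => (isOpen_lt continuous_const (q x).continuous_eval.norm).mem_nhds (hqx x hx.2)
  refine ⟨t.toList.map q, ?_, fun z hz hzq => ?_⟩
  · simp only [List.mem_map, Finset.mem_toList, forall_exists_index, and_imp,
      forall_apply_eq_imp_iff₂]
    exact fun x hx => hqL x (htB x hx).2
  · by_contra hzU
    obtain ⟨x, hx, hzx⟩ := mem_iUnion₂.1 (hcover ⟨hz, hzU⟩)
    exact (hzq (q x) (List.mem_map_of_mem (Finset.mem_toList.2 hx))).not_gt hzx

theorem aeval_continuousMap_apply {Y : Type*} [TopologicalSpace Y] (a : ι → C(Y, ℂ))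
    (p : MvPolynomial ι ℂ) (y : Y) : aeval a p y = eval (fun i => a i y) p := by
  simpa [coe_aeval_eq_eval] using
    comp_aeval_apply a (ContinuousMap.evalAlgHom ℂ ℂ y) p

theorem aeval_mem {B : Type*} [CommRing B] [Algebra ℂ B] {A : Subalgebra ℂ B} {a : ι → B}
    (ha : ∀ i, a i ∈ A) (p : MvPolynomial ι ℂ) : aeval a p ∈ A := by
  rw [A.mvPolynomial_aeval_coe fun i => ⟨a i, ha i⟩]
  exact SetLike.coe_mem _

/-- The Oka–Weil theorem, as a functional calculus: on the closure of the polynomials on a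
polynomially convex compact set it says that every function holomorphic near the set is there. -/
theorem exists_mem_comp_of_holomorphicNear_polynomialHull {N : ℕ} {Y : Type*} [TopologicalSpace Y]
    [CompactSpace Y] {A : Subalgebra ℂ C(Y, ℂ)} (hA : IsClosed (A : Set C(Y, ℂ)))
    {a : Fin N → C(Y, ℂ)} (haA : ∀ i, a i ∈ A) {f : (Fin N → ℂ) → ℂ}
    (hf : HolomorphicNear f (polynomialHull (range fun y i => a i y))) :
    ∃ F ∈ A, ∀ y, F y = f (fun i => a i y) := by
  obtain ⟨M, hM⟩ := (finite_range fun i => ‖a i‖).bddAbove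
  set R := max M 1 + 1
  have hR : 1 < R := by linarith [le_max_right M 1]
  have haR (i : Fin N) : ‖a i‖ < R := by linarith [hM (mem_range_self i), le_max_left M 1]
  obtain ⟨qs, hqs, hforce⟩ := exists_list_eval_forcing_mem (c := 2 * R)
    (isCompact_range (continuous_pi fun i => (a i).continuous))
    (isCompact_complexBox (fun _ => -R) (fun _ => R)) (HolomorphicNear.isOpen_setOf f) hf
  refine exists_mem_comp_polyhedron (R := R) (ps := qs.map fun q z => eval z q) hA ?_ ?_ haA haR ?_
  · simp only [List.mem_map, forall_exists_index, and_imp, forall_apply_eq_imp_iff₂]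
    exact fun q _ => differentiable_eval q
  · refine fun z hz => hforce z hz.2 fun q hq => ?_
    obtain ⟨hre, him⟩ := hz.1 _ (List.mem_map_of_mem hq)
    linarith [Complex.norm_le_abs_re_add_abs_im (eval z q)]
  · simp only [List.mem_map, forall_exists_index, and_imp, forall_apply_eq_imp_iff₂]
    refine fun q hq => ⟨aeval a q, aeval_mem haA q, ?_, aeval_continuousMap_apply a q⟩
    refine (ContinuousMap.norm_lt_iff _ (by linarith)).2 fun y => ?_
    rw [aeval_continuousMap_apply]
    exact (hqs q hq _ (mem_range_self y)).trans_lt hR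

end PolynomialConvexity

section PolynomialAlgebra
open Filter Topology

variable {ι : Type*} (X : Set (ι → ℂ)) [CompactSpace X]

/-- The uniform algebra `P(X)` of uniform limits of polynomials on a set `X` of tuples. -/
def polynomialAlgebra : Subalgebra ℂ C(X, ℂ) :=
  (aeval (R := ℂ) fun i => ((ContinuousMap.eval i).restrict X : C(X, ℂ))).range.topologicalClosure

/-- The coordinate functions, as elements of `P(X)`. -/
def polynomialAlgebra.coord (i : ι) : polynomialAlgebra X :=
  ⟨(ContinuousMap.eval i).restrict X, Subalgebra.le_topologicalClosure _ ⟨.X i, aeval_X _ _⟩⟩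

namespace polynomialAlgebra

theorem aeval_coord_apply (p : MvPolynomial ι ℂ) (x : X) :
    (aeval (coord X) p : C(X, ℂ)) x = eval x.1 p := by
  rw [← Subalgebra.mvPolynomial_aeval_coe, aeval_continuousMap_apply]
  rfl

theorem denseRange_aeval_coord :
    DenseRange (aeval (R := ℂ) (coord X)) := fun x => by
  rw [Topology.IsInducing.subtypeVal.closure_eq_preimage_closure_image, mem_preimage, ← range_comp]
  have hcoe : Subtype.val ∘ aeval (coord X) = aeval fun i => (coord X i : C(X, ℂ)) :=
    funext fun p => ((polynomialAlgebra X).mvPolynomial_aeval_coe _ p).symm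
  exact hcoe ▸ x.2

variable {X}

theorem norm_algHom_apply_le (φ : polynomialAlgebra X →ₐ[ℂ] ℂ) (u : polynomialAlgebra X) :
    ‖φ u‖ ≤ ‖u‖ := by
  have : CompleteSpace (polynomialAlgebra X) :=
    (Subalgebra.isClosed_topologicalClosure _).completeSpace_coe
  exact (AlgHom.norm_apply_le_self_mul_norm_one φ u).trans (norm_mul_norm_one_le (u : C(X, ℂ)))

theorem exists_forall_algHom_apply_eq (hX : polynomialHull X ⊆ X)
    (φ : polynomialAlgebra X →ₐ[ℂ] ℂ) : ∃ x : X, ∀ u : polynomialAlgebra X, φ u = u.1 x := by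
  have hφ (p : MvPolynomial ι ℂ) : φ (aeval (coord X) p) = eval (fun i => φ (coord X i)) p := by
    rw [comp_aeval_apply, ← coe_aeval_eq_eval]
    rfl
  have hx : (fun i => φ (coord X i)) ∈ X := hX fun p => by
    rw [← hφ]
    refine (norm_algHom_apply_le φ _).trans ?_
    refine (ContinuousMap.norm_le _ (sSup_norm_eval_nonneg X p)).2 fun y => ?_
    change ‖(aeval (coord X) p : C(X, ℂ)) y‖ ≤ _
    rw [aeval_coord_apply]
    exact norm_eval_le_sSup (isCompact_iff_compactSpace.2 ‹_›) y.2 p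
  have hφc : Continuous φ := AddMonoidHomClass.continuous_of_bound φ 1 fun u =>
    (norm_algHom_apply_le φ u).trans_eq (one_mul _).symm
  have hev : Continuous fun u : polynomialAlgebra X => u.1 ⟨_, hx⟩ :=
    (continuous_eval_const _).comp continuous_subtype_val
  refine ⟨⟨_, hx⟩, congrFun ((denseRange_aeval_coord X).equalizer hφc hev ?_)⟩
  ext p
  simp only [Function.comp_apply, hφ, aeval_coord_apply]

theorem span_range_eq_top (hX : polynomialHull X ⊆ X) {κ : Type*}
    {u : κ → polynomialAlgebra X} (hu : ∀ x, ∃ j, (u j).1 x ≠ 0) : Ideal.span (range u) = ⊤ := by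
  have : CompleteSpace (polynomialAlgebra X) :=
    (Subalgebra.isClosed_topologicalClosure _).completeSpace_coe
  by_contra hne
  obtain ⟨I, hI, hle⟩ := Ideal.exists_le_maximal _ hne
  obtain ⟨x, hx⟩ := exists_forall_algHom_apply_eq hX
    (WeakDual.CharacterSpace.equivAlgHom I.toCharacterSpace)
  obtain ⟨j, hj⟩ := hu x
  refine hj ((hx (u j)).symm.trans ?_)
  exact I.toCharacterSpace_apply_eq_zero_of_mem (hle (Ideal.subset_span (mem_range_self j)))

theorem exists_polynomial_sum_mul_near_one (hX : polynomialHull X ⊆ X) {κ : Type*} [Fintype κ]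
    {u : κ → polynomialAlgebra X} (hu : ∀ x, ∃ j, (u j).1 x ≠ 0) {ρ : ℝ} (hρ : 0 < ρ) :
    ∃ G : κ → MvPolynomial ι ℂ, ∀ x : X, ‖1 - ∑ j, eval x.1 (G j) * (u j).1 x‖ < ρ := by
  obtain ⟨g, hg⟩ := Ideal.mem_span_range_iff_exists_fun.1
    (span_range_eq_top hX hu ▸ Submodule.mem_top : (1 : polynomialAlgebra X) ∈ _)
  have hcont : Continuous fun v : κ → polynomialAlgebra X => ∑ j, v j * u j := by fun_prop
  obtain ⟨G, hG⟩ := (DenseRange.piMap fun _ : κ => denseRange_aeval_coord X).exists_mem_open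
    (isOpen_ball.preimage hcont) ⟨g, show _ ∈ ball (1 : polynomialAlgebra X) ρ by
      simpa only [hg] using mem_ball_self hρ⟩
  refine ⟨G, fun x => ?_⟩
  have hdist := (ContinuousMap.dist_apply_le_dist x).trans_lt (mem_ball'.1 hG)
  simpa [dist_eq_norm, aeval_coord_apply, Pi.map_apply] using hdist

end polynomialAlgebra

theorem isCompact_setOf_comp_inl_inr {κ : Type*} {L : Set (ι → ℂ)} (hL : IsCompact L)
    {K : Set (κ → ℂ)} (hK : IsCompact K) :
    IsCompact {x : ι ⊕ κ → ℂ | x ∘ Sum.inl ∈ L ∧ x ∘ Sum.inr ∈ K} :=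
  (Homeomorph.sumArrowHomeomorphProdArrow (X := ℂ)).isCompact_preimage.2 (hL.prod hK)

theorem polynomialHull_setOf_comp_inl_inr_subset {κ : Type*} {L : Set (ι → ℂ)} (hL : IsCompact L)
    (hLhull : polynomialHull L ⊆ L) {K : Set (κ → ℂ)} (hK : IsCompact K)
    (hKhull : polynomialHull K ⊆ K) :
    polynomialHull {x : ι ⊕ κ → ℂ | x ∘ Sum.inl ∈ L ∧ x ∘ Sum.inr ∈ K} ⊆
      {x | x ∘ Sum.inl ∈ L ∧ x ∘ Sum.inr ∈ K} := fun _ hz =>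
  ⟨hLhull (polynomialHull_mono hL (image_subset_iff.2 fun _ hx => hx.1)
    (comp_mem_polynomialHull_image Sum.inl hz)),
  hKhull (polynomialHull_mono hK (image_subset_iff.2 fun _ hx => hx.2)
    (comp_mem_polynomialHull_image Sum.inr hz))⟩

theorem exists_polynomial_sum_mul_sub_near_one {N : ℕ} {κ : Type*} [Fintype κ]
    {L : Set (Fin N → ℂ)} (hL : IsCompact L) (hLhull : polynomialHull L ⊆ L)
    {K : Set (κ → ℂ)} (hK : IsCompact K) (hKhull : polynomialHull K ⊆ K)
    {f : κ → (Fin N → ℂ) → ℂ} (hf : ∀ j, HolomorphicNear (f j) L)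
    (hfK : ∀ z ∈ L, (fun j => f j z) ∉ K) {ρ : ℝ} (hρ : 0 < ρ) :
    ∃ G : κ → MvPolynomial (Fin N ⊕ κ) ℂ, ∀ z ∈ L, ∀ w ∈ K,
      ‖1 - ∑ j, eval (Sum.elim z w) (G j) * (w j - f j z)‖ < ρ := by
  set X := {x : Fin N ⊕ κ → ℂ | x ∘ Sum.inl ∈ L ∧ x ∘ Sum.inr ∈ K}
  have : CompactSpace X := isCompact_iff_compactSpace.1 (isCompact_setOf_comp_inl_inr hL hK)
  have hrange : range (fun (x : X) i => (polynomialAlgebra.coord X (Sum.inl i)).1 x) ⊆ L :=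
    range_subset_iff.2 fun x => x.2.1
  choose F hFA hF using fun j => exists_mem_comp_of_holomorphicNear_polynomialHull
    (Subalgebra.isClosed_topologicalClosure _) (fun i => (polynomialAlgebra.coord X (.inl i)).2)
    ((hf j).mono ((polynomialHull_mono hL hrange).trans hLhull))
  have hu (x : X) : ∃ j, (polynomialAlgebra.coord X (.inr j) - ⟨F j, hFA j⟩).1 x ≠ 0 := by
    by_contra! h
    refine hfK _ x.2.1 ?_
    convert! x.2.2 using 1
    ext j
    exact (hF j x).symm.trans (sub_eq_zero.1 (h j)).symm
  obtain ⟨G, hG⟩ := polynomialAlgebra.exists_polynomial_sum_mul_near_one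
    (polynomialHull_setOf_comp_inl_inr_subset hL hLhull hK hKhull) hu hρ
  refine ⟨G, fun z hz w hw => ?_⟩
  convert! hG ⟨Sum.elim z w, hz, hw⟩ using 7 with j
  exact congrArg (w j - ·) (hF j ⟨Sum.elim z w, hz, hw⟩).symm

end PolynomialAlgebra

section Renormalization
open Filter Topology

/-- The composition `θ k ∘ ⋯ ∘ θ (k + i - 1)`. -/
def compFrom {α : Type*} (θ : ℕ → α → α) : ℕ → ℕ → α → α
  | 0, _ => id
  | i + 1, k => θ k ∘ compFrom θ i (k + 1)

theorem compFrom_add {α : Type*} (θ : ℕ → α → α) (i j k : ℕ) :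
    compFrom θ (i + j) k = compFrom θ i k ∘ compFrom θ j (k + i) := by
  induction i generalizing k with
  | zero => simp [compFrom]
  | succ i ih =>
    rw [Nat.add_right_comm, compFrom, ih, Nat.add_assoc, Nat.add_comm 1 i]
    rfl

theorem injective_compFrom {α : Type*} {θ : ℕ → α → α} (h : ∀ k, Function.Injective (θ k))
    (i k : ℕ) : Function.Injective (compFrom θ i k) := by
  induction i generalizing k with
  | zero => exact Function.injective_id
  | succ i ih => exact (h k).comp (ih (k + 1))

theorem continuous_compFrom {α : Type*} [TopologicalSpace α] {θ : ℕ → α → α}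
    (h : ∀ k, Continuous (θ k)) (i k : ℕ) : Continuous (compFrom θ i k) := by
  induction i generalizing k with
  | zero => exact continuous_id
  | succ i ih => exact (h k).comp (ih (k + 1))

theorem compFrom_zero_right {α : Type*} [Zero α] {θ : ℕ → α → α} (h : ∀ k, θ k 0 = 0) (i k : ℕ) :
    compFrom θ i k 0 = 0 := by
  induction i generalizing k with
  | zero => rfl
  | succ i ih => rw [compFrom, Function.comp_apply, ih, h]

theorem exists_dist_le_of_compFrom_mem {α : Type*} [PseudoMetricSpace α] {θ Φ : ℕ → α → α}
    (hinv : ∀ k, Function.LeftInverse (Φ k) (θ k)) {B : Set α} {δ : ℝ} (hδ : 0 ≤ δ)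
    (hΦ : ∀ k, ∀ b ∈ B, ∀ w, dist w b ≤ δ → dist (Φ k w) w ≤ δ * (1 / 2) ^ (k + 1)) (i : ℕ) {u : α}
    (hu : compFrom θ i 0 u ∈ B) : ∃ b ∈ B, dist u b ≤ δ := by
  suffices hdist : dist u (compFrom θ i 0 u) ≤ δ * (1 - (1 / 2) ^ i) from
    ⟨_, hu, hdist.trans (mul_le_of_le_one_right hδ (by simp))⟩
  induction i generalizing u with
  | zero => simp [compFrom]
  | succ i ih =>
    have hsplit : compFrom θ (i + 1) 0 u = compFrom θ i 0 (θ i u) := by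
      rw [compFrom_add, zero_add]; rfl
    rw [hsplit] at hu ⊢
    have hdist := ih hu
    have hstep := hΦ i _ hu _ (hdist.trans (mul_le_of_le_one_right hδ (by simp)))
    rw [hinv i u] at hstep
    calc dist u (compFrom θ i 0 (θ i u))
        ≤ dist u (θ i u) + dist (θ i u) (compFrom θ i 0 (θ i u)) := dist_triangle ..
      _ ≤ δ * (1 / 2) ^ (i + 1) + δ * (1 - (1 / 2) ^ i) := add_le_add hstep hdist
      _ = δ * (1 - (1 / 2) ^ (i + 1)) := by ring

variable {E : Type*} [NormedAddCommGroup E] [NormedSpace ℂ E]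

/-- The renormalized composition `θ k ∘ ⋯ ∘ θ (k + j - 1) (2⁻ʲ ξ)`. -/
def renormFrom (θ : ℕ → E → E) (j k : ℕ) (ξ : E) : E :=
  compFrom θ j k ((1 / 2 : ℂ) ^ j • ξ)

/-- The limit of `renormFrom θ j k` as `j → ∞`, a junk value where it does not exist. -/
def renormLimit (θ : ℕ → E → E) (k : ℕ) (ξ : E) : E :=
  limUnder atTop fun j => renormFrom θ j k ξ

/-- A sequence of maps fixing `0` and approaching `w ↦ 2 w` geometrically near `0`. -/
structure IsNearlyDoubling (θ : ℕ → E → E) (r : ℝ) : Prop where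
  map_zero : ∀ k, θ k 0 = 0
  approximates : ∀ k, ApproximatesLinearOn (θ k) (2 : E →L[ℂ] E) (ball 0 r) ((1 / 2) ^ (k + 2))

theorem renormFrom_succ (θ : ℕ → E → E) (j k : ℕ) (ξ : E) :
    renormFrom θ (j + 1) k ξ = θ k (renormFrom θ j (k + 1) ((1 / 2 : ℂ) • ξ)) := by
  simp only [renormFrom, compFrom, pow_succ, mul_smul, Function.comp_apply]

theorem renormFrom_add (θ : ℕ → E → E) (i j k : ℕ) (ξ : E) :
    renormFrom θ (i + j) k ξ =
      compFrom θ i k (renormFrom θ j (k + i) ((1 / 2 : ℂ) ^ i • ξ)) := by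
  simp only [renormFrom, compFrom_add, Function.comp_apply, smul_smul, pow_add, mul_comm]

theorem norm_half_pow_smul (i : ℕ) (ξ : E) : ‖(1 / 2 : ℂ) ^ i • ξ‖ = (1 / 2) ^ i * ‖ξ‖ := by
  rw [norm_smul, norm_pow]
  norm_num

theorem eventually_norm_half_pow_smul_lt (ξ : E) {ε : ℝ} (hε : 0 < ε) :
    ∀ᶠ i : ℕ in atTop, ‖(1 / 2 : ℂ) ^ i • ξ‖ < ε := by
  have hlim : Tendsto (fun i : ℕ => (1 / 2 : ℝ) ^ i * ‖ξ‖) atTop (𝓝 0) := by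
    simpa using (tendsto_pow_atTop_nhds_zero_of_lt_one (r := (1 / 2 : ℝ)) (by norm_num)
      (by norm_num)).mul_const ‖ξ‖
  simpa only [norm_half_pow_smul] using hlim.eventually (gt_mem_nhds hε)

theorem norm_sub_le_of_approximatesLinearOn_one {g : E → E} {s : Set E} {c : NNReal}
    (hg : ApproximatesLinearOn g (1 : E →L[ℂ] E) s c) {x y : E} (hx : x ∈ s) (hy : y ∈ s) :
    ‖g x - g y‖ ≤ (1 + c) * ‖x - y‖ := by
  have happrox : ‖g x - g y - (x - y)‖ ≤ c * ‖x - y‖ := hg x hx y hy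
  linarith [norm_le_insert' (g x - g y) (x - y)]

theorem approximatesLinearOn_comp_half_smul {θ g : E → E} {r : ℝ} {c d : NNReal} (hd : d ≤ 1)
    (hθ : ApproximatesLinearOn θ (2 : E →L[ℂ] E) (ball 0 r) c)
    (hg : ApproximatesLinearOn g (1 : E →L[ℂ] E) (ball 0 r) d) (hg0 : g 0 = 0) :
    ApproximatesLinearOn (fun ξ => θ (g ((1 / 2 : ℂ) • ξ))) (1 : E →L[ℂ] E) (ball 0 r)
      (c + d) := by
  have hd' : (d : ℝ) ≤ 1 := hd
  have hhalf (x : E) : ‖(1 / 2 : ℂ) • x‖ = ‖x‖ / 2 := by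
    simpa [div_eq_inv_mul] using norm_half_pow_smul 1 x
  have hball {x : E} (hx : x ∈ ball 0 r) : (1 / 2 : ℂ) • x ∈ ball 0 r := by
    rw [mem_ball_zero_iff] at hx ⊢
    linarith [hhalf x, norm_nonneg x]
  have hlip {x y : E} (hx : x ∈ ball 0 r) (hy : y ∈ ball 0 r) :
      ‖g ((1 / 2 : ℂ) • x) - g ((1 / 2 : ℂ) • y)‖ ≤ ‖x - y‖ := by
    have := norm_sub_le_of_approximatesLinearOn_one hg (hball hx) (hball hy)
    rw [← smul_sub, hhalf] at this
    nlinarith [norm_nonneg (x - y), hd']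
  have hmaps {x : E} (hx : x ∈ ball 0 r) : g ((1 / 2 : ℂ) • x) ∈ ball 0 r := by
    have := hlip hx (mem_ball_self (pos_of_mem_ball hx))
    rw [smul_zero, hg0, sub_zero, sub_zero] at this
    exact mem_ball_zero_iff.2 (this.trans_lt (mem_ball_zero_iff.1 hx))
  intro x hx y hy
  set p := g ((1 / 2 : ℂ) • x)
  set q := g ((1 / 2 : ℂ) • y)
  have hpq : ‖p - q - (1 / 2 : ℂ) • (x - y)‖ ≤ d * (‖x - y‖ / 2) := by
    have happrox : ‖p - q - ((1 / 2 : ℂ) • x - (1 / 2 : ℂ) • y)‖ ≤ _ :=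
      hg _ (hball hx) _ (hball hy)
    rwa [← smul_sub, hhalf] at happrox
  calc ‖θ p - θ q - (x - y)‖
      = ‖(θ p - θ q - (2 : ℂ) • (p - q)) + (2 : ℂ) • (p - q - (1 / 2 : ℂ) • (x - y))‖ := by
        congr 1
        module
    _ ≤ ‖θ p - θ q - (2 : ℂ) • (p - q)‖ + 2 * ‖p - q - (1 / 2 : ℂ) • (x - y)‖ := by
        simpa [norm_smul] using norm_add_le (θ p - θ q - (2 : ℂ) • (p - q)) ((2 : ℂ) • _)
    _ ≤ c * ‖x - y‖ + 2 * (d * (‖x - y‖ / 2)) := by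
        gcongr
        rw [two_smul]
        have happrox : ‖θ p - θ q - ((2 : E →L[ℂ] E) (p - q))‖ ≤ c * ‖p - q‖ :=
          hθ p (hmaps hx) q (hmaps hy)
        rw [← one_add_one_eq_two] at happrox
        exact happrox.trans (mul_le_mul_of_nonneg_left (hlip hx hy) c.2)
    _ = ↑(c + d) * ‖x - y‖ := by push_cast; ring

namespace IsNearlyDoubling

variable {θ : ℕ → E → E} {r : ℝ}

theorem renormFrom_zero_right (h : IsNearlyDoubling θ r) (j k : ℕ) : renormFrom θ j k 0 = 0 := by
  rw [renormFrom, smul_zero, compFrom_zero_right h.map_zero]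

theorem approximatesLinearOn_renormFrom (h : IsNearlyDoubling θ r) (j k : ℕ) :
    ApproximatesLinearOn (renormFrom θ j k) (1 : E →L[ℂ] E) (ball 0 r) ((1 / 2) ^ (k + 1)) := by
  induction j generalizing k with
  | zero => exact fun x _ y _ => by simp [renormFrom, compFrom]
  | succ j ih =>
    have hsum : ((1 : NNReal) / 2) ^ (k + 2) + (1 / 2) ^ (k + 2) = (1 / 2) ^ (k + 1) := by
      rw [pow_succ, ← mul_add, add_halves, mul_one]
    rw [funext (renormFrom_succ θ j k), ← hsum]
    exact approximatesLinearOn_comp_half_smul (pow_le_one' (half_le_self zero_le_one) _)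
      (h.approximates k) (ih (k + 1)) (h.renormFrom_zero_right j (k + 1))

theorem norm_renormFrom_sub_self_le (h : IsNearlyDoubling θ r) (j k : ℕ) {ξ : E}
    (hξ : ξ ∈ ball (0 : E) r) : ‖ξ - renormFrom θ j k ξ‖ ≤ (1 / 2) ^ (k + 1) * ‖ξ‖ := by
  have happrox : ‖renormFrom θ j k ξ - renormFrom θ j k 0 - (ξ - 0)‖ ≤ _ * ‖ξ - 0‖ :=
    h.approximatesLinearOn_renormFrom j k ξ hξ 0 (mem_ball_self (pos_of_mem_ball hξ))
  rw [h.renormFrom_zero_right, sub_zero, sub_zero, norm_sub_rev] at happrox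
  exact_mod_cast happrox

theorem dist_renormFrom_succ_le (h : IsNearlyDoubling θ r) (j k : ℕ) {ξ : E}
    (hξ : ξ ∈ ball (0 : E) (r / 2)) :
    dist (renormFrom θ j k ξ) (renormFrom θ (j + 1) k ξ) ≤ r / 2 * (1 / 2) ^ j := by
  have hr : 0 < r := by linarith [pos_of_mem_ball hξ]
  rw [mem_ball_zero_iff] at hξ
  have hpow (i : ℕ) : ((1 : ℝ) / 2) ^ i ≤ 1 := pow_le_one₀ (by norm_num) (by norm_num)
  set x := (1 / 2 : ℂ) ^ j • ξ
  have hx : ‖x‖ = (1 / 2) ^ j * ‖ξ‖ := norm_half_pow_smul j ξ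
  set η := (2 : ℂ) ^ j • renormFrom θ 1 (k + j) x
  have hcancel (v : E) : (1 / 2 : ℂ) ^ j • (2 : ℂ) ^ j • v = v := by
    rw [smul_smul, ← mul_pow]
    norm_num
  have hsucc : renormFrom θ (j + 1) k ξ = renormFrom θ j k η := by
    rw [renormFrom_add]
    exact congrArg (compFrom θ j k) (hcancel _).symm
  have hη : ‖ξ - η‖ ≤ (1 / 2) ^ (j + 1) * ‖ξ‖ := by
    have hscale : (1 / 2 : ℂ) ^ j • (ξ - η) = x - renormFrom θ 1 (k + j) x := by
      rw [smul_sub, hcancel]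
    have hdiff := h.norm_renormFrom_sub_self_le 1 (k + j)
      (mem_ball_zero_iff.2 (by nlinarith [norm_nonneg ξ, hpow j] : ‖x‖ < r))
    rw [← hscale, norm_half_pow_smul, hx, mul_left_comm] at hdiff
    refine (le_of_mul_le_mul_left hdiff (by positivity)).trans ?_
    gcongr ?_ * _
    exact pow_le_pow_of_le_one (by norm_num) (by norm_num) (by lia)
  have hη_mem : ‖η‖ < r := by nlinarith [norm_le_insert ξ η, norm_nonneg ξ, hpow (j + 1)]
  have hlip := norm_sub_le_of_approximatesLinearOn_one (h.approximatesLinearOn_renormFrom j k)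
    (mem_ball_zero_iff.2 (by linarith : ‖ξ‖ < r)) (mem_ball_zero_iff.2 hη_mem)
  rw [hsucc, dist_eq_norm]
  calc ‖renormFrom θ j k ξ - renormFrom θ j k η‖
      ≤ (1 + (1 / 2) ^ (k + 1)) * ‖ξ - η‖ := by exact_mod_cast hlip
    _ ≤ (1 + 1) * ((1 / 2) ^ (j + 1) * (r / 2)) := by
        gcongr
        · exact hpow _
        · exact hη.trans (by gcongr)
    _ = r / 2 * (1 / 2) ^ j := by ring

theorem tendsto_renormFrom [CompleteSpace E] (h : IsNearlyDoubling θ r) (k : ℕ) {ξ : E}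
    (hξ : ξ ∈ ball (0 : E) (r / 2)) :
    Tendsto (fun j => renormFrom θ j k ξ) atTop (𝓝 (renormLimit θ k ξ)) :=
  (cauchySeq_of_le_geometric _ _ (by norm_num)
    fun j => h.dist_renormFrom_succ_le j k hξ).tendsto_limUnder

theorem dist_renormFrom_renormLimit_le [CompleteSpace E] (h : IsNearlyDoubling θ r) (j k : ℕ)
    {ξ : E} (hξ : ξ ∈ ball (0 : E) (r / 2)) :
    dist (renormFrom θ j k ξ) (renormLimit θ k ξ) ≤ r * (1 / 2) ^ j := by
  refine (dist_le_of_le_geometric_of_tendsto _ _ (by norm_num)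
    (fun j => h.dist_renormFrom_succ_le j k hξ) (h.tendsto_renormFrom k hξ) j).trans_eq ?_
  ring

theorem renormLimit_zero_right (h : IsNearlyDoubling θ r) (k : ℕ) : renormLimit θ k 0 = 0 := by
  simp only [renormLimit, h.renormFrom_zero_right]
  exact tendsto_const_nhds.limUnder_eq

theorem approximatesLinearOn_renormLimit [CompleteSpace E] (h : IsNearlyDoubling θ r) (k : ℕ) :
    ApproximatesLinearOn (renormLimit θ k) (1 : E →L[ℂ] E) (ball 0 (r / 2)) (1 / 2) := by
  intro x hx y hy
  refine le_of_tendsto (((h.tendsto_renormFrom k hx).sub (h.tendsto_renormFrom k hy)).sub_const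
    _).norm (Eventually.of_forall fun j => ?_)
  have hsub : ball (0 : E) (r / 2) ⊆ ball 0 r := ball_subset_ball (by linarith [pos_of_mem_ball hx])
  refine ((h.approximatesLinearOn_renormFrom j k).mono_num ?_) x (hsub hx) y (hsub hy)
  exact pow_le_of_le_one (by simp) (by simp) k.succ_ne_zero

theorem renormLimit_eq_compFrom [CompleteSpace E] (h : IsNearlyDoubling θ r)
    (hθ : ∀ k, Continuous (θ k)) (i k : ℕ) {ξ : E}
    (hξ : (1 / 2 : ℂ) ^ i • ξ ∈ ball (0 : E) (r / 2)) :
    renormLimit θ k ξ = compFrom θ i k (renormLimit θ (k + i) ((1 / 2 : ℂ) ^ i • ξ)) := by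
  refine Tendsto.limUnder_eq ((tendsto_add_atTop_iff_nat i).1 ?_)
  refine (((continuous_compFrom hθ i k).tendsto _).comp (h.tendsto_renormFrom (k + i) hξ)).congr
    fun j => ?_
  rw [add_comm j i, renormFrom_add]
  rfl

theorem injective_renormLimit [CompleteSpace E] (h : IsNearlyDoubling θ r) (hr : 0 < r)
    (hθ : ∀ k, Continuous (θ k)) (hinj : ∀ k, Function.Injective (θ k)) :
    Function.Injective (renormLimit θ 0) := by
  intro ξ ξ' heq
  obtain ⟨i, hi, hi'⟩ := ((eventually_norm_half_pow_smul_lt ξ (half_pos hr)).and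
    (eventually_norm_half_pow_smul_lt ξ' (half_pos hr))).exists
  rw [← mem_ball_zero_iff] at hi hi'
  rw [h.renormLimit_eq_compFrom hθ i 0 hi, h.renormLimit_eq_compFrom hθ i 0 hi'] at heq
  have happrox := h.approximatesLinearOn_renormLimit (0 + i) _ hi _ hi'
  rw [injective_compFrom hinj i 0 heq, sub_self, zero_sub, norm_neg] at happrox
  have hnorm : ‖(1 / 2 : ℂ) ^ i • ξ - (1 / 2 : ℂ) ^ i • ξ'‖ = 0 := by
    refine le_antisymm ?_ (norm_nonneg _)
    norm_num at happrox
    linarith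
  exact smul_right_injective E (pow_ne_zero i (by norm_num)) (norm_sub_eq_zero_iff.1 hnorm)

theorem renormLimit_notMem [CompleteSpace E] (h : IsNearlyDoubling θ r) (hr : 0 < r)
    (hθ : ∀ k, Continuous (θ k)) {Φ : ℕ → E → E}
    (hinv : ∀ k, Function.LeftInverse (Φ k) (θ k)) {B : Set E} {δ : ℝ} (hδ : 0 ≤ δ)
    (hΦ : ∀ k, ∀ b ∈ B, ∀ w, dist w b ≤ δ → dist (Φ k w) w ≤ δ * (1 / 2) ^ (k + 1))
    (hsep : ∀ b ∈ B, ∀ w, dist w b ≤ δ → r ≤ ‖w‖) (ξ : E) : renormLimit θ 0 ξ ∉ B := by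
  intro hmem
  obtain ⟨i, hi⟩ := (eventually_norm_half_pow_smul_lt ξ (half_pos hr)).exists
  have hball := mem_ball_zero_iff.2 hi
  rw [h.renormLimit_eq_compFrom hθ i 0 hball] at hmem
  obtain ⟨b, hb, hdist⟩ := exists_dist_le_of_compFrom_mem hinv hδ hΦ i hmem
  have hle := norm_sub_le_of_approximatesLinearOn_one
    (h.approximatesLinearOn_renormLimit (0 + i)) hball (mem_ball_self (half_pos hr))
  rw [h.renormLimit_zero_right, sub_zero, sub_zero] at hle
  have hsep' := hsep b hb _ hdist
  simp only [zero_add] at hle hsep'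
  norm_num at hle
  linarith

end IsNearlyDoubling
end Renormalization

section FatouBieberbachFamily
open Filter Topology

variable {Z E : Type*} [NormedAddCommGroup Z] [NormedSpace ℂ Z]
  [NormedAddCommGroup E] [NormedSpace ℂ E] {V : Set Z} {θ : ℕ → Z → E → E} {r : ℝ}

theorem differentiableOn_compFrom
    (hθ : ∀ k, DifferentiableOn ℂ (fun p : Z × E => θ k p.1 p.2) (V ×ˢ univ)) (i k : ℕ) :
    DifferentiableOn ℂ (fun p : Z × E => compFrom (fun k => θ k p.1) i k p.2) (V ×ˢ univ) := by
  induction i generalizing k with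
  | zero => exact differentiableOn_snd
  | succ i ih =>
    exact (hθ k).comp (differentiableOn_fst.prodMk (ih (k + 1))) fun p hp => ⟨hp.1, mem_univ _⟩

theorem differentiableOn_renormFrom
    (hθ : ∀ k, DifferentiableOn ℂ (fun p : Z × E => θ k p.1 p.2) (V ×ˢ univ)) (j k : ℕ) :
    DifferentiableOn ℂ (fun p : Z × E => renormFrom (fun k => θ k p.1) j k p.2) (V ×ˢ univ) :=
  (differentiableOn_compFrom hθ j k).comp
    (differentiableOn_fst.prodMk (differentiableOn_snd.const_smul _)) fun _ hp => ⟨hp.1, mem_univ _⟩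

theorem continuous_of_differentiableOn_prod_univ {f : Z × E → E}
    (hf : DifferentiableOn ℂ f (V ×ˢ univ)) {z : Z} (hz : z ∈ V) :
    Continuous fun w => f (z, w) :=
  continuousOn_univ.1 <| hf.continuousOn.comp (by fun_prop) fun _ _ => ⟨hz, mem_univ _⟩

variable [CompleteSpace E]

theorem differentiableOn_renormLimit_ball (hV : IsOpen V)
    (hθ : ∀ k, DifferentiableOn ℂ (fun p : Z × E => θ k p.1 p.2) (V ×ˢ univ))
    (h : ∀ z ∈ V, IsNearlyDoubling (fun k => θ k z) r) (k : ℕ) :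
    DifferentiableOn ℂ (fun p : Z × E => renormLimit (fun k => θ k p.1) k p.2)
      (V ×ˢ ball 0 (r / 2)) := by
  refine differentiableOn_of_tendstoUniformlyOn (l := atTop) (hV.prod isOpen_ball)
    (fun j => (differentiableOn_renormFrom hθ j k).mono (prod_mono_right (subset_univ _))) ?_
  refine Metric.tendstoUniformlyOn_iff.2 fun ε hε => ?_
  have hgeom : Tendsto (fun j : ℕ => r * (1 / 2) ^ j) atTop (𝓝 0) := by
    simpa using (tendsto_pow_atTop_nhds_zero_of_lt_one (r := (1 / 2 : ℝ)) (by norm_num)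
      (by norm_num)).const_mul r
  filter_upwards [hgeom.eventually (gt_mem_nhds hε)] with j hj p hp
  rw [dist_comm]
  exact ((h p.1 hp.1).dist_renormFrom_renormLimit_le j k hp.2).trans_lt hj

theorem differentiableOn_renormLimit (hV : IsOpen V) (hr : 0 < r)
    (hθ : ∀ k, DifferentiableOn ℂ (fun p : Z × E => θ k p.1 p.2) (V ×ˢ univ))
    (h : ∀ z ∈ V, IsNearlyDoubling (fun k => θ k z) r) (k : ℕ) :
    DifferentiableOn ℂ (fun p : Z × E => renormLimit (fun k => θ k p.1) k p.2) (V ×ˢ univ) := by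
  rintro ⟨z, ξ⟩ ⟨hz, -⟩
  obtain ⟨i, hi⟩ := (eventually_norm_half_pow_smul_lt ξ (half_pos hr)).exists
  set U : Set (Z × E) := V ×ˢ ((fun ζ : E => (1 / 2 : ℂ) ^ i • ζ) ⁻¹' ball 0 (r / 2))
  have hU : U ∈ 𝓝 (z, ξ) := by
    refine (hV.prod (isOpen_ball.preimage (by fun_prop))).mem_nhds ⟨hz, ?_⟩
    exact mem_ball_zero_iff.2 hi
  have hinner : DifferentiableOn ℂ
      (fun p : Z × E => renormLimit (fun k => θ k p.1) (k + i) ((1 / 2 : ℂ) ^ i • p.2)) U :=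
    (differentiableOn_renormLimit_ball hV hθ h (k + i)).comp
      (differentiableOn_fst.prodMk (differentiableOn_snd.const_smul _)) fun _ hp => hp
  have hcomp := (differentiableOn_compFrom hθ i k).comp (differentiableOn_fst.prodMk hinner)
    fun _ hp => ⟨hp.1, mem_univ _⟩
  refine ((hcomp.congr fun p hp => ?_).differentiableAt hU).differentiableWithinAt
  exact (h p.1 hp.1).renormLimit_eq_compFrom
    (fun k => continuous_of_differentiableOn_prod_univ (hθ k) hp.1) i k hp.2

end FatouBieberbachFamily

section Isotopies
open Filter Topology

variable {Z E : Type*} [NormedAddCommGroup Z] [NormedSpace ℂ Z]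
  [NormedAddCommGroup E] [NormedSpace ℂ E] {V : Set Z}

/-- A holomorphic family `Φ t z` of automorphisms of `E` fixing `0`, with inverses `Ψ t z`, which
starts at the identity with velocity `X`. No group law in `t` is imposed, so that the composition
of two such families is again one. -/
structure IsTangentIsotopy (V : Set Z) (X : Z → E → E) (Φ Ψ : ℂ → Z → E → E) : Prop where
  differentiableOn :
    DifferentiableOn ℂ (fun p : ℂ × Z × E => Φ p.1 p.2.1 p.2.2) (univ ×ˢ V ×ˢ univ)
  differentiableOn_inv :
    DifferentiableOn ℂ (fun p : ℂ × Z × E => Ψ p.1 p.2.1 p.2.2) (univ ×ˢ V ×ˢ univ)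
  left_inv : ∀ z ∈ V, ∀ t, Function.LeftInverse (Ψ t z) (Φ t z)
  right_inv : ∀ z ∈ V, ∀ t, Function.RightInverse (Ψ t z) (Φ t z)
  map_zero : ∀ z ∈ V, ∀ t, Φ t z 0 = 0
  zero_apply : ∀ z ∈ V, ∀ w, Φ 0 z w = w
  hasDerivAt : ∀ z ∈ V, ∀ w, HasDerivAt (fun t => Φ t z w) (X z w) 0

/-- A fibrewise vector field which is the initial velocity of a holomorphic family of
automorphisms. -/
def HasTangentIsotopy (V : Set Z) (X : Z → E → E) : Prop :=
  ∃ Φ Ψ, IsTangentIsotopy V X Φ Ψ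

theorem hasDerivAt_comp_of_zero_apply (hV : IsOpen V) {Φ : ℂ → Z → E → E}
    (hΦ : DifferentiableOn ℂ (fun p : ℂ × Z × E => Φ p.1 p.2.1 p.2.2) (univ ×ˢ V ×ˢ univ))
    {z : Z} (hz : z ∈ V) (hid : ∀ w, Φ 0 z w = w) {g : ℂ → E} {g' X : E} (hg : HasDerivAt g g' 0)
    (hX : HasDerivAt (fun t => Φ t z (g 0)) X 0) :
    HasDerivAt (fun t => Φ t z (g t)) (X + g') 0 := by
  have hD := (hΦ.differentiableAt ((isOpen_univ.prod (hV.prod isOpen_univ)).mem_nhds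
    (show ((0 : ℂ), z, g 0) ∈ _ from ⟨mem_univ _, hz, mem_univ _⟩))).hasFDerivAt
  set D := fderiv ℂ (fun p : ℂ × Z × E => Φ p.1 p.2.1 p.2.2) ((0 : ℂ), z, g 0)
  have hjoint : HasDerivAt (fun t => Φ t z (g t)) (D (1, 0, g')) 0 :=
    hD.comp_hasDerivAt (0 : ℂ) (f := fun t => (t, z, g t))
      ((hasDerivAt_id _).prodMk ((hasDerivAt_const _ z).prodMk hg))
  have htime : HasDerivAt (fun t => Φ t z (g 0)) (D (1, 0, 0)) 0 :=
    hD.comp_hasDerivAt (0 : ℂ) (f := fun t => (t, z, g 0))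
      ((hasDerivAt_id _).prodMk ((hasDerivAt_const _ z).prodMk (hasDerivAt_const _ _)))
  have hspace : HasDerivAt (fun t => Φ 0 z (g t)) (D (0, 0, g')) 0 :=
    hD.comp_hasDerivAt (0 : ℂ) (f := fun t => ((0 : ℂ), z, g t))
      ((hasDerivAt_const _ _).prodMk ((hasDerivAt_const _ z).prodMk hg))
  simp only [hid] at hspace
  rw [hX.unique htime, hg.unique hspace, ← map_add]
  simpa using hjoint

theorem differentiable_time_of_differentiableOn {Φ : ℂ → Z → E → E}
    (hΦ : DifferentiableOn ℂ (fun p : ℂ × Z × E => Φ p.1 p.2.1 p.2.2) (univ ×ˢ V ×ˢ univ))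
    {z : Z} (hz : z ∈ V) (w : E) : Differentiable ℂ fun t => Φ t z w :=
  differentiableOn_univ.1 <| hΦ.comp (f := fun t : ℂ => (t, z, w)) (by fun_prop)
    fun _ _ => ⟨mem_univ _, hz, mem_univ _⟩

theorem differentiableOn_comp_family {Φ Ψ : ℂ → Z → E → E}
    (hΦ : DifferentiableOn ℂ (fun p : ℂ × Z × E => Φ p.1 p.2.1 p.2.2) (univ ×ˢ V ×ˢ univ))
    (hΨ : DifferentiableOn ℂ (fun p : ℂ × Z × E => Ψ p.1 p.2.1 p.2.2) (univ ×ˢ V ×ˢ univ)) :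
    DifferentiableOn ℂ (fun p : ℂ × Z × E => Φ p.1 p.2.1 (Ψ p.1 p.2.1 p.2.2))
      (univ ×ˢ V ×ˢ univ) :=
  hΦ.comp (f := fun p : ℂ × Z × E => (p.1, p.2.1, Ψ p.1 p.2.1 p.2.2))
    (differentiableOn_fst.prodMk
      ((differentiable_fst.comp differentiable_snd).differentiableOn.prodMk hΨ))
    fun _ hp => ⟨mem_univ _, hp.2.1, mem_univ _⟩

theorem IsTangentIsotopy.comp (hV : IsOpen V) {X Y : Z → E → E} {Φ Ψ Φ' Ψ' : ℂ → Z → E → E}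
    (h : IsTangentIsotopy V X Φ Ψ) (h' : IsTangentIsotopy V Y Φ' Ψ') :
    IsTangentIsotopy V (X + Y) (fun t z w => Φ t z (Φ' t z w)) fun t z w => Ψ' t z (Ψ t z w) where
  differentiableOn := differentiableOn_comp_family h.differentiableOn h'.differentiableOn
  differentiableOn_inv :=
    differentiableOn_comp_family h'.differentiableOn_inv h.differentiableOn_inv
  left_inv z hz t := (h.left_inv z hz t).comp (h'.left_inv z hz t)
  right_inv z hz t := (h.right_inv z hz t).comp (h'.right_inv z hz t)
  map_zero z hz t := by rw [h'.map_zero z hz, h.map_zero z hz]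
  zero_apply z hz w := by rw [h'.zero_apply z hz, h.zero_apply z hz]
  hasDerivAt z hz w := hasDerivAt_comp_of_zero_apply hV h.differentiableOn hz (h.zero_apply z hz)
    (h'.hasDerivAt z hz w) (by rw [h'.zero_apply z hz]; exact h.hasDerivAt z hz w)

theorem IsTangentIsotopy.symm (hV : IsOpen V) {X : Z → E → E} {Φ Ψ : ℂ → Z → E → E}
    (h : IsTangentIsotopy V X Φ Ψ) : IsTangentIsotopy V (-X) Ψ Φ where
  differentiableOn := h.differentiableOn_inv
  differentiableOn_inv := h.differentiableOn
  left_inv := h.right_inv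
  right_inv := h.left_inv
  map_zero z hz t := by simpa only [h.map_zero z hz] using h.left_inv z hz t 0
  zero_apply z hz w := by simpa only [h.zero_apply z hz] using h.left_inv z hz 0 w
  hasDerivAt z hz w := by
    have hid : Ψ 0 z w = w := by simpa only [h.zero_apply z hz] using h.left_inv z hz 0 w
    have hΨ := (differentiable_time_of_differentiableOn h.differentiableOn_inv hz w 0).hasDerivAt
    have hcomp := hasDerivAt_comp_of_zero_apply hV h.differentiableOn hz (h.zero_apply z hz) hΨ
      (h.hasDerivAt z hz _)
    simp only [h.right_inv z hz _ w, hid] at hcomp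
    rwa [eq_neg_of_add_eq_zero_right (hcomp.unique (hasDerivAt_const 0 w))] at hΨ

theorem HasTangentIsotopy.add (hV : IsOpen V) {X Y : Z → E → E} (hX : HasTangentIsotopy V X)
    (hY : HasTangentIsotopy V Y) : HasTangentIsotopy V (X + Y) :=
  let ⟨_, _, h⟩ := hX
  let ⟨_, _, h'⟩ := hY
  ⟨_, _, h.comp hV h'⟩

theorem HasTangentIsotopy.zero (V : Set Z) : HasTangentIsotopy V (0 : Z → E → E) :=
  ⟨fun _ _ => id, fun _ _ => id, by simp only [id]; fun_prop, by simp only [id]; fun_prop,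
    fun _ _ _ _ => rfl, fun _ _ _ _ => rfl, fun _ _ _ => rfl, fun _ _ _ => rfl,
    fun _ _ _ => hasDerivAt_const _ _⟩

theorem hasTangentIsotopy_of_shear {v : E} {σ : ℂ → Z → E → ℂ} {ξ : Z → E → ℂ}
    (hσ : DifferentiableOn ℂ (fun p : ℂ × Z × E => σ p.1 p.2.1 p.2.2) (univ ×ˢ V ×ˢ univ))
    (hcancel : ∀ t z w, σ t z w + σ (-t) z (w + σ t z w • v) = 0) (hzero : ∀ t z, σ t z 0 = 0)
    (hid : ∀ z w, σ 0 z w = 0) (hξ : ∀ z w, HasDerivAt (fun t => σ t z w) (ξ z w) 0) :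
    HasTangentIsotopy V fun z w => ξ z w • v := by
  have hneg : DifferentiableOn ℂ (fun p : ℂ × Z × E => σ (-p.1) p.2.1 p.2.2)
      (univ ×ˢ V ×ˢ univ) :=
    hσ.comp (f := fun p : ℂ × Z × E => (-p.1, p.2.1, p.2.2)) (by fun_prop)
      fun _ hp => ⟨mem_univ _, hp.2⟩
  have hinv (t : ℂ) (z : Z) (w : E) :
      w + σ t z w • v + σ (-t) z (w + σ t z w • v) • v = w := by
    rw [add_assoc, ← add_smul, hcancel, zero_smul, add_zero]
  refine ⟨fun t z w => w + σ t z w • v, fun t z w => w + σ (-t) z w • v, by fun_prop,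
    (differentiable_snd.comp differentiable_snd).differentiableOn.add (hneg.smul_const v),
    fun z _ t w => hinv t z w, fun z _ t w => by simpa using hinv (-t) z w, ?_, ?_, ?_⟩
  · simp [hzero]
  · simp [hid]
  · exact fun z _ w => ((hξ z w).smul_const v).const_add w

/-- The vector fields all of whose multiples by holomorphic functions of the parameter are initial
velocities of holomorphic families of automorphisms. -/
def isotopyFields (E : Type*) [NormedAddCommGroup E] [NormedSpace ℂ E] {V : Set Z}
    (hV : IsOpen V) : Submodule ℂ (Z → E → E) where
  carrier := {X | ∀ c : Z → ℂ, DifferentiableOn ℂ c V →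
    HasTangentIsotopy V (fun z w => c z • X z w)}
  zero_mem' c _ := by simpa using! HasTangentIsotopy.zero V
  add_mem' hX hY c hc := by simpa using! (hX c hc).add hV (hY c hc)
  smul_mem' a X hX c hc := by simpa [smul_smul] using hX (fun z => c z * a) (hc.mul_const a)

variable {hV : IsOpen V}

theorem hasTangentIsotopy_of_mem_isotopyFields {X : Z → E → E} (hX : X ∈ isotopyFields E hV) :
    HasTangentIsotopy V X := by
  simpa using hX 1 (differentiableOn_const 1)

theorem smul_mem_isotopyFields {X : Z → E → E} (hX : X ∈ isotopyFields E hV) {c : Z → ℂ}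
    (hc : DifferentiableOn ℂ c V) : (fun z w => c z • X z w) ∈ isotopyFields E hV := fun b hb => by
  simpa [smul_smul] using hX (fun z => b z * c z) (hb.mul hc)

theorem differentiableOn_param_mul {c : Z → ℂ} (hc : DifferentiableOn ℂ c V) {q : E → ℂ}
    (hq : Differentiable ℂ q) :
    DifferentiableOn ℂ (fun p : ℂ × Z × E => c p.2.1 * q p.2.2) (univ ×ˢ V ×ˢ univ) :=
  (hc.comp (f := fun p : ℂ × Z × E => p.2.1) (by fun_prop) fun _ hp => hp.2.1).mul (by fun_prop)

theorem shear_mem_isotopyFields {q : E → ℂ} (hq : Differentiable ℂ q) {v : E}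
    (hqv : ∀ (w : E) (s : ℂ), q (w + s • v) = q w) (hq0 : q 0 = 0) :
    (fun (_ : Z) w => q w • v) ∈ isotopyFields E hV := by
  intro c hc
  have hσ := (differentiableOn_fst (s := univ ×ˢ V ×ˢ univ)).mul (differentiableOn_param_mul hc hq)
  have hξ (z : Z) (w : E) : HasDerivAt (fun t : ℂ => t * (c z * q w)) (c z * q w) 0 :=
    hasDerivAt_mul_const _
  simpa only [smul_smul] using hasTangentIsotopy_of_shear (v := v) hσ
    (fun t z w => by rw [hqv]; ring) (by simp [hq0]) (by simp) hξ

theorem overshear_mem_isotopyFields {q : E → ℂ} (hq : Differentiable ℂ q) {v : E}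
    (hqv : ∀ (w : E) (s : ℂ), q (w + s • v) = q w) (μ : E →L[ℂ] ℂ) :
    (fun (_ : Z) w => (q w * μ w) • v) ∈ isotopyFields E hV := by
  by_cases hμ : μ v = 0
  · exact shear_mem_isotopyFields (q := fun w => q w * μ w) (by fun_prop)
      (fun w s => by simp [hqv, hμ]) (by simp)
  intro c hc
  set σ : ℂ → Z → E → ℂ := fun t z w => (Complex.exp (t * (c z * q w * μ v)) - 1) * (μ w / μ v)
  have hcq := differentiableOn_param_mul hc hq
  have hexp : DifferentiableOn ℂ
      (fun p : ℂ × Z × E => Complex.exp (p.1 * (c p.2.1 * q p.2.2 * μ v)))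
      (univ ×ˢ V ×ˢ univ) := (differentiableOn_fst.mul (hcq.mul_const _)).cexp
  have hσ : DifferentiableOn ℂ (fun p : ℂ × Z × E => σ p.1 p.2.1 p.2.2) (univ ×ˢ V ×ˢ univ) :=
    (hexp.sub_const 1).mul (by fun_prop)
  have hcancel (t : ℂ) (z : Z) (w : E) : σ t z w + σ (-t) z (w + σ t z w • v) = 0 := by
    simp only [σ, hqv, map_add, map_smul, smul_eq_mul, neg_mul, Complex.exp_neg]
    have := Complex.exp_ne_zero (t * (c z * q w * μ v))
    generalize Complex.exp (t * (c z * q w * μ v)) = e at *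
    field_simp
    ring
  have hξ (z : Z) (w : E) : HasDerivAt (fun t => σ t z w) (c z * (q w * μ w)) 0 := by
    refine (((hasDerivAt_mul_const (c z * q w * μ v)).cexp.sub_const 1).mul_const _).congr_deriv ?_
    rw [zero_mul, Complex.exp_zero]
    field_simp
  simpa only [smul_smul] using
    hasTangentIsotopy_of_shear hσ hcancel (by simp [σ]) (by simp [σ]) hξ

end Isotopies

section PolynomialFields

theorem coeff_equivPolynomial_map {R M : Type*} [CommRing R] [AddCommGroup M] [Module R M]
    (φ : M →ₗ[R] R) (p : PolynomialModule R M) (j : ℕ) :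
    (PolynomialModule.equivPolynomial (PolynomialModule.map R φ p)).coeff j = φ (p.coeff j) := by
  induction p using PolynomialModule.induction_linear with
  | zero => simp
  | add p q hp hq => simp [hp, hq]
  | single i m =>
    simp [Polynomial.coeff_monomial, Finsupp.single_apply, apply_ite φ]

theorem coeff_mem_of_forall_eval_mem {𝕜 M : Type*} [Field 𝕜] [Infinite 𝕜] [AddCommGroup M]
    [Module 𝕜 M] {W : Submodule 𝕜 M} {p : PolynomialModule 𝕜 M}
    (hp : ∀ s, PolynomialModule.eval s p ∈ W) (j : ℕ) : p.coeff j ∈ W := by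
  rw [← Submodule.Quotient.mk_eq_zero, ← Module.forall_dual_apply_eq_zero_iff 𝕜]
  intro φ
  have hzero : PolynomialModule.equivPolynomial (PolynomialModule.map 𝕜 (φ ∘ₗ W.mkQ) p) = 0 :=
    Polynomial.funext fun s => by
      have heval := PolynomialModule.eval_map 𝕜 (φ ∘ₗ W.mkQ) p s
      have hmk := (Submodule.Quotient.mk_eq_zero W).2 (hp s)
      rw [Algebra.algebraMap_self_apply, LinearMap.comp_apply, Submodule.mkQ_apply, hmk,
        map_zero] at heval
      rw [← Polynomial.coe_aeval_eq_eval, PolynomialModule.aeval_equivPolynomial,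
        Algebra.linearMap_self, PolynomialModule.eval_map', heval]
      simp
  simpa [hzero] using! (coeff_equivPolynomial_map (φ ∘ₗ W.mkQ) p j).symm

variable {Z E : Type*} [NormedAddCommGroup Z] [NormedSpace ℂ Z]
  [NormedAddCommGroup E] [NormedSpace ℂ E] {V : Set Z} {hV : IsOpen V}

theorem pow_mul_smul_mem_isotopyFields {l : E →L[ℂ] ℂ} {v : E} (hl : l v = 0) (μ : E →L[ℂ] ℂ)
    (d : ℕ) : (fun (_ : Z) w => (l w ^ d * μ w) • v) ∈ isotopyFields E hV :=
  overshear_mem_isotopyFields (q := fun w => l w ^ d) (by fun_prop) (fun w s => by simp [hl]) μ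

theorem pow_smul_apply_mem_isotopyFields [FiniteDimensional ℂ E] {l : E →L[ℂ] ℂ} {P : E →ₗ[ℂ] E}
    (hP : ∀ w, l (P w) = 0) (d : ℕ) : (fun (_ : Z) w => l w ^ d • P w) ∈ isotopyFields E hV := by
  set b := Module.finBasis ℂ E
  have hsum : (fun (_ : Z) w => l w ^ d • P w) = ∑ i, fun (_ : Z) w =>
      (l w ^ d * LinearMap.toContinuousLinearMap (b.coord i) w) • P (b i) := by
    ext z w
    simp only [Finset.sum_apply, LinearMap.coe_toContinuousLinearMap', Module.Basis.coord_apply,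
      mul_smul, ← Finset.smul_sum, ← map_smul, ← map_sum, b.sum_repr]
  rw [hsum]
  exact Submodule.sum_mem _ fun i _ => pow_mul_smul_mem_isotopyFields (hP _) _ d

theorem exists_apply_eq_zero_and_dual_apply_eq_one (hE : 1 < Module.finrank ℂ E) {l : E →L[ℂ] ℂ}
    {v : E} (hv : l v = 1) : ∃ (u : E) (μ : E →L[ℂ] ℂ), l u = 0 ∧ μ u = 1 ∧ μ v = 0 := by
  have : FiniteDimensional ℂ E := Module.finite_of_finrank_pos (by omega)
  obtain ⟨u, hlu, hu⟩ := (Submodule.ne_bot_iff _).1 <|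
    LinearMap.ker_ne_bot_of_finrank_lt (f := (l : E →ₗ[ℂ] ℂ)) (by simpa using hE)
  obtain ⟨m, hm⟩ := SeparatingDual.exists_eq_one (R := ℂ) hu
  have hlu' : l u = 0 := hlu
  exact ⟨u, m - m v • l, hlu', by simp [hlu', hm], by simp [hv]⟩

-- The field is recovered from the coefficient of `s` in the shears along `s • v - u`, a direction
-- annihilated by `l + s • μ`.
theorem pow_succ_smul_mem_isotopyFields (hE : 1 < Module.finrank ℂ E) {l : E →L[ℂ] ℂ} {v : E}
    (hv : l v = 1) (d : ℕ) : (fun (_ : Z) w => l w ^ (d + 1) • v) ∈ isotopyFields E hV := by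
  obtain ⟨u, μ, hlu, hμu, hμv⟩ := exists_apply_eq_zero_and_dual_apply_eq_one hE hv
  set A : ℕ → E → ℂ := fun j w => μ w ^ j * l w ^ (d + 1 - j) * (d + 1).choose j with hA
  set p : PolynomialModule ℂ (Z → E → E) := ∑ j ∈ Finset.range (d + 2),
    (.single ℂ (j + 1) (fun _ w => A j w • v) + .single ℂ j (fun _ w => A j w • -u)) with hp
  have hshear (s : ℂ) : PolynomialModule.eval s p ∈ isotopyFields E hV := by
    convert! shear_mem_isotopyFields (v := s • v - u) (q := fun w => (s * μ w + l w) ^ (d + 1))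
      (by fun_prop) (fun w a => by simp [hv, hlu, hμu, hμv]; ring) (by simp) using 1
    ext z w
    simp only [hp, map_sum, map_add, PolynomialModule.eval_single, Finset.sum_apply, Pi.add_apply,
      Pi.smul_apply, add_pow, Finset.sum_smul, hA]
    exact Finset.sum_congr rfl fun j _ => by module
  have hcoeff : p.coeff 1 = fun _ w => A 0 w • v + A 1 w • -u := by
    simp only [hp, PolynomialModule.coeff_sum, Finsupp.finsetSum_apply, PolynomialModule.coeff_add,
      Finsupp.add_apply, PolynomialModule.coeff_single, Finsupp.single_apply,
      Finset.sum_add_distrib, Nat.add_eq_right, Finset.sum_ite_eq', Finset.mem_range]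
    ext z w
    simp
  have hover := Submodule.smul_mem _ (d + 1 : ℂ)
    (pow_mul_smul_mem_isotopyFields (Z := Z) (hV := hV) hlu μ d)
  convert! Submodule.add_mem _ (hcoeff ▸ coeff_mem_of_forall_eval_mem hshear 1) hover using 1
  ext z w
  simp [hA]
  module

theorem pow_smul_id_mem_isotopyFields (hE : 1 < Module.finrank ℂ E) (l : E →L[ℂ] ℂ) (d : ℕ) :
    (fun (_ : Z) w => l w ^ d • w) ∈ isotopyFields E hV := by
  have : FiniteDimensional ℂ E := Module.finite_of_finrank_pos (by omega)
  by_cases hl : l = 0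
  · exact pow_smul_apply_mem_isotopyFields (P := LinearMap.id) (by simp [hl]) d
  obtain ⟨x, hx⟩ := DFunLike.ne_iff.1 hl
  have hv : l ((l x)⁻¹ • x) = 1 := by simpa using inv_mul_cancel₀ hx
  have hker := pow_smul_apply_mem_isotopyFields (Z := Z) (hV := hV) (l := l)
    (P := LinearMap.id - (l : E →ₗ[ℂ] ℂ).smulRight ((l x)⁻¹ • x)) (by simp [hv]) d
  convert! Submodule.add_mem _ hker (pow_succ_smul_mem_isotopyFields hE hv d) using 1
  ext z w
  simp [smul_sub, smul_smul, pow_succ, mul_assoc]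

/-- Polynomials in the fibre variable whose coefficients are holomorphic functions of the
parameter. -/
def fibrePolynomials (E : Type*) [NormedAddCommGroup E] [NormedSpace ℂ E] (V : Set Z) :
    Subalgebra ℂ (Z → E → ℂ) :=
  Algebra.adjoin ℂ ({P | ∃ c : Z → ℂ, DifferentiableOn ℂ c V ∧ P = fun z _ => c z} ∪
    {P | ∃ l : E →L[ℂ] ℂ, P = fun _ w => l w})

/-- Linear combinations of powers of linear forms in the fibre variable, with coefficients which are
holomorphic functions of the parameter. These turn out to be all the fibrewise polynomials. -/
def ridgePolynomials (E : Type*) [NormedAddCommGroup E] [NormedSpace ℂ E] (V : Set Z) :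
    Submodule ℂ (Z → E → ℂ) :=
  Submodule.span ℂ {P | ∃ c : Z → ℂ, DifferentiableOn ℂ c V ∧ ∃ (l : E →L[ℂ] ℂ) (d : ℕ),
    P = fun z w => c z * l w ^ d}

-- Up to the factor `d + 1`, the product is the coefficient of `s` in `c * (l + s • l') ^ (d + 1)`.
theorem apply_mul_mem_ridgePolynomials {c : Z → ℂ} (hc : DifferentiableOn ℂ c V)
    (l l' : E →L[ℂ] ℂ) (d : ℕ) : (fun z w => l' w * (c z * l w ^ d)) ∈ ridgePolynomials E V := by
  set p : PolynomialModule ℂ (Z → E → ℂ) := ∑ j ∈ Finset.range (d + 2),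
    .single ℂ j fun z w => c z * (l' w ^ j * l w ^ (d + 1 - j) * (d + 1).choose j) with hp
  have hridge (s : ℂ) : PolynomialModule.eval s p ∈ ridgePolynomials E V := by
    refine Submodule.subset_span ⟨c, hc, s • l' + l, d + 1, ?_⟩
    ext z w
    simp only [hp, map_sum, PolynomialModule.eval_single, Finset.sum_apply, Pi.smul_apply,
      smul_eq_mul, add_apply, smul_apply, add_pow, Finset.mul_sum]
    exact Finset.sum_congr rfl fun j _ => by ring
  have hcoeff : p.coeff 1 = ((d : ℂ) + 1) • fun z w => l' w * (c z * l w ^ d) := by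
    have hlt : 1 < d + 2 := by omega
    simp only [hp, PolynomialModule.coeff_sum, Finsupp.finsetSum_apply,
      PolynomialModule.coeff_single, Finsupp.single_apply, Finset.sum_ite_eq', Finset.mem_range,
      if_pos hlt]
    ext z w
    simp
    ring
  have hd : (d : ℂ) + 1 ≠ 0 := Nat.cast_add_one_ne_zero d
  exact ((ridgePolynomials E V).smul_mem_iff hd).1 (hcoeff ▸ coeff_mem_of_forall_eval_mem hridge 1)

theorem mul_mem_ridgePolynomials {P Q : Z → E → ℂ} (hP : P ∈ fibrePolynomials E V)
    (hQ : Q ∈ ridgePolynomials E V) : P * Q ∈ ridgePolynomials E V := by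
  induction hP using Algebra.adjoin_induction generalizing Q with
  | mem P hP =>
    induction hQ using Submodule.span_induction with
    | mem Q hQ =>
      obtain ⟨c, hc, l, d, rfl⟩ := hQ
      rcases hP with ⟨c', hc', rfl⟩ | ⟨l', rfl⟩
      · exact Submodule.subset_span ⟨c' * c, hc'.mul hc, l, d, by ext; simp [mul_assoc]⟩
      · exact apply_mul_mem_ridgePolynomials hc l l' d
    | zero => simp
    | add Q Q' _ _ h h' => exact mul_add P Q Q' ▸ Submodule.add_mem _ h h'
    | smul a Q _ h => exact mul_smul_comm a P Q ▸ Submodule.smul_mem _ a h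
  | algebraMap a => exact Algebra.smul_def a Q ▸ Submodule.smul_mem _ a hQ
  | add P P' _ _ h h' => exact add_mul P P' Q ▸ Submodule.add_mem _ (h hQ) (h' hQ)
  | mul P P' _ _ h h' => exact mul_assoc P P' Q ▸ h (h' hQ)

theorem smul_id_mem_isotopyFields_of_mem_ridgePolynomials (hE : 1 < Module.finrank ℂ E)
    {P : Z → E → ℂ} (hP : P ∈ ridgePolynomials E V) :
    (fun z w => P z w • w) ∈ isotopyFields E hV := by
  induction hP using Submodule.span_induction with
  | mem P hP =>
    obtain ⟨c, hc, l, d, rfl⟩ := hP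
    simpa [mul_smul] using
      smul_mem_isotopyFields (pow_smul_id_mem_isotopyFields (hV := hV) hE l d) hc
  | zero => simpa only [Pi.zero_apply, zero_smul] using! (isotopyFields E hV).zero_mem
  | add P Q _ _ h h' => simpa [add_smul] using! Submodule.add_mem _ h h'
  | smul a P _ h =>
    simpa only [Pi.smul_apply, smul_eq_mul, mul_smul] using! Submodule.smul_mem _ a h

theorem smul_id_mem_isotopyFields (hE : 1 < Module.finrank ℂ E) {P : Z → E → ℂ}
    (hP : P ∈ fibrePolynomials E V) : (fun z w => P z w • w) ∈ isotopyFields E hV := by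
  have hone : (1 : Z → E → ℂ) ∈ ridgePolynomials E V :=
    Submodule.subset_span ⟨1, differentiableOn_const 1, 0, 0, by ext; simp⟩
  exact smul_id_mem_isotopyFields_of_mem_ridgePolynomials hE
    (mul_one P ▸ mul_mem_ridgePolynomials hP hone)

theorem coeff_mem_fibrePolynomials {c : Z → ℂ} (hc : DifferentiableOn ℂ c V) :
    (fun z _ => c z) ∈ fibrePolynomials E V :=
  Algebra.subset_adjoin (Or.inl ⟨c, hc, rfl⟩)

theorem linear_mem_fibrePolynomials (l : E →L[ℂ] ℂ) :
    (fun _ w => l w) ∈ fibrePolynomials E V :=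
  Algebra.subset_adjoin (Or.inr ⟨l, rfl⟩)

theorem differentiableOn_of_mem_fibrePolynomials {h : Z → E → ℂ}
    (hh : h ∈ fibrePolynomials E V) :
    DifferentiableOn ℂ (fun p : Z × E => h p.1 p.2) (V ×ˢ univ) := by
  induction hh using Algebra.adjoin_induction with
  | mem h hh =>
    obtain ⟨c, hc, rfl⟩ | ⟨l, rfl⟩ := hh
    · exact hc.comp differentiableOn_fst fun p hp => hp.1
    · fun_prop
  | algebraMap a => exact differentiableOn_const a
  | add h h' _ _ hh hh' => exact hh.add hh'
  | mul h h' _ _ hh hh' => exact hh.mul hh'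

theorem comp_add_mem_fibrePolynomials {h : Z → E → ℂ} (hh : h ∈ fibrePolynomials E V)
    {f : Z → E} (hf : DifferentiableOn ℂ f V) :
    (fun z w => h z (w + f z)) ∈ fibrePolynomials E V := by
  induction hh using Algebra.adjoin_induction with
  | mem h hh =>
    obtain ⟨c, hc, rfl⟩ | ⟨l, rfl⟩ := hh
    · exact coeff_mem_fibrePolynomials hc
    · simp only [map_add]
      exact add_mem (linear_mem_fibrePolynomials l)
        (coeff_mem_fibrePolynomials (l.differentiable.comp_differentiableOn hf))
  | algebraMap a => exact algebraMap_mem _ a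
  | add h h' _ _ hh hh' => exact add_mem hh hh'
  | mul h h' _ _ hh hh' => exact mul_mem hh hh'

end PolynomialFields

section FibrewiseEmbeddings

theorem exists_one_add_pow_eq_two {T : ℝ} (hT : 0 < T) :
    ∃ (m : ℕ) (t : ℝ), 0 < t ∧ t ≤ T ∧ (1 + t) ^ m = 2 ∧ m * t ≤ 1 := by
  obtain ⟨m, hm⟩ := exists_nat_one_div_lt hT
  set t : ℝ := (2 : ℝ) ^ (((m + 1 : ℕ) : ℝ)⁻¹) - 1 with ht
  have ht_pos : 0 < t := sub_pos.2 (Real.one_lt_rpow (by norm_num) (by positivity))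
  have hpow : (1 + t) ^ (m + 1) = 2 := by
    rw [ht, add_sub_cancel, Real.rpow_inv_natCast_pow (by norm_num) (Nat.succ_ne_zero m)]
  have hmt : ((m + 1 : ℕ) : ℝ) * t ≤ 1 := by
    linarith [one_add_mul_le_pow (a := t) (by linarith) (m + 1)]
  refine ⟨m + 1, t, ht_pos, le_trans ?_ hm.le, hpow, hmt⟩
  rw [le_div_iff₀ (by positivity), mul_comm]
  exact_mod_cast hmt

theorem norm_iterate_sub_pow_smul_le {𝕜 E : Type*} [NormedField 𝕜] [SeminormedAddCommGroup E]
    [NormedSpace 𝕜 E] {φ : E → E} {a : 𝕜} {R η : ℝ} (ha : 1 ≤ ‖a‖)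
    (hφ : ∀ w, ‖w‖ ≤ R → ‖φ w - a • w‖ ≤ η) (hη : 0 ≤ η) {m : ℕ} {u : E}
    (hR : ‖a‖ ^ m * (‖u‖ + m * η) ≤ R) : ‖φ^[m] u - a ^ m • u‖ ≤ ‖a‖ ^ m * (m * η) := by
  induction m with
  | zero => simp
  | succ m ih =>
    have hpow : ‖a‖ ^ m ≤ ‖a‖ ^ (m + 1) := pow_le_pow_right₀ ha m.le_succ
    have hR' : ‖a‖ ^ m * (‖u‖ + m * η) ≤ R := le_trans (by gcongr; simp) hR
    have hw : ‖φ^[m] u‖ ≤ R := by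
      have := norm_le_insert' (φ^[m] u) (a ^ m • u)
      rw [norm_smul, norm_pow] at this
      linarith [ih hR']
    have hsplit : φ^[m + 1] u - a ^ (m + 1) • u =
        (φ (φ^[m] u) - a • φ^[m] u) + a • (φ^[m] u - a ^ m • u) := by
      rw [Function.iterate_succ_apply', smul_sub, smul_smul, pow_succ']
      abel
    calc ‖φ^[m + 1] u - a ^ (m + 1) • u‖ ≤ η + ‖a‖ * (‖a‖ ^ m * (m * η)) := by
          rw [hsplit]
          refine norm_add_le_of_le (hφ _ hw) ?_
          rw [norm_smul]
          gcongr
          exact ih hR'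
      _ ≤ ‖a‖ ^ (m + 1) * η + ‖a‖ * (‖a‖ ^ m * (m * η)) := by
          gcongr
          exact le_mul_of_one_le_left hη (one_le_pow₀ ha)
      _ = ‖a‖ ^ (m + 1) * ((m + 1 : ℕ) * η) := by push_cast; ring

theorem dist_iterate_self_le {M : Type*} [PseudoMetricSpace M] {ψ : M → M} {b w : M} {R η : ℝ}
    (hψ : ∀ x, dist x b ≤ R → dist (ψ x) x ≤ η) (hη : 0 ≤ η) {m : ℕ}
    (hR : dist w b + m * η ≤ R) : dist (ψ^[m] w) w ≤ m * η := by
  induction m with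
  | zero => simp
  | succ m ih =>
    push_cast at hR ⊢
    have hm := ih (by linarith)
    have hstep := hψ (ψ^[m] w) (by linarith [dist_triangle (ψ^[m] w) w b])
    rw [Function.iterate_succ_apply']
    linarith [dist_triangle (ψ (ψ^[m] w)) (ψ^[m] w) w]

theorem norm_sub_sub_smul_deriv_le {E : Type*} [NormedAddCommGroup E] [NormedSpace ℂ E]
    [CompleteSpace E] {g : ℂ → E} (hg : Differentiable ℂ g) {M : ℝ}
    (hM : ∀ t ∈ closedBall (0 : ℂ) 1, ‖g t‖ ≤ M) {t : ℂ} (ht : ‖t‖ ≤ 1 / 4) :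
    ‖g t - g 0 - t • deriv g 0‖ ≤ 8 * M * ‖t‖ ^ 2 := by
  have hM₀ : 0 ≤ M := (norm_nonneg _).trans (hM 0 (mem_closedBall_self zero_le_one))
  have cauchy {G : ℂ → E} (hG : Differentiable ℂ G) {s : ℂ} {ρ c : ℝ} (hρ : 0 < ρ)
      (hc : ∀ x, ‖x‖ ≤ ‖s‖ + ρ → ‖G x‖ ≤ c) : ‖deriv G s‖ ≤ c / ρ :=
    Complex.norm_deriv_le_of_forall_mem_sphere_norm_le hρ hG.diffContOnCl fun x hx =>
      hc x (by linarith [norm_le_insert' x s, (mem_sphere_iff_norm.1 hx).le])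
  have hderiv : ∀ s, ‖s‖ ≤ 1 / 2 → ‖deriv g s‖ ≤ 2 * M := fun s hs => by
    have := cauchy hg (s := s) (ρ := 1 / 2) (c := M) (by norm_num) fun x hx =>
      hM x (mem_closedBall_zero_iff.2 (by linarith))
    linarith
  have hderiv₂ : ∀ s ∈ closedBall (0 : ℂ) (1 / 4), ‖deriv (deriv g) s‖ ≤ 8 * M := fun s hs => by
    have := cauchy hg.deriv (s := s) (ρ := 1 / 4) (c := 2 * M) (by norm_num) fun x hx =>
      hderiv x (by linarith [mem_closedBall_zero_iff.1 hs])
    linarith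
  have hlip : ∀ s ∈ closedBall (0 : ℂ) ‖t‖, ‖deriv g s - deriv g 0‖ ≤ 8 * M * ‖t‖ := fun s hs => by
    rw [mem_closedBall_zero_iff] at hs
    have := (convex_closedBall (0 : ℂ) (1 / 4)).norm_image_sub_le_of_norm_deriv_le
      (fun x _ => hg.deriv x) hderiv₂ (mem_closedBall_self (by norm_num))
      (mem_closedBall_zero_iff.2 (hs.trans ht))
    rw [sub_zero] at this
    exact this.trans (by gcongr)
  have hmean := (convex_closedBall (0 : ℂ) ‖t‖).norm_image_sub_le_of_norm_hasDerivWithin_le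
    (f := fun s => g s - s • deriv g 0) (f' := fun s => deriv g s - deriv g 0)
    (fun s _ => ((hg s).hasDerivAt.sub
      (by simpa using (hasDerivAt_id s).smul_const (deriv g 0))).hasDerivWithinAt)
    hlip (mem_closedBall_self (norm_nonneg t)) (mem_closedBall_zero_iff.2 le_rfl)
  simp only [zero_smul, sub_zero] at hmean
  rw [sub_right_comm]
  exact hmean.trans_eq (by ring)

variable {Z E : Type*} [NormedAddCommGroup Z] [NormedSpace ℂ Z]
  [NormedAddCommGroup E] [NormedSpace ℂ E] {V : Set Z}

/-- A holomorphic family `θ z` of injective self-maps of `E` fixing `0`, with a family `Φ z` of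
left inverses. -/
structure IsFibrewiseEmbedding (V : Set Z) (θ Φ : Z → E → E) : Prop where
  differentiableOn : DifferentiableOn ℂ (fun p : Z × E => θ p.1 p.2) (V ×ˢ univ)
  left_inv : ∀ z ∈ V, Function.LeftInverse (Φ z) (θ z)
  map_zero : ∀ z ∈ V, θ z 0 = 0

theorem IsFibrewiseEmbedding.mono {θ Φ : Z → E → E} (h : IsFibrewiseEmbedding V θ Φ) {V' : Set Z}
    (hV' : V' ⊆ V) : IsFibrewiseEmbedding V' θ Φ where
  differentiableOn := h.differentiableOn.mono (prod_mono_left hV')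
  left_inv z hz := h.left_inv z (hV' hz)
  map_zero z hz := h.map_zero z (hV' hz)

theorem IsFibrewiseEmbedding.differentiable {θ Φ : Z → E → E}
    (h : IsFibrewiseEmbedding V θ Φ) {z : Z} (hz : z ∈ V) : Differentiable ℂ (θ z) :=
  differentiableOn_univ.1 <| h.differentiableOn.comp (f := fun w : E => (z, w)) (by fun_prop)
    fun _ _ => ⟨hz, mem_univ _⟩

theorem IsFibrewiseEmbedding.iterate {θ Φ : Z → E → E} (h : IsFibrewiseEmbedding V θ Φ) (m : ℕ) :
    IsFibrewiseEmbedding V (fun z => (θ z)^[m]) fun z => (Φ z)^[m] where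
  differentiableOn := by
    induction m with
    | zero => exact differentiableOn_snd
    | succ m ih =>
      simp only [Function.iterate_succ_apply']
      exact h.differentiableOn.comp (differentiableOn_fst.prodMk ih) fun p hp => ⟨hp.1, mem_univ _⟩
  left_inv z hz := (h.left_inv z hz).iterate m
  map_zero z hz := Function.iterate_fixed (h.map_zero z hz) m

namespace IsTangentIsotopy

variable {X : Z → E → E} {Φ Ψ : ℂ → Z → E → E}

theorem isFibrewiseEmbedding (h : IsTangentIsotopy V X Φ Ψ) (t : ℂ) :
    IsFibrewiseEmbedding V (Φ t) (Ψ t) where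
  differentiableOn := h.differentiableOn.comp (f := fun p : Z × E => (t, p.1, p.2)) (by fun_prop)
    fun _ hp => ⟨mem_univ _, hp.1, mem_univ _⟩
  left_inv z hz := h.left_inv z hz t
  map_zero z hz := h.map_zero z hz t

theorem exists_norm_sub_sub_smul_le [ProperSpace E] (h : IsTangentIsotopy V X Φ Ψ) {C : Set Z}
    (hC : IsCompact C) (hCV : C ⊆ V) (R : ℝ) {ε : ℝ} (hε : 0 < ε) :
    ∃ T > 0, ∀ t : ℝ, 0 < t → t ≤ T → ∀ z ∈ C, ∀ w, ‖w‖ ≤ R →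
      ‖Φ t z w - w - (t : ℂ) • X z w‖ ≤ ε * t := by
  obtain ⟨M, hM⟩ := ((isCompact_closedBall (0 : ℂ) 1).prod
    (hC.prod (isCompact_closedBall (0 : E) R))).exists_bound_of_continuousOn
      (h.differentiableOn.continuousOn.mono
        (prod_mono (subset_univ _) (prod_mono hCV (subset_univ _))))
  refine ⟨min (1 / 4) (ε / (8 * |M| + 1)), by positivity, fun t ht htT z hz w hw => ?_⟩
  have hnorm : ‖(t : ℂ)‖ = t := by rw [Complex.norm_real, Real.norm_of_nonneg ht.le]
  have htaylor := norm_sub_sub_smul_deriv_le (M := M) (t := t)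
    (differentiable_time_of_differentiableOn h.differentiableOn (hCV hz) w)
    (fun s hs => hM (s, z, w) ⟨hs, hz, mem_closedBall_zero_iff.2 hw⟩)
    (by rw [hnorm]; exact htT.trans (min_le_left _ _))
  rw [h.zero_apply z (hCV hz), (h.hasDerivAt z (hCV hz) w).deriv, hnorm] at htaylor
  have hsmall : t * (8 * |M| + 1) ≤ ε := by
    rw [← le_div_iff₀ (by positivity)]
    exact htT.trans (min_le_right _ _)
  nlinarith [le_abs_self M]

end IsTangentIsotopy

-- The time-`t` map is iterated `m` times, where `(1 + t) ^ m = 2`.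
theorem HasTangentIsotopy.exists_isFibrewiseEmbedding [ProperSpace E] (hV : IsOpen V)
    {X : Z → E → E} (hX : HasTangentIsotopy V X) {C : Set Z} (hC : IsCompact C) (hCV : C ⊆ V)
    {B : Z → Set E} {R r ε δ D : ℝ} (hε : 0 < ε) (hR : 2 * r + 4 * ε ≤ R) (hεδ : 2 * ε ≤ δ)
    (hD : ∀ z ∈ C, ∀ b ∈ B z, ‖b‖ ≤ D) (hXzero : ∀ z ∈ C, ∀ w, ‖w‖ ≤ R → ‖X z w - w‖ ≤ ε)
    (hXB : ∀ z ∈ C, ∀ b ∈ B z, ∀ w, dist w b ≤ 2 * δ → ‖X z w‖ ≤ ε) :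
    ∃ θ Φ : Z → E → E, IsFibrewiseEmbedding V θ Φ ∧
      ∀ z ∈ C, (∀ u, ‖u‖ ≤ r → ‖θ z u - (2 : ℂ) • u‖ ≤ 4 * ε) ∧
        ∀ b ∈ B z, ∀ w, dist w b ≤ δ → dist (Φ z w) w ≤ 2 * ε := by
  obtain ⟨φ, ψ, h⟩ := hX
  obtain ⟨T, hT, hφ⟩ := h.exists_norm_sub_sub_smul_le hC hCV R hε
  obtain ⟨T', hT', hψ⟩ := (h.symm hV).exists_norm_sub_sub_smul_le hC hCV (D + 2 * δ) hε
  obtain ⟨m, t, ht, htT, hpow, hmt⟩ := exists_one_add_pow_eq_two (lt_min hT hT')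
  have hη : (m : ℝ) * (2 * ε * t) ≤ 2 * ε := by nlinarith
  have hnorm : ‖(t : ℂ)‖ = t := by rw [Complex.norm_real, Real.norm_of_nonneg ht.le]
  have hnorm' : ‖(1 + t : ℂ)‖ = 1 + t := by
    exact_mod_cast Real.norm_of_nonneg (by linarith : 0 ≤ 1 + t)
  refine ⟨_, _, (h.isFibrewiseEmbedding t).iterate m, fun z hz => ⟨fun u hu => ?_, ?_⟩⟩
  · have hstep : ∀ w, ‖w‖ ≤ R → ‖φ t z w - (1 + t : ℂ) • w‖ ≤ 2 * ε * t := fun w hw => by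
      have := norm_add_le (φ t z w - w - (t : ℂ) • X z w) ((t : ℂ) • (X z w - w))
      rw [norm_smul, hnorm] at this
      rw [show φ t z w - (1 + t : ℂ) • w =
        φ t z w - w - (t : ℂ) • X z w + (t : ℂ) • (X z w - w) by module]
      nlinarith [hφ t ht (htT.trans (min_le_left _ _)) z hz w hw, hXzero z hz w hw]
    have := norm_iterate_sub_pow_smul_le (by linarith) hstep (by positivity) (m := m) (u := u)
      (by rw [hnorm', hpow]; linarith)
    rw [hnorm', hpow, show (1 + t : ℂ) ^ m = 2 by exact_mod_cast congrArg Complex.ofReal hpow]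
      at this
    linarith
  · intro b hb w hw
    have hstep : ∀ x, dist x b ≤ 2 * δ → dist (ψ t z x) x ≤ 2 * ε * t := fun x hx => by
      have hxD : ‖x‖ ≤ D + 2 * δ := by
        linarith [norm_le_insert' x b, hD z hz b hb, dist_eq_norm x b]
      have htaylor := hψ t ht (htT.trans (min_le_right _ _)) z hz x hxD
      have := norm_sub_norm_le (ψ t z x - x) ((t : ℂ) • (-X) z x)
      simp only [Pi.neg_apply, smul_neg, sub_neg_eq_add, norm_neg, norm_smul, hnorm]
        at this htaylor
      rw [dist_eq_norm]
      nlinarith [hXB z hz b hb x hx]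
    exact (dist_iterate_self_le hstep (by positivity) (by linarith)).trans hη

end FibrewiseEmbeddings

section FatouBieberbach

/-- The cubic polynomial with superattracting fixed points at `0` and `1`. -/
def smoothStep {A : Type*} [CommRing A] (x : A) : A := x ^ 2 * (3 - 2 * x)

theorem norm_smoothStep_iterate_le {A : Type*} [SeminormedCommRing A] [NormOneClass A] {x : A}
    (hx : ‖x‖ ≤ 1 / 8) (M : ℕ) : ‖smoothStep^[M] x‖ ≤ (1 / 2) ^ M * (1 / 8) := by
  induction M with
  | zero => simpa using hx
  | succ M ih =>
    rw [Function.iterate_succ_apply']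
    set y := smoothStep^[M] x
    have hy : ‖y‖ ≤ 1 / 8 :=
      ih.trans (mul_le_of_le_one_left (by norm_num) (pow_le_one₀ (by norm_num) (by norm_num)))
    have htwo : ‖(2 : A)‖ ≤ 2 := by simpa using Nat.norm_cast_le (α := A) 2
    have hthree : ‖(3 : A)‖ ≤ 3 := by simpa using Nat.norm_cast_le (α := A) 3
    calc ‖smoothStep y‖ ≤ ‖y‖ ^ 2 * (‖(3 : A)‖ + ‖(2 : A)‖ * ‖y‖) :=
          norm_mul_le_of_le (norm_pow_le y 2) (norm_sub_le_of_le le_rfl (norm_mul_le 2 y))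
      _ ≤ ‖y‖ * (1 / 8) * (3 + 2 * (1 / 8)) := by
          rw [sq]
          gcongr
      _ ≤ (1 / 2) ^ (M + 1) * (1 / 8) := by
          rw [pow_succ]
          linarith [norm_nonneg y]

theorem one_sub_smoothStep_iterate {A : Type*} [CommRing A] (x : A) (M : ℕ) :
    1 - smoothStep^[M] x = smoothStep^[M] (1 - x) :=
  Function.Semiconj.iterate_right (f := fun y : A => 1 - y)
    (fun y => by simp only [smoothStep]; ring) M x

theorem map_smoothStep_iterate {A B : Type*} [CommRing A] [CommRing B] (φ : A →+* B) (x : A)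
    (M : ℕ) : φ (smoothStep^[M] x) = smoothStep^[M] (φ x) :=
  Function.Semiconj.iterate_right (fun y => by simp [smoothStep, map_ofNat]) M x

theorem smoothStep_iterate_mem {A : Type*} [CommRing A] {S : Subring A} {x : A} (hx : x ∈ S)
    (M : ℕ) : smoothStep^[M] x ∈ S :=
  Function.Iterate.rec (· ∈ S) hx (fun _ hy => S.mul_mem (S.pow_mem hy 2)
    (S.sub_mem (ofNat_mem S 3) (S.mul_mem (ofNat_mem S 2) hy))) M

theorem approximatesLinearOn_of_norm_sub_le {E F : Type*} [NormedAddCommGroup E] [NormedSpace ℂ E]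
    [NormedAddCommGroup F] [NormedSpace ℂ F] {g : E → F} {A : E →L[ℂ] F} {x : E} {r ε : ℝ}
    {c : NNReal} (hr : 0 < r) (hg : DifferentiableOn ℂ g (ball x (2 * r)))
    (hgA : ∀ u ∈ ball x (2 * r), ‖g u - A u‖ ≤ ε) (hc : 2 * ε / r ≤ c) :
    ApproximatesLinearOn g A (ball x r) c := fun u hu v hv => by
  have hball : ∀ y ∈ ball x r, ball y r ⊆ ball x (2 * r) := fun y hy =>
    ball_subset_ball' (by linarith [mem_ball.1 hy])
  have hd : DifferentiableOn ℂ (fun u => g u - A u) (ball x (2 * r)) :=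
    hg.sub A.differentiable.differentiableOn
  have hmean := (convex_ball x r).norm_image_sub_le_of_norm_fderiv_le (𝕜 := ℂ)
    (fun y hy => hd.differentiableAt (isOpen_ball.mem_nhds (hball y hy (mem_ball_self hr))))
    (fun y hy => (norm_fderiv_le_of_forall_mem_ball hr (hd.mono (hball y hy))
      fun w hw => hgA w (hball y hy hw)).trans hc) hv hu
  rwa [map_sub, sub_sub_sub_comm]

variable {Z E : Type*} [NormedAddCommGroup Z] [NormedSpace ℂ Z]
  [NormedAddCommGroup E] [NormedSpace ℂ E]

-- The field used is `smoothStep^[M] (h z w) • w`, which is close to `w` where `h` is close to `1`,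
-- and to `0` where `h` is close to `0`.
theorem exists_isFibrewiseEmbedding_of_mem_fibrePolynomials (hE : 1 < Module.finrank ℂ E)
    {V : Set Z} (hV : IsOpen V) {h : Z → E → ℂ} (hh : h ∈ fibrePolynomials E V) {C : Set Z}
    (hC : IsCompact C) (hCV : C ⊆ V) {B : Z → Set E} {R r ε δ D : ℝ} (hε : 0 < ε)
    (hR : 2 * r + 4 * ε ≤ R) (hεδ : 2 * ε ≤ δ) (hD : ∀ z ∈ C, ∀ b ∈ B z, ‖b‖ ≤ D)
    (hone : ∀ z ∈ C, ∀ w, ‖w‖ ≤ R → ‖1 - h z w‖ ≤ 1 / 8)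
    (hzero : ∀ z ∈ C, ∀ b ∈ B z, ∀ w, dist w b ≤ 2 * δ → ‖h z w‖ ≤ 1 / 8) :
    ∃ θ Φ : Z → E → E, IsFibrewiseEmbedding V θ Φ ∧
      ∀ z ∈ C, (∀ u, ‖u‖ ≤ r → ‖θ z u - (2 : ℂ) • u‖ ≤ 4 * ε) ∧
        ∀ b ∈ B z, ∀ w, dist w b ≤ δ → dist (Φ z w) w ≤ 2 * ε := by
  have : FiniteDimensional ℂ E := Module.finite_of_finrank_pos (by omega)
  have : ProperSpace E := FiniteDimensional.proper ℂ E
  obtain ⟨S, hS, hRS, hDS⟩ : ∃ S, 0 < S ∧ R ≤ S ∧ D + 2 * δ ≤ S :=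
    ⟨max 1 (max R (D + 2 * δ)), by simp, by simp, by simp⟩
  obtain ⟨M, hM⟩ := exists_pow_lt_of_lt_one (div_pos hε hS) (by norm_num : (1 / 2 : ℝ) < 1)
  rw [lt_div_iff₀ hS] at hM
  have hsmall : ∀ (y : ℂ) (w : E), ‖y‖ ≤ 1 / 8 → ‖w‖ ≤ S → ‖smoothStep^[M] y • w‖ ≤ ε := by
    intro y w hy hw
    calc ‖smoothStep^[M] y • w‖ ≤ (1 / 2) ^ M * (1 / 8) * S := by
          rw [norm_smul]
          gcongr
          exact norm_smoothStep_iterate_le hy M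
      _ ≤ ε := by linarith [mul_pos (pow_pos (one_half_pos (α := ℝ)) M) hS]
  have happly : ∀ z w, (smoothStep^[M] h) z w = smoothStep^[M] (h z w) := fun z w =>
    map_smoothStep_iterate ((Pi.evalRingHom (fun _ : E => ℂ) w).comp
      (Pi.evalRingHom (fun _ : Z => E → ℂ) z)) h M
  have hisotopy := hasTangentIsotopy_of_mem_isotopyFields (hV := hV) <| smul_id_mem_isotopyFields hE
    (smoothStep_iterate_mem (S := (fibrePolynomials E V).toSubring) hh M)
  refine hisotopy.exists_isFibrewiseEmbedding hV hC hCV hε hR hεδ hD (fun z hz w hw => ?_)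
    fun z hz b hb w hw => ?_
  · have hsplit : w - smoothStep^[M] (h z w) • w = smoothStep^[M] (1 - h z w) • w := by
      rw [← one_sub_smoothStep_iterate, sub_smul, one_smul]
    rw [happly, norm_sub_rev, hsplit]
    exact hsmall _ _ (hone z hz w hw) (hw.trans hRS)
  · rw [happly]
    exact hsmall _ _ (hzero z hz b hb w hw)
      (by linarith [norm_le_insert' w b, dist_eq_norm w b, hD z hz b hb])

theorem exists_isNearlyDoubling_of_mem_fibrePolynomials (hE : 1 < Module.finrank ℂ E)
    {V : Set Z} (hV : IsOpen V) {h : Z → E → ℂ} (hh : h ∈ fibrePolynomials E V) {C : Set Z}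
    (hC : IsCompact C) (hCV : C ⊆ V) {B : Z → Set E} {r δ D : ℝ} (hr : 0 < r) (hδ : 0 < δ)
    (hD : ∀ z ∈ C, ∀ b ∈ B z, ‖b‖ ≤ D)
    (hone : ∀ z ∈ C, ∀ w, ‖w‖ ≤ 6 * r → ‖1 - h z w‖ ≤ 1 / 8)
    (hzero : ∀ z ∈ C, ∀ b ∈ B z, ∀ w, dist w b ≤ 2 * δ → ‖h z w‖ ≤ 1 / 8) :
    ∃ θ Φ : ℕ → Z → E → E, (∀ k, IsFibrewiseEmbedding V (θ k) (Φ k)) ∧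
      ∀ z ∈ C, IsNearlyDoubling (fun k => θ k z) r ∧
        ∀ k, ∀ b ∈ B z, ∀ w, dist w b ≤ δ → dist (Φ k z w) w ≤ δ * (1 / 2) ^ (k + 1) := by
  obtain ⟨c, hc, hcr, hcδ⟩ : ∃ c > 0, 8 * c ≤ r ∧ 4 * c ≤ δ :=
    ⟨min (r / 8) (δ / 4), by positivity, by linarith [min_le_left (r / 8) (δ / 4)],
      by linarith [min_le_right (r / 8) (δ / 4)]⟩
  have hpow : ∀ k : ℕ, c * (1 / 2) ^ (k + 2) ≤ c := fun k =>
    mul_le_of_le_one_right hc.le (pow_le_one₀ (by norm_num) (by norm_num))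
  choose θ Φ h hest using fun k : ℕ => exists_isFibrewiseEmbedding_of_mem_fibrePolynomials hE hV hh
    hC hCV (R := 6 * r) (r := 2 * r) (δ := δ) (ε := c * (1 / 2) ^ (k + 2)) (by positivity)
    (by linarith [hpow k]) (by linarith [hpow k]) hD hone hzero
  refine ⟨θ, Φ, h, fun z hz => ⟨⟨fun k => (h k).map_zero z (hCV hz), fun k => ?_⟩,
    fun k b hb w hw => ((hest k z hz).2 b hb w hw).trans ?_⟩⟩
  · refine approximatesLinearOn_of_norm_sub_le hr ((h k).differentiable (hCV hz)).differentiableOn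
      (ε := 4 * (c * (1 / 2) ^ (k + 2)))
      (fun u hu => by simpa [two_smul] using (hest k z hz).1 u (mem_ball_zero_iff.1 hu).le) ?_
    rw [div_le_iff₀ hr]
    push_cast
    nlinarith [pow_pos (one_half_pos (α := ℝ)) (k + 2)]
  · rw [pow_succ _ (k + 1)]
    nlinarith [pow_pos (one_half_pos (α := ℝ)) (k + 1)]

theorem exists_injective_notMem_of_mem_fibrePolynomials (hE : 1 < Module.finrank ℂ E)
    {V : Set Z} (hV : IsOpen V) {h : Z → E → ℂ} (hh : h ∈ fibrePolynomials E V) {C : Set Z}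
    (hC : IsCompact C) (hCV : C ⊆ V) {B : Z → Set E} {R δ D : ℝ} (hR : 0 < R) (hδ : 0 < δ)
    (hD : ∀ z ∈ C, ∀ b ∈ B z, ‖b‖ ≤ D)
    (hone : ∀ z ∈ C, ∀ w, ‖w‖ ≤ R → ‖1 - h z w‖ ≤ 1 / 8)
    (hzero : ∀ z ∈ C, ∀ b ∈ B z, ∀ w, dist w b ≤ δ → ‖h z w‖ ≤ 1 / 8) :
    ∃ F : Z × E → E, DifferentiableOn ℂ F (interior C ×ˢ univ) ∧ ∀ z ∈ interior C, F (z, 0) = 0 ∧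
      Function.Injective (fun ζ => F (z, ζ)) ∧ ∀ ζ, F (z, ζ) ∉ B z := by
  have : FiniteDimensional ℂ E := Module.finite_of_finrank_pos (by omega)
  have : CompleteSpace E := FiniteDimensional.complete ℂ E
  obtain ⟨r, rfl⟩ : ∃ r, R = 6 * r := ⟨R / 6, by ring⟩
  obtain ⟨d, rfl⟩ : ∃ d, δ = 2 * d := ⟨δ / 2, by ring⟩
  replace hR : 0 < r := by linarith
  replace hδ : 0 < d := by linarith
  obtain ⟨θ, Φ, hθ, hdoubling⟩ :=
    exists_isNearlyDoubling_of_mem_fibrePolynomials hE hV hh hC hCV hR hδ hD hone hzero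
  have hCV' : interior C ⊆ V := interior_subset.trans hCV
  refine ⟨fun p => renormLimit (fun k => θ k p.1) 0 p.2,
    differentiableOn_renormLimit isOpen_interior hR (fun k => ((hθ k).mono hCV').differentiableOn)
      (fun z hz => (hdoubling z (interior_subset hz)).1) 0, fun z hz => ?_⟩
  obtain ⟨hz', hzV⟩ := And.intro (interior_subset hz) (hCV' hz)
  obtain ⟨hdouble, hΦ⟩ := hdoubling z hz'
  have hcont : ∀ k, Continuous (θ k z) := fun k => ((hθ k).differentiable hzV).continuous
  have hinv : ∀ k, Function.LeftInverse (Φ k z) (θ k z) := fun k => (hθ k).left_inv z hzV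
  have hsep : ∀ b ∈ B z, ∀ w, dist w b ≤ d → r ≤ ‖w‖ := fun b hb w hw => by
    by_contra! hlt
    have := norm_le_insert' (1 : ℂ) (h z w)
    rw [norm_one] at this
    linarith [hone z hz' w (by linarith), hzero z hz' b hb w (by linarith)]
  exact ⟨hdouble.renormLimit_zero_right 0,
    hdouble.injective_renormLimit hR hcont fun k => (hinv k).injective,
    hdouble.renormLimit_notMem hR hcont hinv hδ.le hΦ hsep⟩

theorem exists_isCompact_norm_lt_of_continuousOn {X Y G : Type*} [TopologicalSpace X]
    [LocallyCompactSpace X] [PseudoMetricSpace Y] [SeminormedAddCommGroup G] {g : X → Y → G}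
    {U : Set X} (hU : IsOpen U) (hg : ContinuousOn (fun p : X × Y => g p.1 p.2) (U ×ˢ univ))
    {L : Set X} (hL : IsCompact L) (hLU : L ⊆ U) {K : Set Y} (hK : IsCompact K) {c : ℝ}
    (hgc : ∀ z ∈ L, ∀ w ∈ K, ‖g z w‖ < c) :
    ∃ C, IsCompact C ∧ L ⊆ interior C ∧ C ⊆ U ∧
      ∃ δ > 0, ∀ z ∈ C, ∀ b ∈ K, ∀ w, dist w b ≤ δ → ‖g z w‖ < c := by
  obtain ⟨u, v, hu, hv, hLu, hKv, huv⟩ := generalized_tube_lemma hL hK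
    (hg.norm.isOpen_inter_preimage (hU.prod isOpen_univ) isOpen_Iio)
    fun p hp => ⟨⟨hLU hp.1, mem_univ _⟩, hgc _ hp.1 _ hp.2⟩
  obtain ⟨δ, hδ, hδv⟩ := hK.exists_cthickening_subset_open hv hKv
  obtain ⟨C, hC, hLC, hCu⟩ := exists_compact_between hL (hu.inter hU) (subset_inter hLu hLU)
  exact ⟨C, hC, hLC, fun z hz => (hCu hz).2, δ, hδ, fun z hz b hb w hw =>
    (huv (mk_mem_prod (hCu hz).1 (hδv (mem_cthickening_of_dist_le w b δ K hb hw)))).2⟩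

theorem exists_injective_notMem_of_eq_one_of_norm_lt [LocallyCompactSpace Z]
    (hE : 1 < Module.finrank ℂ E) {K : Set E} (hK : IsCompact K) {L : Set Z} (hL : IsCompact L)
    {U : Set Z} (hU : IsOpen U) (hLU : L ⊆ U) {f : Z → E} (hf : DifferentiableOn ℂ f U)
    {h : Z → E → ℂ} (hh : h ∈ fibrePolynomials E U) (hone : ∀ z ∈ L, h z (f z) = 1)
    (hzero : ∀ z ∈ L, ∀ w ∈ K, ‖h z w‖ < 1 / 8) :
    ∃ V, IsOpen V ∧ L ⊆ V ∧ V ⊆ U ∧ ∃ F : Z × E → E, DifferentiableOn ℂ F (V ×ˢ univ) ∧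
      ∀ z ∈ V, F (z, 0) = f z ∧ Function.Injective (fun ζ => F (z, ζ)) ∧ ∀ ζ, F (z, ζ) ∉ K := by
  have hg := comp_add_mem_fibrePolynomials hh hf
  obtain ⟨C₁, hC₁, hLC₁, hCU₁, R, hR, hone'⟩ := exists_isCompact_norm_lt_of_continuousOn hU
    (g := fun z w => 1 - h z (w + f z)) (c := 1 / 8)
    (continuousOn_const.sub (differentiableOn_of_mem_fibrePolynomials hg).continuousOn) hL hLU
    (isCompact_singleton (x := 0)) (by rintro z hz w rfl; simp [hone z hz])
  obtain ⟨C₂, hC₂, hLC₂, -, δ, hδ, hzero'⟩ := exists_isCompact_norm_lt_of_continuousOn hU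
    (differentiableOn_of_mem_fibrePolynomials hh).continuousOn hL hLU hK hzero
  have hC := hC₁.inter hC₂
  have hCU : C₁ ∩ C₂ ⊆ U := inter_subset_left.trans hCU₁
  obtain ⟨D, hD⟩ := hK.exists_bound_of_continuousOn continuousOn_id
  obtain ⟨D', hD'⟩ := hC.exists_bound_of_continuousOn (hf.continuousOn.mono hCU)
  obtain ⟨F, hF, hFz⟩ := exists_injective_notMem_of_mem_fibrePolynomials hE hU hg hC hCU
    (B := fun z => {b | b + f z ∈ K}) (D := D + D') hR hδ
    (fun z hz b hb => by simpa using norm_sub_le_of_le (hD _ hb) (hD' z hz))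
    (fun z hz w hw => (hone' z hz.1 0 rfl w (by simpa)).le)
    fun z hz b hb w hw => (hzero' z hz.2 _ hb (w + f z) (by simpa)).le
  have hVU : interior (C₁ ∩ C₂) ⊆ U := interior_subset.trans hCU
  refine ⟨interior (C₁ ∩ C₂), isOpen_interior, by simp [hLC₁, hLC₂], hVU,
    fun p => F p + f p.1, hF.add (hf.comp differentiableOn_fst fun p hp => hVU hp.1),
    fun z hz => ?_⟩
  obtain ⟨hF₀, hinj, hB⟩ := hFz z hz
  exact ⟨by simp [hF₀], fun a b hab => hinj (add_right_cancel hab), hB⟩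

end FatouBieberbach

section Euclidean

theorem polynomialHull_image_ofLp {n : ℕ} (K : Set (EuclideanSpace ℂ (Fin n))) :
    polynomialHull (WithLp.ofLp '' K) = WithLp.ofLp '' polyHull K := by
  ext z
  simp only [polynomialHull, polyHull, image_image, mem_ofPred_eq]
  exact ⟨fun h => ⟨WithLp.toLp 2 z, h, rfl⟩, by rintro ⟨z, h, rfl⟩; exact h⟩

theorem eval_mem_fibrePolynomials {ι κ : Type*} [Fintype ι] [Fintype κ]
    (U : Set (EuclideanSpace ℂ ι)) (p : MvPolynomial (ι ⊕ κ) ℂ) :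
    (fun z w => eval (Sum.elim z.ofLp w.ofLp) p) ∈
      fibrePolynomials (EuclideanSpace ℂ κ) U := by
  induction p using MvPolynomial.induction_on with
  | C a => simpa using coeff_mem_fibrePolynomials (differentiableOn_const a)
  | add p q hp hq => simpa using! add_mem hp hq
  | mul_X p i hp =>
    simp only [map_mul, eval_X]
    refine mul_mem hp ?_
    rcases i with i | j
    · exact coeff_mem_fibrePolynomials
        (EuclideanSpace.proj (𝕜 := ℂ) i).differentiable.differentiableOn
    · exact linear_mem_fibrePolynomials (EuclideanSpace.proj j)

theorem holomorphicNear_comp_toLp {ι : Type*} [Fintype ι] {L U : Set (EuclideanSpace ℂ ι)}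
    (hU : IsOpen U) (hLU : L ⊆ U) {g : EuclideanSpace ℂ ι → ℂ} (hg : DifferentiableOn ℂ g U) :
    HolomorphicNear (fun z => g (WithLp.toLp 2 z)) (WithLp.ofLp '' L) := by
  rintro _ ⟨z, hz, rfl⟩
  filter_upwards [(hU.preimage (PiLp.continuous_toLp 2 _)).mem_nhds (hLU hz)] with y hy
  exact (hg.differentiableAt (hU.mem_nhds hy)).comp y
    (EuclideanSpace.equiv ι ℂ).symm.differentiableAt

theorem exists_fibrePolynomial_eq_one_norm_lt {n N : ℕ} {K : Set (EuclideanSpace ℂ (Fin n))}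
    (hK : IsCompact K) (hKpc : IsPolyConvex K) {L : Set (EuclideanSpace ℂ (Fin N))}
    (hL : IsCompact L) (hLpc : IsPolyConvex L) {U : Set (EuclideanSpace ℂ (Fin N))}
    (hU : IsOpen U) (hLU : L ⊆ U) {f : EuclideanSpace ℂ (Fin N) → EuclideanSpace ℂ (Fin n)}
    (hf : DifferentiableOn ℂ f U) (hfK : ∀ z ∈ L, f z ∉ K) {ρ : ℝ} (hρ : 0 < ρ) :
    ∃ h ∈ fibrePolynomials (EuclideanSpace ℂ (Fin n)) U,
      (∀ z, h z (f z) = 1) ∧ ∀ z ∈ L, ∀ w ∈ K, ‖h z w‖ < ρ := by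
  have hfj : ∀ j, DifferentiableOn ℂ (fun z => f z j) U := fun j =>
    (EuclideanSpace.proj (𝕜 := ℂ) j).differentiable.comp_differentiableOn hf
  obtain ⟨G, hG⟩ := exists_polynomial_sum_mul_sub_near_one
    (hL.image (PiLp.continuous_ofLp 2 _)) (by rw [polynomialHull_image_ofLp, hLpc])
    (hK.image (PiLp.continuous_ofLp 2 _)) (by rw [polynomialHull_image_ofLp, hKpc])
    (fun j => holomorphicNear_comp_toLp hU hLU (hfj j))
    (by
      rintro _ ⟨z, hz, rfl⟩ ⟨w, hw, hwz⟩
      exact hfK z hz (WithLp.ofLp_injective 2 hwz ▸ hw)) hρ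
  refine ⟨fun z w => 1 - ∑ j, eval (Sum.elim z.ofLp w.ofLp) (G j) * (w j - f z j), ?_,
    fun z => by simp, fun z hz w hw => hG _ (mem_image_of_mem _ hz) _ (mem_image_of_mem _ hw)⟩
  convert! sub_mem (one_mem _) (sum_mem fun j (_ : j ∈ Finset.univ) =>
    mul_mem (eval_mem_fibrePolynomials U (G j)) (sub_mem
      (linear_mem_fibrePolynomials (EuclideanSpace.proj j))
      (coeff_mem_fibrePolynomials (hfj j)))) using 1
  ext z w
  simp

end Euclidean

/-- Main theorem: let `n > 1`, `K ⊆ ℂⁿ` compact polynomially convex, `L ⊆ ℂᴺ` compact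
polynomially convex, and `f` holomorphic on a neighbourhood `U` of `L` with `f(L) ∩ K = ∅`.
Then there exist an open neighbourhood `V ⊆ U` of `L` and a holomorphic map
`F : V × ℂⁿ → ℂⁿ` such that for every `z ∈ V`: `F(z, 0) = f(z)`, the map `ζ ↦ F(z, ζ)` is
injective, and `F({z} × ℂⁿ) ∩ K = ∅`. -/
theorem stmt_9 (n N : ℕ) (hn : 1 < n) (K : Set (EuclideanSpace ℂ (Fin n)))
    (hKc : IsCompact K) (hKpc : IsPolyConvex K)
    (L : Set (EuclideanSpace ℂ (Fin N))) (hLc : IsCompact L) (hLpc : IsPolyConvex L)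
    (U : Set (EuclideanSpace ℂ (Fin N))) (hU : IsOpen U) (hLU : L ⊆ U)
    (f : EuclideanSpace ℂ (Fin N) → EuclideanSpace ℂ (Fin n))
    (hf : DifferentiableOn ℂ f U) (hfK : ∀ z ∈ L, f z ∉ K) :
    ∃ V : Set (EuclideanSpace ℂ (Fin N)), IsOpen V ∧ L ⊆ V ∧ V ⊆ U ∧
      ∃ F : EuclideanSpace ℂ (Fin N) × EuclideanSpace ℂ (Fin n) → EuclideanSpace ℂ (Fin n),
        DifferentiableOn ℂ F (V ×ˢ univ) ∧
        ∀ z ∈ V, F (z, 0) = f z ∧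
          Function.Injective (fun ζ => F (z, ζ)) ∧
          ∀ ζ : EuclideanSpace ℂ (Fin n), F (z, ζ) ∉ K := by
  obtain ⟨h, hh, hgraph, hsmall⟩ := exists_fibrePolynomial_eq_one_norm_lt hKc hKpc hLc hLpc hU hLU
    hf hfK (ρ := 1 / 8) (by norm_num)
  exact exists_injective_notMem_of_eq_one_of_norm_lt (by simpa using hn) hKc hLc hU hLU hf hh
    (fun z _ => hgraph z) hsmall
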